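/- Fix 0 < ε < 1/12, ω > 0, and C > 0, and suppose (χ_B)_{B>0} is a family of smooth functions χ_B : Ω → [0,1] such that χ_B = 1 on {x ∈ Ω : dist(x,∂Ω) ≤ B^{−1/2+ε} and dist_{∂Ω}(x,Γ) ≤ B^{−1/4+ε}}, χ_B = 0 on {x ∈ Ω : dist(x,∂Ω) ≥ 2B^{−1/2+ε} or dist_{∂Ω}(x,Γ) ≥ 2B^{−1/4+ε}}, and |∇χ_B| ≤ C·B^{1/2−ε} on Ω. Then for every N > 0 there exist positive constants C_N and B_N such that for all B ≥ B_N and every Neumann eigenfunction Ψ of H(B) with eigenvalue λ ≤ Θ₀·B + ω·B^{2/3}: |∫_Ω |(−i∇+A)Ψ|² dx − ∫_Ω |(−i∇+A)(χ_B·Ψ)|² dx| ≤ C_N·B^{−N}·∫_Ω |Ψ|² dx. -/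

import Mathlib

noncomputable section
open MeasureTheory Real Filter Set Topology

/-- Euclidean 3-space. -/
abbrev E3 := EuclideanSpace ℝ (Fin 3)

/-- The magnetic vector potential `A(x) = (B/2)(-x₂, x₁, 0)`. -/
def Avec (B : ℝ) (x : E3) : Fin 3 → ℝ := ![-(B / 2) * x 1, B / 2 * x 0, 0]

/-- The `j`-th component of `(-i∇ + A)Ψ`. -/
def magD (B : ℝ) (Ψ : E3 → ℂ) (j : Fin 3) (x : E3) : ℂ :=
  -Complex.I * fderiv ℝ Ψ x (EuclideanSpace.single j 1) + (Avec B x j : ℂ) * Ψ x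

/-- The magnetic energy density `|(-i∇ + A)Ψ|²`. -/
def magEnergyDensity (B : ℝ) (Ψ : E3 → ℂ) (x : E3) : ℝ :=
  ∑ j : Fin 3, ‖magD B Ψ j x‖ ^ 2

/-- The open unit ball in `ℝ³`. -/
def ball3 : Set E3 := Metric.ball 0 1

/-- The Neumann ground-state energy `λ₁(H(B))` of `(-i∇ + A)²` in the unit ball,
as the infimum of the Rayleigh quotients. -/
def lambda1H (B : ℝ) : ℝ :=
  sInf { q : ℝ | ∃ Ψ : E3 → ℂ, ContDiff ℝ 1 Ψ ∧
    0 < (∫ x in ball3, ‖Ψ x‖ ^ 2) ∧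
    q = (∫ x in ball3, magEnergyDensity B Ψ x) / ∫ x in ball3, ‖Ψ x‖ ^ 2 }

/-- The de Gennes energy `λ₁^𝒢(ξ)`. -/
def deGennes (ξ : ℝ) : ℝ :=
  sInf { q : ℝ | ∃ u : ℝ → ℂ, ContDiff ℝ 1 u ∧
    IntegrableOn (fun t => ‖u t‖ ^ 2) (Ioi 0) ∧
    IntegrableOn (fun t => ‖deriv u t‖ ^ 2 + (t + ξ) ^ 2 * ‖u t‖ ^ 2) (Ioi 0) ∧
    0 < (∫ t in Ioi (0:ℝ), ‖u t‖ ^ 2) ∧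
    q = (∫ t in Ioi (0:ℝ), (‖deriv u t‖ ^ 2 + (t + ξ) ^ 2 * ‖u t‖ ^ 2)) /
        ∫ t in Ioi (0:ℝ), ‖u t‖ ^ 2 }

/-- `Θ₀`, the infimum of the de Gennes energy. -/
def Theta0 : ℝ := ⨅ ξ : ℝ, deGennes ξ

/-- The Montgomery energy `λ₁^ℳ(ζ)`. -/
def montgomery (ζ : ℝ) : ℝ :=
  sInf { q : ℝ | ∃ u : ℝ → ℂ, ContDiff ℝ 1 u ∧
    Integrable (fun ρ => ‖u ρ‖ ^ 2) ∧
    Integrable (fun ρ => ‖deriv u ρ‖ ^ 2 + (ζ + ρ ^ 2) ^ 2 * ‖u ρ‖ ^ 2) ∧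
    0 < (∫ ρ : ℝ, ‖u ρ‖ ^ 2) ∧
    q = (∫ ρ : ℝ, (‖deriv u ρ‖ ^ 2 + (ζ + ρ ^ 2) ^ 2 * ‖u ρ‖ ^ 2)) / ∫ ρ : ℝ, ‖u ρ‖ ^ 2 }

/-- `ν̂₀`, the infimum of the Montgomery energy. -/
def nu0 : ℝ := ⨅ ζ : ℝ, montgomery ζ

/-- The magnetic operator `H(B)Ψ = (-i∇ + A)²Ψ`. -/
def magLap (B : ℝ) (Ψ : E3 → ℂ) (x : E3) : ℂ :=
  ∑ j : Fin 3, (-Complex.I * fderiv ℝ (magD B Ψ j) x (EuclideanSpace.single j 1)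
    + (Avec B x j : ℂ) * magD B Ψ j x)

/-- A Neumann eigenfunction of `H(B)` with eigenvalue `lam`: a nonzero (in `L²(Ω)`)
twice continuously differentiable function satisfying the eigenvalue equation in the ball
and the magnetic Neumann condition `N(x)·(-i∇+A)Ψ = 0` on the boundary sphere,
`N(x) = -x` being the interior normal. -/
def IsNeumannEigenfunction (B lam : ℝ) (Ψ : E3 → ℂ) : Prop :=
  ContDiff ℝ 2 Ψ ∧
  0 < (∫ x in ball3, ‖Ψ x‖ ^ 2) ∧
  (∀ x ∈ ball3, magLap B Ψ x = (lam : ℂ) * Ψ x) ∧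
  (∀ x ∈ Metric.sphere (0 : E3) 1, ∑ j : Fin 3, ((-x j : ℝ) : ℂ) * magD B Ψ j x = 0)

/-- Distance to the boundary of the unit ball. -/
def distBd (x : E3) : ℝ := 1 - ‖x‖

/-- Distance along the boundary (on the unit sphere, after radial projection)
to the equator `Γ`. -/
def distEq (x : E3) : ℝ := Real.arcsin (|x 2| / ‖x‖)

abbrev ee (j : Fin 3) : E3 := EuclideanSpace.single j (1:ℝ)

/-- Boundary defining function `(1-|x|²)/2`. -/
def TT (x : E3) : ℝ := (1 - (x 0 ^ 2 + x 1 ^ 2 + x 2 ^ 2)) / 2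

lemma norm_sq3 (x : E3) : ‖x‖ ^ 2 = x 0 ^ 2 + x 1 ^ 2 + x 2 ^ 2 := by
  rw [EuclideanSpace.norm_sq_eq]; simp [Fin.sum_univ_three]

lemma TT_eq (x : E3) : TT x = (1 - ‖x‖ ^ 2) / 2 := by rw [norm_sq3]; rfl

lemma mem_ball3 (x : E3) : x ∈ ball3 ↔ ‖x‖ < 1 := by simp [ball3]

lemma TT_pos {x : E3} (hx : x ∈ ball3) : 0 < TT x := by
  rw [mem_ball3] at hx
  rw [TT_eq]; nlinarith [norm_nonneg x]

lemma TT_le (x : E3) : TT x ≤ 1 / 2 := by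
  rw [TT_eq]; nlinarith [norm_nonneg x]

lemma hasFDerivAt_coord (i : Fin 3) (x : E3) :
    HasFDerivAt (fun y : E3 => y i) (EuclideanSpace.proj i : E3 →L[ℝ] ℝ) x :=
  (EuclideanSpace.proj i : E3 →L[ℝ] ℝ).hasFDerivAt

lemma contDiff_coord {n : WithTop ℕ∞} (i : Fin 3) : ContDiff ℝ n (fun y : E3 => y i) :=
  (EuclideanSpace.proj i : E3 →L[ℝ] ℝ).contDiff

lemma continuous_coord (i : Fin 3) : Continuous (fun y : E3 => y i) :=
  (EuclideanSpace.proj i : E3 →L[ℝ] ℝ).continuous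

lemma proj_ee (i j : Fin 3) : (EuclideanSpace.proj i : E3 →L[ℝ] ℝ) (ee j) = if i = j then 1 else 0 := by
  simp

lemma contDiff_TT {n : WithTop ℕ∞} : ContDiff ℝ n TT := by
  unfold TT
  have h0 := contDiff_coord (n := n) 0
  have h1 := contDiff_coord (n := n) 1
  have h2 := contDiff_coord (n := n) 2
  fun_prop

lemma fderiv_TT (x : E3) (j : Fin 3) : fderiv ℝ TT x (ee j) = - x j := by
  have h : HasFDerivAt TT _ x :=
    (((((hasFDerivAt_coord 0 x).pow 2).add ((hasFDerivAt_coord 1 x).pow 2)).add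
      ((hasFDerivAt_coord 2 x).pow 2)).const_sub 1).mul_const (2⁻¹ : ℝ)
  rw [h.fderiv]
  fin_cases j <;> simp <;> ring

lemma measurableSet_ball3 : MeasurableSet ball3 := Metric.isOpen_ball.measurableSet

lemma integrableOn_ball {f : E3 → ℝ} (hf : Continuous f) : IntegrableOn f ball3 := by
  have : IntegrableOn f (Metric.closedBall (0:E3) 1) :=
    hf.continuousOn.integrableOn_compact (isCompact_closedBall _ _)
  exact this.mono_set Metric.ball_subset_closedBall

lemma st_hasDerivAt (s : ℝ) : HasDerivAt smoothTransition (deriv smoothTransition s) s :=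
  ((smoothTransition.contDiff (n := 1)).differentiable (by norm_num) s).hasDerivAt

lemma st_deriv_cont : Continuous (deriv smoothTransition) :=
  (smoothTransition.contDiff (n := 1)).continuous_deriv (by norm_num)

lemma st_deriv_zero_left {s : ℝ} (hs : s < 0) : deriv smoothTransition s = 0 := by
  have : smoothTransition =ᶠ[𝓝 s] fun _ => (0:ℝ) := by
    filter_upwards [Iio_mem_nhds hs] with t ht
    exact smoothTransition.zero_of_nonpos (le_of_lt ht)
  rw [this.deriv_eq]; simp

lemma st_deriv_zero_right {s : ℝ} (hs : 1 < s) : deriv smoothTransition s = 0 := by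
  have : smoothTransition =ᶠ[𝓝 s] fun _ => (1:ℝ) := by
    filter_upwards [Ioi_mem_nhds hs] with t ht
    exact smoothTransition.one_of_one_le (le_of_lt ht)
  rw [this.deriv_eq]; simp

lemma st_deriv_bound : ∃ M : ℝ, 0 < M ∧ ∀ s, |deriv smoothTransition s| ≤ M := by
  obtain ⟨M, hM⟩ := (isCompact_Icc (a := (0:ℝ)) (b := 1)).exists_bound_of_continuousOn
    st_deriv_cont.continuousOn
  refine ⟨max M 1, by positivity, fun s => ?_⟩
  by_cases h0 : s < 0
  · rw [st_deriv_zero_left h0]; simp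
  by_cases h1 : 1 < s
  · rw [st_deriv_zero_right h1]; simp
  · exact (hM s ⟨not_lt.1 h0, not_lt.1 h1⟩).trans (le_max_left _ _)

lemma st_deriv_nonneg (s : ℝ) : 0 ≤ deriv smoothTransition s :=
  smoothTransition.monotone.deriv_nonneg

lemma integral_fderiv_zero (g : E3 → ℝ) (hg : ContDiff ℝ 1 g) (hc : HasCompactSupport g) (v : E3) :
    ∫ x, fderiv ℝ g x v = 0 := by
  have hgc := hg.continuous
  have hdc : Continuous fun x => fderiv ℝ g x v :=
    (hg.continuous_fderiv (by norm_num)).clm_apply continuous_const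
  have hds : HasCompactSupport fun x => fderiv ℝ g x v := hc.fderiv_apply ℝ v
  have h := integral_mul_fderiv_eq_neg_fderiv_mul_of_integrable (μ := (volume : Measure E3))
    (f := fun _ : E3 => (1:ℝ)) (g := g) (v := v) (by simp)
    (by simpa using hdc.integrable_of_hasCompactSupport hds)
    (by simpa using hgc.integrable_of_hasCompactSupport hc)
    (by intro x _; fun_prop) (by intro x _; exact hg.differentiable (by norm_num) x)
  simpa using h

lemma diverg_ball (F : Fin 3 → E3 → ℝ) (hF : ∀ j, ContDiff ℝ 1 (F j))
    (hb : ∀ x : E3, ‖x‖ = 1 → 0 ≤ ∑ j, x j * F j x) :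
    0 ≤ ∫ x in ball3, ∑ j, fderiv ℝ (F j) x (ee j) := by
  obtain ⟨M, hM0, hM⟩ := st_deriv_bound
  set g : E3 → ℝ := fun x => ∑ j, x j * F j x with hg
  have hgC : ContDiff ℝ 1 g := by
    refine ContDiff.sum fun j _ => (contDiff_coord j).mul (hF j)
  set D : E3 → ℝ := fun x => ∑ j, fderiv ℝ (F j) x (ee j) with hD
  have hDc : Continuous D := by
    refine continuous_finsetSum _ fun j _ => ?_
    exact ((hF j).continuous_fderiv (by norm_num)).clm_apply continuous_const
  -- Lipschitz lower bound for g
  obtain ⟨L, hL⟩ := (isCompact_closedBall (0:E3) 1).exists_bound_of_continuousOn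
    (hgC.continuous_fderiv (by norm_num)).continuousOn
  have hL0 : 0 ≤ L := (norm_nonneg _).trans (hL 0 (by simp))
  have hlow : ∀ x ∈ ball3, -(L * (2 * TT x)) ≤ g x := by
    intro x hx
    have hT := TT_pos hx
    rw [mem_ball3] at hx
    by_cases h0 : x = 0
    · have : g x = 0 := by simp [hg, h0]
      rw [this]; nlinarith [mul_nonneg hL0 hT.le]
    have hr : 0 < ‖x‖ := norm_pos_iff.2 h0
    set y : E3 := (‖x‖⁻¹ : ℝ) • x with hy
    have hy1 : ‖y‖ = 1 := by rw [hy, norm_smul]; simp [hr.ne']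
    have hgy : 0 ≤ g y := hb y hy1
    have hsub : ‖y - x‖ = 1 - ‖x‖ := by
      have : y - x = (‖x‖⁻¹ - 1) • x := by rw [hy, sub_smul, one_smul]
      rw [this, norm_smul, Real.norm_of_nonneg]
      · field_simp
      · have := (one_le_inv₀ hr).2 hx.le; linarith
    have hlip : ‖g y - g x‖ ≤ L * ‖y - x‖ := by
      refine (convex_closedBall (0:E3) 1).norm_image_sub_le_of_norm_fderiv_le (𝕜 := ℝ)
        (fun z _ => hgC.differentiable (by norm_num) z) (fun z hz => hL z hz) ?_ ?_
      · simpa using hx.le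
      · simp [hy1]
    rw [hsub] at hlip
    have h1 : 1 - ‖x‖ ≤ 2 * TT x := by rw [TT_eq]; nlinarith
    have h2 : L * (1 - ‖x‖) ≤ L * (2 * TT x) := mul_le_mul_of_nonneg_left h1 hL0
    have h3 := abs_le.1 (by simpa using hlip : |g y - g x| ≤ L * (1 - ‖x‖))
    linarith [h3.2]
  -- cutoffs
  have hstC : ContDiff ℝ 1 smoothTransition := smoothTransition.contDiff (n := 1)
  have key : ∀ n : ℕ, (∫ x in ball3, smoothTransition (n * TT x) * D x)
      = ∫ x in ball3, (n : ℝ) * deriv smoothTransition (n * TT x) * g x := by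
    intro n
    set η : E3 → ℝ := fun x => smoothTransition (n * TT x) with hη
    have hηC : ContDiff ℝ 1 η := hstC.comp (contDiff_const.mul contDiff_TT)
    have hη0 : ∀ x, x ∉ ball3 → η x = 0 := by
      intro x hx
      apply smoothTransition.zero_of_nonpos
      rw [mem_ball3, not_lt] at hx
      have : TT x ≤ 0 := by rw [TT_eq]; nlinarith
      exact mul_nonpos_of_nonneg_of_nonpos (by positivity) this
    have hηd : ∀ x j, fderiv ℝ η x (ee j) = n * deriv smoothTransition (n * TT x) * (- x j) := by
      intro x j
      have h1 : HasFDerivAt (fun y => (n:ℝ) * TT y) ((n:ℝ) • fderiv ℝ TT x) x :=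
        ((contDiff_TT (n := 1)).differentiable (by norm_num) x).hasFDerivAt.const_mul _
      have h2 : HasFDerivAt η (deriv smoothTransition (n * TT x) • ((n:ℝ) • fderiv ℝ TT x)) x :=
        HasDerivAt.comp_hasFDerivAt (h₂ := smoothTransition) x (st_hasDerivAt (n * TT x)) h1
      rw [h2.fderiv]
      simp only [_root_.smul_apply, smul_eq_mul]
      rw [fderiv_TT]; ring
    have hz : ∀ j, ∫ x, fderiv ℝ (fun y => η y * F j y) x (ee j) = 0 := by
      intro j
      refine integral_fderiv_zero _ (hηC.mul (hF j)) ?_ _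
      refine HasCompactSupport.intro (isCompact_closedBall (0:E3) 1) fun x hx => ?_
      rw [hη0 x (fun h => hx (Metric.ball_subset_closedBall h)), zero_mul]
    have hpt : ∀ x j, fderiv ℝ (fun y => η y * F j y) x (ee j)
        = η x * fderiv ℝ (F j) x (ee j)
          - n * deriv smoothTransition (n * TT x) * (x j * F j x) := by
      intro x j
      rw [fderiv_fun_mul (hηC.differentiable (by norm_num) x) ((hF j).differentiable (by norm_num) x)]
      simp only [_root_.add_apply, _root_.smul_apply, smul_eq_mul]
      rw [hηd]; ring
    have hint : ∀ j, Integrable fun x => fderiv ℝ (fun y => η y * F j y) x (ee j) := by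
      intro j
      have hc : HasCompactSupport (fun y => η y * F j y) := by
        refine HasCompactSupport.intro (isCompact_closedBall (0:E3) 1) fun x hx => ?_
        rw [hη0 x (fun h => hx (Metric.ball_subset_closedBall h)), zero_mul]
      exact (((hηC.mul (hF j)).continuous_fderiv (by norm_num)).clm_apply
        continuous_const).integrable_of_hasCompactSupport (hc.fderiv_apply ℝ _)
    have hsum : ∫ x, ∑ j, fderiv ℝ (fun y => η y * F j y) x (ee j) = 0 := by
      rw [integral_finsetSum _ fun j _ => hint j]
      simp [hz]
    have hball : ∫ x in ball3, ∑ j, fderiv ℝ (fun y => η y * F j y) x (ee j) = 0 := by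
      rw [← hsum]
      apply setIntegral_eq_integral_of_ae_compl_eq_zero
      have hs0 : volume (Metric.sphere (0:E3) 1) = 0 := Measure.addHaar_sphere _ _ _
      have : ∀ᵐ x : E3, x ∉ Metric.sphere (0:E3) 1 := measure_eq_zero_iff_ae_notMem.1 hs0
      filter_upwards [this] with x hx hxb
      have h1 : 1 < ‖x‖ := by
        rw [mem_ball3, not_lt] at hxb
        exact lt_of_le_of_ne hxb (fun h => hx (by simp [← h]))
      refine Finset.sum_eq_zero fun j _ => ?_
      have : (fun y => η y * F j y) =ᶠ[𝓝 x] fun _ => 0 := by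
        have ho : IsOpen {y : E3 | 1 < ‖y‖} := isOpen_lt continuous_const continuous_norm
        filter_upwards [ho.mem_nhds h1] with y hy
        rw [hη0 y (by rw [mem_ball3, not_lt]; exact le_of_lt hy), zero_mul]
      rw [this.fderiv_eq]; simp
    have hc1 : Continuous fun x => η x * D x := hηC.continuous.mul hDc
    have hc2 : Continuous fun x => (n:ℝ) * deriv smoothTransition (n * TT x) * g x :=
      (continuous_const.mul (st_deriv_cont.comp (continuous_const.mul
        (contDiff_TT (n := 1)).continuous))).mul hgC.continuous
    rw [← sub_eq_zero, ← integral_sub (integrableOn_ball hc1) (integrableOn_ball hc2), ← hball]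
    congr 1; ext x
    simp only [hpt, Finset.sum_sub_distrib, hD, hg, Finset.mul_sum]
  -- limit of LHS
  have hTc : Continuous TT := (contDiff_TT (n := 1)).continuous
  have lim1 : Tendsto (fun n : ℕ => ∫ x in ball3, smoothTransition (n * TT x) * D x) atTop
      (𝓝 (∫ x in ball3, D x)) := by
    refine tendsto_integral_of_dominated_convergence (fun x => |D x|) ?_ ?_ ?_ ?_
    · intro n
      exact ((smoothTransition.continuous.comp (continuous_const.mul hTc)).mul
        hDc).aestronglyMeasurable
    · exact integrableOn_ball hDc.abs
    · intro n
      refine Eventually.of_forall fun x => ?_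
      rw [norm_mul, Real.norm_eq_abs, Real.norm_eq_abs, abs_of_nonneg (smoothTransition.nonneg _)]
      exact mul_le_of_le_one_left (abs_nonneg _) (smoothTransition.le_one _)
    · filter_upwards [ae_restrict_mem measurableSet_ball3] with x hx
      have hT := TT_pos hx
      have : ∀ᶠ n : ℕ in atTop, smoothTransition (n * TT x) * D x = D x := by
        filter_upwards [eventually_ge_atTop (⌈(TT x)⁻¹⌉₊)] with n hn
        have : (TT x)⁻¹ ≤ n := (Nat.le_ceil _).trans (by exact_mod_cast hn)
        rw [smoothTransition.one_of_one_le, one_mul]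
        rw [inv_le_iff_one_le_mul₀ hT] at this; linarith
      exact tendsto_const_nhds.congr' (this.mono fun n hn => hn.symm)
  have lim2 : Tendsto (fun n : ℕ => ∫ x in ball3,
      -(2 * L) * ((n * TT x) * deriv smoothTransition (n * TT x))) atTop
      (𝓝 (∫ x in ball3, (0:ℝ))) := by
    refine tendsto_integral_of_dominated_convergence (fun x => 2 * L * M) ?_ ?_ ?_ ?_
    · intro n
      exact (continuous_const.mul ((continuous_const.mul hTc).mul (st_deriv_cont.comp
        (continuous_const.mul hTc)))).aestronglyMeasurable
    · exact integrableOn_ball continuous_const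
    · intro n
      filter_upwards [ae_restrict_mem measurableSet_ball3] with x hx
      have hT := TT_pos hx
      have hnT : 0 ≤ (n:ℝ) * TT x := by positivity
      rw [norm_mul, norm_neg, Real.norm_of_nonneg (by positivity : (0:ℝ) ≤ 2 * L), norm_mul,
        Real.norm_of_nonneg hnT, Real.norm_eq_abs]
      by_cases h1 : 1 < (n:ℝ) * TT x
      · rw [st_deriv_zero_right h1]; simp; positivity
      · have := hM (n * TT x)
        have h2 := mul_le_mul (not_lt.1 h1) this (abs_nonneg _) zero_le_one
        rw [one_mul] at h2
        exact mul_le_mul_of_nonneg_left h2 (by positivity)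
    · filter_upwards [ae_restrict_mem measurableSet_ball3] with x hx
      have hT := TT_pos hx
      have : ∀ᶠ n : ℕ in atTop,
          -(2 * L) * ((n * TT x) * deriv smoothTransition (n * TT x)) = 0 := by
        filter_upwards [eventually_gt_atTop (⌈(TT x)⁻¹⌉₊)] with n hn
        have : (TT x)⁻¹ < n := (Nat.le_ceil _).trans_lt (by exact_mod_cast hn)
        rw [st_deriv_zero_right, mul_zero, mul_zero]
        rw [inv_lt_iff_one_lt_mul₀ hT] at this; linarith
      exact tendsto_const_nhds.congr' (this.mono fun n hn => hn.symm)
  rw [integral_zero] at lim2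
  refine le_of_tendsto_of_tendsto' lim2 lim1 fun n => ?_
  rw [key n]
  refine setIntegral_mono_on (integrableOn_ball ?_) (integrableOn_ball ?_) measurableSet_ball3 ?_
  · exact (continuous_const.mul ((continuous_const.mul hTc).mul (st_deriv_cont.comp
        (continuous_const.mul hTc))))
  · exact (continuous_const.mul (st_deriv_cont.comp (continuous_const.mul hTc))).mul
      hgC.continuous
  · intro x hx
    have h1 := hlow x hx
    have h2 : 0 ≤ (n:ℝ) * deriv smoothTransition (n * TT x) :=
      mul_nonneg (by positivity) (st_deriv_nonneg _)
    have h3 := mul_le_mul_of_nonneg_left h1 h2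
    linarith

lemma diverg_ball_zero (F : Fin 3 → E3 → ℝ) (hF : ∀ j, ContDiff ℝ 1 (F j))
    (hb : ∀ x : E3, ‖x‖ = 1 → ∑ j, x j * F j x = 0) :
    ∫ x in ball3, ∑ j, fderiv ℝ (F j) x (ee j) = 0 := by
  have h1 := diverg_ball F hF (fun x hx => (hb x hx).ge)
  have h2 := diverg_ball (fun j x => - F j x) (fun j => (hF j).neg)
    (fun x hx => by simp [Finset.sum_neg_distrib, hb x hx])
  simp only [fderiv_fun_neg, _root_.neg_apply, Finset.sum_neg_distrib,
    integral_neg] at h2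
  linarith

/-- partial derivative -/
abbrev pd (j : Fin 3) (f : E3 → ℝ) (x : E3) : ℝ := fderiv ℝ f x (ee j)

lemma pd_mul {f g : E3 → ℝ} {x : E3} (j : Fin 3) (hf : DifferentiableAt ℝ f x)
    (hg : DifferentiableAt ℝ g x) :
    pd j (fun y => f y * g y) x = pd j f x * g x + f x * pd j g x := by
  simp only [pd]
  rw [fderiv_fun_mul hf hg]
  simp only [_root_.add_apply, _root_.smul_apply, smul_eq_mul]; ring

lemma pd_add {f g : E3 → ℝ} {x : E3} (j : Fin 3) (hf : DifferentiableAt ℝ f x)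
    (hg : DifferentiableAt ℝ g x) :
    pd j (fun y => f y + g y) x = pd j f x + pd j g x := by
  simp only [pd]
  rw [fderiv_fun_add hf hg]; rfl

lemma pd_sub {f g : E3 → ℝ} {x : E3} (j : Fin 3) (hf : DifferentiableAt ℝ f x)
    (hg : DifferentiableAt ℝ g x) :
    pd j (fun y => f y - g y) x = pd j f x - pd j g x := by
  simp only [pd]
  rw [fderiv_fun_sub hf hg]; rfl

lemma pd_neg {f : E3 → ℝ} {x : E3} (j : Fin 3) :
    pd j (fun y => - f y) x = - pd j f x := by
  simp only [pd]
  rw [fderiv_fun_neg]; rfl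

lemma pd_const (c : ℝ) (x : E3) (j : Fin 3) : pd j (fun _ => c) x = 0 := by
  simp [pd]

lemma pd_coord (i j : Fin 3) (x : E3) : pd j (fun y => y i) x = if i = j then 1 else 0 := by
  simp only [pd]
  rw [(hasFDerivAt_coord i x).fderiv, proj_ee]

lemma pd_comp {f : E3 → ℝ} {h : ℝ → ℝ} {h' : ℝ} {x : E3} (j : Fin 3)
    (hh : HasDerivAt h h' (f x)) (hf : DifferentiableAt ℝ f x) :
    pd j (fun y => h (f y)) x = h' * pd j f x := by
  have h2 : HasFDerivAt (fun y => h (f y)) (h' • fderiv ℝ f x) x :=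
    HasDerivAt.comp_hasFDerivAt (h₂ := h) x hh hf.hasFDerivAt
  simp only [pd]
  rw [h2.fderiv]; simp

lemma pd_cont {f : E3 → ℝ} (hf : ContDiff ℝ 1 f) (j : Fin 3) : Continuous (pd j f) :=
  (hf.continuous_fderiv (by norm_num)).clm_apply continuous_const

lemma pd_contDiff {f : E3 → ℝ} (hf : ContDiff ℝ 2 f) (j : Fin 3) : ContDiff ℝ 1 (pd j f) :=
  (hf.fderiv_right (m := 1) (by norm_num)).clm_apply contDiff_const

lemma pd_comm {f : E3 → ℝ} (hf : ContDiff ℝ 2 f) (j k : Fin 3) (x : E3) :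
    pd j (pd k f) x = pd k (pd j f) x := by
  have hs : IsSymmSndFDerivAt ℝ f x := hf.contDiffAt.isSymmSndFDerivAt (by simp)
  have hd : DifferentiableAt ℝ (fderiv ℝ f) x :=
    (hf.fderiv_right (m := 1) (by norm_num)).differentiable (by norm_num) x
  have h : ∀ a b : Fin 3, pd a (pd b f) x = fderiv ℝ (fderiv ℝ f) x (ee a) (ee b) := by
    intro a b
    have := (hd.hasFDerivAt.clm_apply (hasFDerivAt_const (ee b) x))
    simp only [pd]
    rw [this.fderiv]; simp
  rw [h, h]; exact hs _ _

/-- real and imaginary parts -/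
abbrev rp (u : E3 → ℂ) (x : E3) : ℝ := (u x).re
abbrev ip (u : E3 → ℂ) (x : E3) : ℝ := (u x).im

lemma rp_contDiff {n : WithTop ℕ∞} {u : E3 → ℂ} (hu : ContDiff ℝ n u) : ContDiff ℝ n (rp u) :=
  Complex.reCLM.contDiff.comp hu
lemma ip_contDiff {n : WithTop ℕ∞} {u : E3 → ℂ} (hu : ContDiff ℝ n u) : ContDiff ℝ n (ip u) :=
  Complex.imCLM.contDiff.comp hu

lemma pd_rp {u : E3 → ℂ} {x : E3} (hu : DifferentiableAt ℝ u x) (j : Fin 3) :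
    pd j (rp u) x = (fderiv ℝ u x (ee j)).re := by
  have : HasFDerivAt (rp u) (Complex.reCLM.comp (fderiv ℝ u x)) x :=
    Complex.reCLM.hasFDerivAt.comp x hu.hasFDerivAt
  simp only [pd]; rw [this.fderiv]; rfl
lemma pd_ip {u : E3 → ℂ} {x : E3} (hu : DifferentiableAt ℝ u x) (j : Fin 3) :
    pd j (ip u) x = (fderiv ℝ u x (ee j)).im := by
  have : HasFDerivAt (ip u) (Complex.imCLM.comp (fderiv ℝ u x)) x :=
    Complex.imCLM.hasFDerivAt.comp x hu.hasFDerivAt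
  simp only [pd]; rw [this.fderiv]; rfl

lemma magD_re (B : ℝ) {u : E3 → ℂ} {x : E3} (hu : DifferentiableAt ℝ u x) (j : Fin 3) :
    (magD B u j x).re = pd j (ip u) x + Avec B x j * rp u x := by
  rw [pd_ip hu]; simp [magD]
lemma magD_im (B : ℝ) {u : E3 → ℂ} {x : E3} (hu : DifferentiableAt ℝ u x) (j : Fin 3) :
    (magD B u j x).im = - pd j (rp u) x + Avec B x j * ip u x := by
  rw [pd_rp hu]; simp [magD]

lemma nsq (z : ℂ) : ‖z‖ ^ 2 = z.re ^ 2 + z.im ^ 2 := by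
  rw [← Complex.normSq_eq_norm_sq, Complex.normSq_apply]; ring

/-- energy density in real terms -/
lemma magE_real (B : ℝ) {u : E3 → ℂ} {x : E3} (hu : DifferentiableAt ℝ u x) :
    magEnergyDensity B u x = ∑ j, ((pd j (ip u) x + Avec B x j * rp u x) ^ 2
      + (- pd j (rp u) x + Avec B x j * ip u x) ^ 2) := by
  unfold magEnergyDensity
  refine Finset.sum_congr rfl fun j _ => ?_
  rw [nsq, magD_re B hu, magD_im B hu]

lemma Avec_contDiff {n : WithTop ℕ∞} (B : ℝ) (j : Fin 3) : ContDiff ℝ n (fun x => Avec B x j) := by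
  have h0 := contDiff_coord (n := n) 0
  have h1 := contDiff_coord (n := n) 1
  fin_cases j <;> simp only [Avec] <;> simp <;> fun_prop

lemma magE_cont (B : ℝ) {u : E3 → ℂ} (hu : ContDiff ℝ 1 u) :
    Continuous (magEnergyDensity B u) := by
  have : magEnergyDensity B u = fun x => ∑ j, ((pd j (ip u) x + Avec B x j * rp u x) ^ 2
      + (- pd j (rp u) x + Avec B x j * ip u x) ^ 2) := by
    ext x; exact magE_real B (hu.differentiable (by norm_num) x)
  rw [this]
  have h1 := fun j => pd_cont (ip_contDiff hu) j
  have h2 := fun j => pd_cont (rp_contDiff hu) j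
  have h3 := fun j => (Avec_contDiff (n := 1) B j).continuous
  have h4 := (ip_contDiff hu).continuous
  have h5 := (rp_contDiff hu).continuous
  fun_prop

lemma nsq_cont {u : E3 → ℂ} (hu : ContDiff ℝ 1 u) : Continuous fun x => ‖u x‖ ^ 2 := by
  have := hu.continuous; fun_prop

lemma rmul_contDiff {n : WithTop ℕ∞} {G : E3 → ℝ} {u : E3 → ℂ} (hG : ContDiff ℝ n G)
    (hu : ContDiff ℝ n u) : ContDiff ℝ n (fun y => (G y : ℂ) * u y) :=
  (Complex.ofRealCLM.contDiff.comp hG).mul hu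

lemma magE_mul (B : ℝ) {u : E3 → ℂ} {G : E3 → ℝ} {x : E3} (hu : DifferentiableAt ℝ u x)
    (hG : DifferentiableAt ℝ G x) :
    magEnergyDensity B (fun y => (G y : ℂ) * u y) x = G x ^ 2 * magEnergyDensity B u x
      + (∑ j, pd j G x ^ 2) * ‖u x‖ ^ 2
      + 2 * G x * ∑ j, pd j G x * (rp u x * pd j (rp u) x + ip u x * pd j (ip u) x) := by
  have hd : DifferentiableAt ℝ (fun y => (G y : ℂ) * u y) x :=
    ((Complex.ofRealCLM.differentiableAt).comp x hG).mul hu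
  rw [magE_real B hd, magE_real B hu, nsq]
  have e1 : rp (fun y => (G y : ℂ) * u y) = fun y => G y * rp u y := by
    ext y; simp [rp]
  have e2 : ip (fun y => (G y : ℂ) * u y) = fun y => G y * ip u y := by
    ext y; simp [ip]
  have hr : DifferentiableAt ℝ (rp u) x := Complex.reCLM.differentiableAt.comp x hu
  have hi : DifferentiableAt ℝ (ip u) x := Complex.imCLM.differentiableAt.comp x hu
  rw [e1, e2]
  simp only [pd_mul _ hG hr, pd_mul _ hG hi, Fin.sum_univ_three]
  ring

lemma ims (B : ℝ) {u : E3 → ℂ} {α : E3 → ℝ} {x : E3} (hu : DifferentiableAt ℝ u x)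
    (hα : DifferentiableAt ℝ α x) :
    magEnergyDensity B u x = magEnergyDensity B (fun y => ((cos (α y) : ℝ) : ℂ) * u y) x
      + magEnergyDensity B (fun y => ((sin (α y) : ℝ) : ℂ) * u y) x
      - (∑ j, pd j α x ^ 2) * ‖u x‖ ^ 2 := by
  have hc : DifferentiableAt ℝ (fun y => cos (α y)) x := hα.cos
  have hs : DifferentiableAt ℝ (fun y => sin (α y)) x := hα.sin
  rw [magE_mul B hu hc, magE_mul B hu hs]
  simp only [pd_comp _ (hasDerivAt_cos _) hα, pd_comp _ (hasDerivAt_sin _) hα, Fin.sum_univ_three]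
  have := sin_sq_add_cos_sq (α x)
  set S := sin (α x)
  set C := cos (α x)
  have h : C ^ 2 = 1 - S ^ 2 := by linarith
  ring_nf
  simp only [h]
  ring

lemma agmon_id {B lam : ℝ} {Ψ : E3 → ℂ} (hΨ : IsNeumannEigenfunction B lam Ψ) {G : E3 → ℝ}
    (hG : ContDiff ℝ 1 G) :
    ∫ x in ball3, magEnergyDensity B (fun y => (G y : ℂ) * Ψ y) x =
      lam * (∫ x in ball3, G x ^ 2 * ‖Ψ x‖ ^ 2) + ∫ x in ball3, (∑ j, pd j G x ^ 2) * ‖Ψ x‖ ^ 2 := by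
  obtain ⟨hC2, _, heq, hN⟩ := hΨ
  have hC1 : ContDiff ℝ 1 Ψ := hC2.of_le (by norm_num)
  have hw : ∀ j, ContDiff ℝ 1 (magD B Ψ j) := by
    intro j
    have h1 : ContDiff ℝ 1 fun x => fderiv ℝ Ψ x (ee j) :=
      (hC2.fderiv_right (m := 1) (by norm_num)).clm_apply contDiff_const
    have h2 : ContDiff ℝ 1 fun x => (Avec B x j : ℂ) :=
      Complex.ofRealCLM.contDiff.comp (Avec_contDiff B j)
    unfold magD
    exact (contDiff_const.mul h1).add (h2.mul hC1)
  have hwd : ∀ j x, DifferentiableAt ℝ (magD B Ψ j) x := fun j x =>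
    (hw j).differentiable (by norm_num) x
  have hΨd : ∀ x, DifferentiableAt ℝ Ψ x := fun x => hC1.differentiable (by norm_num) x
  have hGd : ∀ x, DifferentiableAt ℝ G x := fun x => hG.differentiable (by norm_num) x
  have hr := rp_contDiff hC1
  have hi := ip_contDiff hC1
  have hwr := fun j => rp_contDiff (hw j)
  have hwi := fun j => ip_contDiff (hw j)
  have hrd : ∀ x, DifferentiableAt ℝ (rp Ψ) x := fun x => hr.differentiable (by norm_num) x
  have hid : ∀ x, DifferentiableAt ℝ (ip Ψ) x := fun x => hi.differentiable (by norm_num) x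
  have hwrd : ∀ j x, DifferentiableAt ℝ (rp (magD B Ψ j)) x :=
    fun j x => (hwr j).differentiable (by norm_num) x
  have hwid : ∀ j x, DifferentiableAt ℝ (ip (magD B Ψ j)) x :=
    fun j x => (hwi j).differentiable (by norm_num) x
  set F : Fin 3 → E3 → ℝ := fun j x =>
    (G x * G x) * (ip Ψ x * rp (magD B Ψ j) x - rp Ψ x * ip (magD B Ψ j) x) with hF
  have hFC : ∀ j, ContDiff ℝ 1 (F j) := by
    intro j
    exact (hG.mul hG).mul ((hi.mul (hwr j)).sub (hr.mul (hwi j)))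
  have hdiv := diverg_ball_zero F hFC (by
    intro x hx
    have h := hN x (by simpa using hx)
    have h1 := congrArg Complex.re h
    have h2 := congrArg Complex.im h
    simp [Fin.sum_univ_three] at h1 h2
    simp only [hF, Fin.sum_univ_three, rp, ip]
    linear_combination G x * G x * (-(Ψ x).im * h1 + (Ψ x).re * h2))
  have hpt : ∀ x ∈ ball3, magEnergyDensity B (fun y => (G y : ℂ) * Ψ y) x =
      ∑ j, fderiv ℝ (F j) x (ee j) + (lam * (G x ^ 2 * ‖Ψ x‖ ^ 2) + (∑ j, pd j G x ^ 2) * ‖Ψ x‖ ^ 2) := by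
    intro x hx
    have hFd : ∀ j, fderiv ℝ (F j) x (ee j) = (pd j G x * G x + G x * pd j G x)
        * (ip Ψ x * rp (magD B Ψ j) x - rp Ψ x * ip (magD B Ψ j) x) + (G x * G x) *
        ((pd j (ip Ψ) x * rp (magD B Ψ j) x + ip Ψ x * pd j (rp (magD B Ψ j)) x) -
        (pd j (rp Ψ) x * ip (magD B Ψ j) x + rp Ψ x * pd j (ip (magD B Ψ j)) x)) := by
      intro j
      have h1 := pd_mul j ((hGd x).mul (hGd x)) (((hid x).mul (hwrd j x)).sub ((hrd x).mul (hwid j x)))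
      have h2 := pd_sub j ((hid x).mul (hwrd j x)) ((hrd x).mul (hwid j x))
      have h3 := pd_mul j (hid x) (hwrd j x)
      have h4 := pd_mul j (hrd x) (hwid j x)
      have h5 := pd_mul j (hGd x) (hGd x)
      refine h1.trans ?_
      erw [h5, h2, h3, h4]
      rfl
    have he := heq x hx
    have her := congrArg Complex.re he
    have hei := congrArg Complex.im he
    have q1 : ∀ j, (fderiv ℝ (magD B Ψ j) x (ee j)).re = pd j (rp (magD B Ψ j)) x :=
      fun j => (pd_rp (hwd j x) j).symm
    have q2 : ∀ j, (fderiv ℝ (magD B Ψ j) x (ee j)).im = pd j (ip (magD B Ψ j)) x :=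
      fun j => (pd_ip (hwd j x) j).symm
    simp only [magLap, Fin.sum_univ_three, Complex.add_re, Complex.add_im, Complex.mul_re, Complex.mul_im,
      Complex.neg_re, Complex.neg_im, Complex.I_re, Complex.I_im, Complex.ofReal_re, Complex.ofReal_im,
      q1, q2, magD_re B (hΨd x), magD_im B (hΨd x)] at her hei
    rw [magE_mul B (hΨd x) (hGd x), magE_real B (hΨd x), nsq]
    simp only [hFd, Fin.sum_univ_three]
    simp only [rp, ip, magD_re B (hΨd x), magD_im B (hΨd x)] at her hei ⊢
    linear_combination G x ^ 2 * ((Ψ x).re * her + (Ψ x).im * hei)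
  rw [setIntegral_congr_fun measurableSet_ball3 hpt]
  have c1 : Continuous fun x => ∑ j, fderiv ℝ (F j) x (ee j) :=
    continuous_finsetSum _ fun j _ => pd_cont (hFC j) j
  have c2 : Continuous fun x => G x ^ 2 * ‖Ψ x‖ ^ 2 := (hG.continuous.pow 2).mul (nsq_cont hC1)
  have c3 : Continuous fun x => (∑ j, pd j G x ^ 2) * ‖Ψ x‖ ^ 2 :=
    (continuous_finsetSum _ fun j _ => (pd_cont hG j).pow 2).mul (nsq_cont hC1)
  have c4 : Continuous fun x => lam * (G x ^ 2 * ‖Ψ x‖ ^ 2) := continuous_const.mul c2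
  have c5 : Continuous fun x => lam * (G x ^ 2 * ‖Ψ x‖ ^ 2) + (∑ j, pd j G x ^ 2) * ‖Ψ x‖ ^ 2 := c4.add c3
  rw [integral_add (integrableOn_ball c1) (integrableOn_ball c5), hdiv,
    integral_add (integrableOn_ball c4) (integrableOn_ball c3),
    integral_const_mul, zero_add]

/-- current -/
def cur (B : ℝ) (v : E3 → ℂ) (k : Fin 3) (x : E3) : ℝ :=
  rp v x * (pd k (ip v) x + Avec B x k * rp v x) + ip v x * (- pd k (rp v) x + Avec B x k * ip v x)

lemma cur_contDiff (B : ℝ) {v : E3 → ℂ} (hv : ContDiff ℝ 2 v) (k : Fin 3) :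
    ContDiff ℝ 1 (cur B v k) := by
  have h1 := pd_contDiff (ip_contDiff hv) k
  have h2 := pd_contDiff (rp_contDiff hv) k
  have h3 := Avec_contDiff (n := 1) B k
  have hv1 : ContDiff ℝ 1 v := hv.of_le (by norm_num)
  have h4 := ip_contDiff hv1
  have h5 := rp_contDiff hv1
  unfold cur
  fun_prop

lemma pd_Avec (B : ℝ) (j k : Fin 3) (x : E3) : pd j (fun y => Avec B y k) x =
    if k = 0 ∧ j = 1 then -(B/2) else if k = 1 ∧ j = 0 then B/2 else 0 := by
  have h0 : ∀ c, DifferentiableAt ℝ (fun y : E3 => c * y 0) x := fun c =>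
    ((hasFDerivAt_coord 0 x).differentiableAt).const_mul c
  have hc : ∀ (c : ℝ) i, pd j (fun y : E3 => c * y i) x = c * (if i = j then 1 else 0) := by
    intro c i
    rw [pd_mul j (by fun_prop) (hasFDerivAt_coord i x).differentiableAt, pd_const, pd_coord]; ring
  fin_cases k
  · have : (fun y => Avec B y 0) = fun y : E3 => -(B/2) * y 1 := rfl
    simp only [Fin.zero_eta, this, hc]; fin_cases j <;> simp
  · have : (fun y => Avec B y 1) = fun y : E3 => (B/2) * y 0 := rfl
    simp only [Fin.mk_one, this, hc]; fin_cases j <;> simp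
  · have : (fun y => Avec B y 2) = fun y : E3 => (0:ℝ) := rfl
    simp only [Fin.reduceFinMk, this, pd_const]; simp

lemma pd_cur (B : ℝ) {v : E3 → ℂ} (hv : ContDiff ℝ 2 v) (j k : Fin 3) (x : E3) :
    pd j (cur B v k) x =
     pd j (rp v) x * (pd k (ip v) x + Avec B x k * rp v x)
     + rp v x * (pd j (pd k (ip v)) x + (pd j (fun y => Avec B y k) x * rp v x + Avec B x k * pd j (rp v) x))
     + (pd j (ip v) x * (- pd k (rp v) x + Avec B x k * ip v x)
     + ip v x * (- pd j (pd k (rp v)) x + (pd j (fun y => Avec B y k) x * ip v x + Avec B x k * pd j (ip v) x))) := by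
  have hv1 : ContDiff ℝ 1 v := hv.of_le (by norm_num)
  have d1 := (pd_contDiff (ip_contDiff hv) k).differentiable (by norm_num) x
  have d2 := (pd_contDiff (rp_contDiff hv) k).differentiable (by norm_num) x
  have d3 := (Avec_contDiff (n := 1) B k).differentiable (by norm_num) x
  have d4 := (ip_contDiff hv1).differentiable (by norm_num) x
  have d5 := (rp_contDiff hv1).differentiable (by norm_num) x
  have e5 := pd_mul j d3 d5
  have e4 := pd_mul j d3 d4
  have e1 := pd_add j d1 (d3.mul d5)
  have e2 := pd_add j d2.neg (d3.mul d4)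
  have e3 := pd_mul j d5 (d1.add (d3.mul d5))
  have e6 := pd_mul j d4 (d2.neg.add (d3.mul d4))
  have e7 := pd_add j (d5.mul (d1.add (d3.mul d5))) (d4.mul (d2.neg.add (d3.mul d4)))
  have e8 : pd j (-pd k (rp v)) x = - pd j (pd k (rp v)) x := pd_neg j
  refine e7.trans ?_
  erw [e3, e6, e1, e2, e4, e5, e8]
  rfl

/-- curl identity -/
lemma curl_cur (B : ℝ) {v : E3 → ℂ} (hv : ContDiff ℝ 2 v) (j k : Fin 3) (x : E3) :
    pd j (cur B v k) x - pd k (cur B v j) x =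
      2 * ((pd j (ip v) x + Avec B x j * rp v x) * (- pd k (rp v) x + Avec B x k * ip v x)
        - (- pd j (rp v) x + Avec B x j * ip v x) * (pd k (ip v) x + Avec B x k * rp v x))
      + (pd j (fun y => Avec B y k) x - pd k (fun y => Avec B y j) x) * ‖v x‖ ^ 2 := by
  rw [pd_cur B hv, pd_cur B hv, pd_comm (ip_contDiff hv) j k, pd_comm (rp_contDiff hv) j k, nsq]
  simp only [rp, ip]
  ring

lemma comm_ez (B : ℝ) {v : E3 → ℂ} (hv : ContDiff ℝ 2 v) (h0 : ∀ x : E3, ‖x‖ = 1 → v x = 0) :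
    B * ∫ x in ball3, ‖v x‖ ^ 2 ≤ ∫ x in ball3, magEnergyDensity B v x := by
  have hv1 : ContDiff ℝ 1 v := hv.of_le (by norm_num)
  have hc := fun k => cur_contDiff B hv k
  set F : Fin 3 → E3 → ℝ := ![cur B v 1, fun x => - cur B v 0 x, fun _ => 0] with hF
  have hFC : ∀ j, ContDiff ℝ 1 (F j) := by
    intro j; fin_cases j
    · exact hc 1
    · exact (hc 0).neg
    · exact contDiff_const
  have hdiv := diverg_ball_zero F hFC (by
    intro x hx
    have := h0 x hx
    simp [Fin.sum_univ_three, hF, cur, rp, ip, this])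
  have hle : ∫ x in ball3, (B * ‖v x‖ ^ 2 - ∑ j, fderiv ℝ (F j) x (ee j)) ≤
      ∫ x in ball3, magEnergyDensity B v x := by
    have c1 : Continuous fun x => ∑ j, fderiv ℝ (F j) x (ee j) :=
      continuous_finsetSum _ fun j _ => pd_cont (hFC j) j
    refine setIntegral_mono_on (integrableOn_ball ((continuous_const.mul (nsq_cont hv1)).sub c1))
      (integrableOn_ball (magE_cont B hv1)) measurableSet_ball3 fun x _ => ?_
    have hk := curl_cur B hv 0 1 x
    rw [pd_Avec, pd_Avec] at hk
    rw [magE_real B (hv1.differentiable (by norm_num) x)]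
    have e : ∑ j, fderiv ℝ (F j) x (ee j) = pd 0 (cur B v 1) x - pd 1 (cur B v 0) x := by
      have h1 : fderiv ℝ (F 1) x (ee 1) = _ := pd_neg (f := cur B v 0) (x := x) 1
      have h2 : fderiv ℝ (F 2) x (ee 2) = _ := pd_const 0 x 2
      have h3 : fderiv ℝ (F 0) x (ee 0) = pd 0 (cur B v 1) x := rfl
      rw [Fin.sum_univ_three, h1, h2, h3]; ring
    rw [e, hk]
    simp only [Fin.sum_univ_three]
    norm_num
    generalize pd 0 (ip v) x + Avec B x 0 * rp v x = p0
    generalize pd 1 (ip v) x + Avec B x 1 * rp v x = p1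
    generalize pd 2 (ip v) x + Avec B x 2 * rp v x = p2
    generalize - pd 0 (rp v) x + Avec B x 0 * ip v x = q0
    generalize - pd 1 (rp v) x + Avec B x 1 * ip v x = q1
    generalize - pd 2 (rp v) x + Avec B x 2 * ip v x = q2
    nlinarith [sq_nonneg (p0 + q1), sq_nonneg (q0 - p1), sq_nonneg p2, sq_nonneg q2]
  have c1 : Continuous fun x => ∑ j, fderiv ℝ (F j) x (ee j) :=
    continuous_finsetSum _ fun j _ => pd_cont (hFC j) j
  have c2 : Continuous fun x => B * ‖v x‖ ^ 2 := continuous_const.mul (nsq_cont hv1)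
  rw [integral_sub (integrableOn_ball c2) (integrableOn_ball c1), hdiv,
    integral_const_mul, sub_zero] at hle
  exact hle

lemma cross_bound (x p q : Fin 3 → ℝ) (hx : x 0 ^ 2 + x 1 ^ 2 + x 2 ^ 2 ≤ 1) :
    2 * (x 2 * (p 0 * q 1 - q 0 * p 1) + x 1 * (p 2 * q 0 - q 2 * p 0) + x 0 * (p 1 * q 2 - q 1 * p 2))
      ≤ p 0 ^ 2 + q 0 ^ 2 + (p 1 ^ 2 + q 1 ^ 2) + (p 2 ^ 2 + q 2 ^ 2) := by
  have h1 : 0 ≤ (1 - (x 0 ^ 2 + x 1 ^ 2 + x 2 ^ 2)) * (q 0 ^ 2 + q 1 ^ 2 + q 2 ^ 2) :=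
    mul_nonneg (by linarith) (by positivity)
  nlinarith [sq_nonneg (p 0 - (q 1 * x 2 - q 2 * x 1)), sq_nonneg (p 1 - (q 2 * x 0 - q 0 * x 2)),
    sq_nonneg (p 2 - (q 0 * x 1 - q 1 * x 0)), sq_nonneg (q 0 * x 0 + q 1 * x 1 + q 2 * x 2)]

lemma comm_x (B s : ℝ) (hs : s = 1 ∨ s = -1) {v : E3 → ℂ} (hv : ContDiff ℝ 2 v) :
    ∫ x in ball3, s * (B * x 2) * ‖v x‖ ^ 2 ≤ ∫ x in ball3, magEnergyDensity B v x := by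
  have hv1 : ContDiff ℝ 1 v := hv.of_le (by norm_num)
  have hc := fun k => cur_contDiff B hv k
  have hX : ∀ i, ContDiff ℝ 1 (fun y : E3 => y i) := fun i => contDiff_coord i
  have hcd : ∀ k x, DifferentiableAt ℝ (cur B v k) x := fun k x => (hc k).differentiable (by norm_num) x
  have hXd : ∀ i x, DifferentiableAt ℝ (fun y : E3 => y i) x := fun i x => (hX i).differentiable (by norm_num) x
  have gen : ∀ a b : Fin 3, ∀ x j, pd j (fun x : E3 => cur B v a x * x b - cur B v b x * x a) x =
    pd j (cur B v a) x * x b + cur B v a x * (if b = j then 1 else 0)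
      - (pd j (cur B v b) x * x a + cur B v b x * (if a = j then 1 else 0)) := by
    intro a b x j
    rw [pd_sub j ((hcd a x).fun_mul (hXd b x)) ((hcd b x).fun_mul (hXd a x)), pd_mul j (hcd a x) (hXd b x),
      pd_mul j (hcd b x) (hXd a x), pd_coord, pd_coord]
  set F : Fin 3 → E3 → ℝ := ![fun x => cur B v 1 x * x 2 - cur B v 2 x * x 1,
    fun x => cur B v 2 x * x 0 - cur B v 0 x * x 2, fun x => cur B v 0 x * x 1 - cur B v 1 x * x 0] with hF
  have hFC : ∀ j, ContDiff ℝ 1 (F j) := by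
    intro j; fin_cases j
    · exact ((hc 1).mul (hX 2)).sub ((hc 2).mul (hX 1))
    · exact ((hc 2).mul (hX 0)).sub ((hc 0).mul (hX 2))
    · exact ((hc 0).mul (hX 1)).sub ((hc 1).mul (hX 0))
  have hdiv := diverg_ball_zero F hFC (by
    intro x hx
    simp [Fin.sum_univ_three, hF]; ring)
  have c1 : Continuous fun x => ∑ j, fderiv ℝ (F j) x (ee j) :=
    continuous_finsetSum _ fun j _ => pd_cont (hFC j) j
  have c3 := continuous_coord 2
  have c2 : Continuous fun x : E3 => s * (B * x 2) * ‖v x‖ ^ 2 :=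
    ((continuous_const.mul (continuous_const.mul c3))).mul (nsq_cont hv1)
  have c4 : Continuous fun x => s * ∑ j, fderiv ℝ (F j) x (ee j) := continuous_const.mul c1
  have hle : ∫ x in ball3, (s * (B * x 2) * ‖v x‖ ^ 2 - s * ∑ j, fderiv ℝ (F j) x (ee j)) ≤
      ∫ x in ball3, magEnergyDensity B v x := by
    refine setIntegral_mono_on (integrableOn_ball (c2.sub c4))
      (integrableOn_ball (magE_cont B hv1)) measurableSet_ball3 fun x hx => ?_
    have hk1 := curl_cur B hv 0 1 x
    have hk2 := curl_cur B hv 2 0 x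
    have hk3 := curl_cur B hv 1 2 x
    simp only [pd_Avec, Fin.reduceEq, and_false, false_and, and_self, if_true, if_false] at hk1 hk2 hk3
    rw [magE_real B (hv1.differentiable (by norm_num) x)]
    have e : ∑ j, fderiv ℝ (F j) x (ee j) = x 2 * (pd 0 (cur B v 1) x - pd 1 (cur B v 0) x)
       + x 1 * (pd 2 (cur B v 0) x - pd 0 (cur B v 2) x)
       + x 0 * (pd 1 (cur B v 2) x - pd 2 (cur B v 1) x) := by
      have g1 : fderiv ℝ (F 0) x (ee 0) = _ := gen 1 2 x 0
      have g2 : fderiv ℝ (F 1) x (ee 1) = _ := gen 2 0 x 1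
      have g3 : fderiv ℝ (F 2) x (ee 2) = _ := gen 0 1 x 2
      rw [Fin.sum_univ_three, g1, g2, g3]
      simp only [Fin.reduceEq, if_false]; ring
    rw [e, hk1, hk2, hk3]
    simp only [Fin.sum_univ_three]
    have hxb : x 0 ^ 2 + x 1 ^ 2 + x 2 ^ 2 ≤ 1 := by
      have := norm_sq3 x; rw [mem_ball3] at hx; nlinarith [norm_nonneg x]
    have cb1 := cross_bound x (fun j => pd j (ip v) x + Avec B x j * rp v x)
      (fun j => - pd j (rp v) x + Avec B x j * ip v x) hxb
    have cb2 := cross_bound (fun i => - x i) (fun j => pd j (ip v) x + Avec B x j * rp v x)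
      (fun j => - pd j (rp v) x + Avec B x j * ip v x) (by simpa using hxb)
    simp only [] at cb1 cb2
    rcases hs with rfl | rfl
    · linarith [cb2]
    · linarith [cb1]
  rw [integral_sub (integrableOn_ball c2) (integrableOn_ball c4), integral_const_mul, hdiv,
    mul_zero, sub_zero] at hle
  exact hle

abbrev Circ := AddCircle (1:ℝ)
abbrev hm : Measure Circ := AddCircle.haarAddCircle

def rc (t : Circ) : ℝ := (fourier 1 t : ℂ).re
def rs (t : Circ) : ℝ := (fourier 1 t : ℂ).im

lemma rc_cont : Continuous rc := Complex.continuous_re.comp (fourier 1).continuous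
lemma rs_cont : Continuous rs := Complex.continuous_im.comp (fourier 1).continuous

lemma rc_rs (t : Circ) : rc t ^ 2 + rs t ^ 2 = 1 := by
  unfold rc rs
  rw [← nsq, fourier_one, Circle.norm_coe]; norm_num

lemma rc_add (s t : Circ) : rc (s + t) = rc s * rc t - rs s * rs t := by
  unfold rc rs
  simp only [fourier_one, AddCircle.toCircle_add, Circle.coe_mul, Complex.mul_re]
lemma rs_add (s t : Circ) : rs (s + t) = rc s * rs t + rs s * rc t := by
  unfold rc rs
  simp only [fourier_one, AddCircle.toCircle_add, Circle.coe_mul, Complex.mul_im]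

lemma rc_coe (s : ℝ) : rc (s : Circ) = cos (2 * π * s) := by
  unfold rc
  rw [fourier_coe_apply]
  have : 2 * (π:ℂ) * Complex.I * ((1:ℤ):ℂ) * (s:ℂ) / ((1:ℝ):ℂ) = ((2 * π * s : ℝ) : ℂ) * Complex.I := by
    push_cast; ring
  rw [this, Complex.exp_ofReal_mul_I_re]
lemma rs_coe (s : ℝ) : rs (s : Circ) = sin (2 * π * s) := by
  unfold rs
  rw [fourier_coe_apply]
  have : 2 * (π:ℂ) * Complex.I * ((1:ℤ):ℂ) * (s:ℂ) / ((1:ℝ):ℂ) = ((2 * π * s : ℝ) : ℂ) * Complex.I := by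
    push_cast; ring
  rw [this, Complex.exp_ofReal_mul_I_im]

abbrev prj (i : Fin 3) : E3 →L[ℝ] ℝ := EuclideanSpace.proj i

def RP2 : E3 →L[ℝ] E3 := (prj 2).smulRight (ee 2)
def RP : E3 →L[ℝ] E3 := (prj 0).smulRight (ee 0) + (prj 1).smulRight (ee 1)
def RQ : E3 →L[ℝ] E3 := (prj 0).smulRight (ee 1) - (prj 1).smulRight (ee 0)

def Rot (t : Circ) : E3 →L[ℝ] E3 := RP2 + rc t • RP + rs t • RQ

lemma Rot_cont : Continuous Rot := by
  have h1 := rc_cont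
  have h2 := rs_cont
  unfold Rot; fun_prop

lemma RP2_apply (x : E3) : RP2 x = x 2 • ee 2 := rfl
lemma RP_apply (x : E3) : RP x = x 0 • ee 0 + x 1 • ee 1 := rfl
lemma RQ_apply (x : E3) : RQ x = x 0 • ee 1 - x 1 • ee 0 := rfl
lemma Rot_apply (t : Circ) (x : E3) : Rot t x = x 2 • ee 2 + rc t • (x 0 • ee 0 + x 1 • ee 1)
   + rs t • (x 0 • ee 1 - x 1 • ee 0) := rfl

lemma Rot0 (t : Circ) (x : E3) : Rot t x 0 = rc t * x 0 - rs t * x 1 := by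
  rw [Rot_apply]; simp; ring
lemma Rot1 (t : Circ) (x : E3) : Rot t x 1 = rs t * x 0 + rc t * x 1 := by
  rw [Rot_apply]; simp; ring
lemma Rot2 (t : Circ) (x : E3) : Rot t x 2 = x 2 := by
  rw [Rot_apply]; simp

lemma Rot_add (s t : Circ) (x : E3) : Rot (s + t) x = Rot s (Rot t x) := by
  ext i
  fin_cases i
  · simp only [Fin.zero_eta, Rot0, Rot1, rc_add, rs_add]; ring
  · simp only [Fin.mk_one, Rot0, Rot1, rc_add, rs_add]; ring
  · simp only [Fin.reduceFinMk, Rot2]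

lemma Rot_rho (t : Circ) (x : E3) : Rot t x 0 ^ 2 + Rot t x 1 ^ 2 = x 0 ^ 2 + x 1 ^ 2 := by
  rw [Rot0, Rot1]; linear_combination (x 0 ^ 2 + x 1 ^ 2) * rc_rs t

lemma Rot_norm (t : Circ) (x : E3) : ‖Rot t x‖ = ‖x‖ := by
  have : ‖Rot t x‖ ^ 2 = ‖x‖ ^ 2 := by
    rw [norm_sq3, norm_sq3, Rot_rho, Rot2]
  exact (sq_eq_sq₀ (norm_nonneg _) (norm_nonneg _)).1 this

def RotE (t : Circ) : E3 ≃ₗᵢ[ℝ] E3 :=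
  LinearIsometry.toLinearIsometryEquiv ⟨(Rot t).toLinearMap, Rot_norm t⟩ rfl

lemma RotE_apply (t : Circ) (x : E3) : RotE t x = Rot t x := rfl

lemma integral_rot (t : Circ) (g : E3 → ℝ) :
    ∫ x in ball3, g (Rot t x) = ∫ x in ball3, g x := by
  have hp := (RotE t).measurePreserving
  have := hp.setIntegral_preimage_emb (RotE t).toHomeomorph.measurableEmbedding g ball3
  rw [← this]
  have hs : (RotE t) ⁻¹' ball3 = ball3 := by
    ext x; simp only [mem_preimage, mem_ball3, RotE_apply, Rot_norm]
  erw [hs]; rfl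

lemma integral_circ_rot {g : E3 → ℝ} (hg : Continuous g) :
    ∫ x in ball3, ∫ t, g (Rot t x) ∂hm = ∫ x in ball3, g x := by
  have hc : Continuous (Function.uncurry fun (x : E3) (t : Circ) => g (Rot t x)) := by
    refine hg.comp ?_
    exact (Rot_cont.comp continuous_snd).clm_apply continuous_fst
  rw [integral_integral_swap]
  · simp only [integral_rot]; simp
  · obtain ⟨K, hK⟩ := (isCompact_closedBall (0:E3) 1).exists_bound_of_continuousOn hg.continuousOn
    have : IsFiniteMeasure (volume.restrict ball3 : Measure E3) := by
      refine ⟨?_⟩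
      rw [Measure.restrict_apply_univ]; exact measure_ball_lt_top
    refine Integrable.of_bound hc.aestronglyMeasurable K ?_
    have : (volume.restrict ball3 : Measure E3).prod hm = (volume.prod hm).restrict (ball3 ×ˢ univ) := by
      rw [← Measure.prod_restrict]; simp
    rw [this]
    filter_upwards [ae_restrict_mem (measurableSet_ball3.prod MeasurableSet.univ)] with p hp
    refine hK _ ?_
    have := (mem_ball3 _).1 hp.1
    simp only [Metric.mem_closedBall, dist_zero_right, Rot_norm]; exact this.le

lemma param_int {f : E3 → Circ → ℂ} {g : E3 → Circ → (E3 →L[ℝ] ℂ)}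
    (hf : Continuous (Function.uncurry f)) (hg : Continuous (Function.uncurry g))
    (hd : ∀ x t, HasFDerivAt (fun y => f y t) (g x t) x) :
    ContDiff ℝ 1 (fun x => ∫ t, f x t ∂hm) ∧
      ∀ x, HasFDerivAt (fun x => ∫ t, f x t ∂hm) (∫ t, g x t ∂hm) x := by
  have hfx : ∀ x, Continuous (f x) := fun x => hf.comp (Continuous.prodMk_right x)
  have hgx : ∀ x, Continuous (g x) := fun x => hg.comp (Continuous.prodMk_right x)
  have h : ∀ x, HasFDerivAt (fun x => ∫ t, f x t ∂hm) (∫ t, g x t ∂hm) x := by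
    intro x
    obtain ⟨K, hK⟩ := ((isCompact_closedBall x 1).prod (isCompact_univ (X := Circ))).exists_bound_of_continuousOn
      hg.continuousOn
    refine hasFDerivAt_integral_of_dominated_of_fderiv_le (s := Metric.ball x 1) (bound := fun _ => K)
      (Metric.ball_mem_nhds x one_pos) ?_ ?_ ?_ ?_ ?_ ?_
    · exact Eventually.of_forall fun y => (hfx y).aestronglyMeasurable
    · exact (hfx x).integrable_of_hasCompactSupport (HasCompactSupport.of_compactSpace _)
    · exact (hgx x).aestronglyMeasurable
    · exact Eventually.of_forall fun t y hy => hK (y, t) ⟨Metric.ball_subset_closedBall hy, mem_univ _⟩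
    · exact integrable_const _
    · exact Eventually.of_forall fun t y _ => hd y t
  refine ⟨?_, h⟩
  rw [contDiff_one_iff_fderiv]
  refine ⟨fun x => (h x).differentiableAt, ?_⟩
  have : fderiv ℝ (fun x => ∫ t, f x t ∂hm) = fun x => ∫ t, g x t ∂hm := by
    ext1 x; exact (h x).fderiv
  rw [this]
  have := continuous_parametric_integral_of_continuous (μ := hm) hg (isCompact_univ)
  simpa using this

def modeF (v : E3 → ℂ) (m : ℤ) (x : E3) : ℂ := fourierCoeff (fun t : Circ => v (Rot t x)) m

lemma modeF_eq (v : E3 → ℂ) (m : ℤ) (x : E3) :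
    modeF v m x = ∫ t, fourier (-m) t * v (Rot t x) ∂hm := by
  simp [modeF, fourierCoeff]

lemma rot_joint : Continuous (fun p : E3 × Circ => Rot p.2 p.1) :=
  (Rot_cont.comp continuous_snd).clm_apply continuous_fst

lemma modeF_param {v : E3 → ℂ} (hv : ContDiff ℝ 1 v) (m : ℤ) :
    ContDiff ℝ 1 (modeF v m) ∧ ∀ x, HasFDerivAt (modeF v m)
      (∫ t, (fourier (-m) t : ℂ) • (fderiv ℝ v (Rot t x)).comp (Rot t) ∂hm) x := by
  have e : modeF v m = fun x => ∫ t, fourier (-m) t * v (Rot t x) ∂hm := by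
    ext x; exact modeF_eq v m x
  rw [e]
  refine param_int (f := fun x t => fourier (-m) t * v (Rot t x)) ?_ ?_ ?_
  · exact ((fourier (-m)).continuous.comp continuous_snd).mul (hv.continuous.comp rot_joint)
  · refine ((fourier (-m)).continuous.comp continuous_snd).smul ?_
    exact ((hv.continuous_fderiv (by norm_num)).comp rot_joint).clm_comp (Rot_cont.comp continuous_snd)
  · intro x t
    have h1 : HasFDerivAt v (fderiv ℝ v (Rot t x)) (Rot t x) :=
      (hv.differentiable (by norm_num) _).hasFDerivAt
    exact (h1.comp x (Rot t).hasFDerivAt).const_smul (fourier (-m) t : ℂ)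

lemma modeF_contDiff {v : E3 → ℂ} (hv : ContDiff ℝ 1 v) (m : ℤ) : ContDiff ℝ 1 (modeF v m) :=
  (modeF_param hv m).1

lemma modeF_zero {v : E3 → ℂ} (m : ℤ) (x : E3)
    (h : ∀ y : E3, y 0 ^ 2 + y 1 ^ 2 = x 0 ^ 2 + x 1 ^ 2 → y 2 = x 2 → v y = 0) : modeF v m x = 0 := by
  rw [modeF_eq]
  have : ∀ t, v (Rot t x) = 0 := fun t => h _ (Rot_rho t x) (Rot2 t x)
  simp [this]

lemma modeF_rot (v : E3 → ℂ) (m : ℤ) (x : E3) (s : Circ) :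
    modeF v m (Rot s x) = fourier m s * modeF v m x := by
  rw [modeF_eq, modeF_eq, ← integral_const_mul]
  rw [← integral_add_right_eq_self (μ := hm) (fun t => fourier m s * (fourier (-m) t * v (Rot t x))) s]
  refine integral_congr_ae (Eventually.of_forall fun t => ?_)
  simp only [Rot_add]
  rw [← mul_assoc]
  congr 1
  simp only [fourier_apply, smul_add, AddCircle.toCircle_add, Circle.coe_mul]
  rw [mul_left_comm, ← Circle.coe_mul, ← AddCircle.toCircle_add, neg_smul]
  simp

lemma modeF_ang {v : E3 → ℂ} (hv : ContDiff ℝ 1 v) (m : ℤ) (x : E3) :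
    (x 0 : ℂ) * fderiv ℝ (modeF v m) x (ee 1) - (x 1 : ℂ) * fderiv ℝ (modeF v m) x (ee 0)
      = Complex.I * m * modeF v m x := by
  have hd := (modeF_contDiff hv m).differentiable (by norm_num) x
  have hcur : HasDerivAt (fun s : ℝ => Rot (s : Circ) x) ((2 * π) • RQ x) 0 := by
    have e : (fun s : ℝ => Rot (s : Circ) x) = fun s : ℝ => RP2 x + cos (2 * π * s) • RP x
        + sin (2 * π * s) • RQ x := by
      ext1 s; rw [← rc_coe, ← rs_coe]; rfl
    rw [e]
    have hl : HasDerivAt (fun s : ℝ => 2 * π * s) (2 * π) 0 := by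
      simpa using (hasDerivAt_id (0:ℝ)).const_mul (2 * π)
    have hc : HasDerivAt (fun s : ℝ => cos (2 * π * s)) (-sin (2 * π * 0) * (2 * π)) 0 := hl.cos
    have hs : HasDerivAt (fun s : ℝ => sin (2 * π * s)) (cos (2 * π * 0) * (2 * π)) 0 := hl.sin
    have := ((hc.smul_const (RP x)).const_add (RP2 x)).fun_add (hs.smul_const (RQ x))
    simpa using this
  have h1 : HasDerivAt (fun s : ℝ => modeF v m (Rot (s : Circ) x))
      (fderiv ℝ (modeF v m) x ((2 * π) • RQ x)) 0 := by
    have hx0 : Rot ((0:ℝ) : Circ) x = x := by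
      ext i; fin_cases i
      · simp only [Fin.zero_eta, Rot0, rc_coe, rs_coe]; simp
      · simp only [Fin.mk_one, Rot1, rc_coe, rs_coe]; simp
      · simp only [Fin.reduceFinMk, Rot2]
    have hd' : HasFDerivAt (modeF v m) (fderiv ℝ (modeF v m) x) (Rot ((0:ℝ):Circ) x) := by
      rw [hx0]; exact hd.hasFDerivAt
    exact hd'.comp_hasDerivAt 0 hcur
  have h2 : HasDerivAt (fun s : ℝ => modeF v m (Rot (s : Circ) x))
      (2 * π * Complex.I * m * modeF v m x) 0 := by
    have e : (fun s : ℝ => modeF v m (Rot (s : Circ) x)) = fun s : ℝ => fourier m (s : Circ) * modeF v m x := by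
      ext1 s; exact modeF_rot v m x s
    rw [e]
    have := (hasDerivAt_fourier (1:ℝ) m 0).mul_const (modeF v m x)
    simpa using this
  have h3 := h1.unique h2
  rw [map_smul, RQ_apply, map_sub, map_smul, map_smul] at h3
  have hpi : (2 * (π:ℂ)) ≠ 0 := by simp [Real.pi_ne_zero]
  apply mul_left_cancel₀ hpi
  simp only [Complex.real_smul] at h3
  push_cast at h3
  linear_combination h3

/-- rotated covariant derivative -/
def rotD (B : ℝ) (v : E3 → ℂ) (j : Fin 3) (x : E3) (t : Circ) : ℂ :=
  -Complex.I * fderiv ℝ v (Rot t x) (Rot t (ee j)) + (Avec B x j : ℂ) * v (Rot t x)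

lemma rotD_cont (B : ℝ) {v : E3 → ℂ} (hv : ContDiff ℝ 1 v) (j : Fin 3) (x : E3) :
    Continuous (rotD B v j x) := by
  have h1 : Continuous fun t : Circ => Rot t x := Rot_cont.clm_apply continuous_const
  have h2 : Continuous fun t : Circ => Rot t (ee j) := Rot_cont.clm_apply continuous_const
  have h3 : Continuous fun t : Circ => fderiv ℝ v (Rot t x) :=
    (hv.continuous_fderiv (by norm_num)).comp h1
  have h4 := h3.clm_apply h2
  have h5 := hv.continuous.comp h1
  exact (continuous_const.mul h4).add (continuous_const.mul h5)

lemma circ_int {f : Circ → ℂ} (hf : Continuous f) : Integrable f hm :=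
  hf.integrable_of_hasCompactSupport (HasCompactSupport.of_compactSpace _)

lemma magD_mode (B : ℝ) {v : E3 → ℂ} (hv : ContDiff ℝ 1 v) (m : ℤ) (j : Fin 3) (x : E3) :
    magD B (modeF v m) j x = fourierCoeff (rotD B v j x) m := by
  have h1 : Continuous fun t : Circ => Rot t x := Rot_cont.clm_apply continuous_const
  have h3 : Continuous fun t : Circ => fderiv ℝ v (Rot t x) :=
    (hv.continuous_fderiv (by norm_num)).comp h1
  have hcomp : Continuous fun t : Circ => (fourier (-m) t : ℂ) • (fderiv ℝ v (Rot t x)).comp (Rot t) :=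
    (fourier (-m)).continuous.smul (h3.clm_comp Rot_cont)
  have hci : Integrable (fun t : Circ => (fourier (-m) t : ℂ) • (fderiv ℝ v (Rot t x)).comp (Rot t)) hm :=
    hcomp.integrable_of_hasCompactSupport (HasCompactSupport.of_compactSpace _)
  unfold magD
  rw [((modeF_param hv m).2 x).fderiv, ContinuousLinearMap.integral_apply hci, modeF_eq,
    ← integral_const_mul, ← integral_const_mul, ← integral_add]
  · unfold fourierCoeff rotD
    refine integral_congr_ae (Eventually.of_forall fun t => ?_)
    simp only [_root_.smul_apply, ContinuousLinearMap.comp_apply, smul_eq_mul]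
    ring
  · exact (hci.apply_continuousLinearMap _).const_mul _
  · exact (circ_int ((fourier (-m)).continuous.mul (hv.continuous.comp h1))).const_mul _

lemma rotD_energy (B : ℝ) (v : E3 → ℂ) (x : E3) (t : Circ) :
    ∑ j, ‖rotD B v j x t‖ ^ 2 = magEnergyDensity B v (Rot t x) := by
  have e0 : Rot t (ee 0) = rc t • ee 0 + rs t • ee 1 := by rw [Rot_apply]; simp
  have e1 : Rot t (ee 1) = (-rs t) • ee 0 + rc t • ee 1 := by rw [Rot_apply]; simp; abel
  have e2 : Rot t (ee 2) = ee 2 := by rw [Rot_apply]; simp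
  unfold magEnergyDensity
  simp only [Fin.sum_univ_three]
  have h2 : rotD B v 2 x t = magD B v 2 (Rot t x) := by
    unfold rotD magD; rw [e2]; simp [Avec]
  have h0 : rotD B v 0 x t = rc t * magD B v 0 (Rot t x) + rs t * magD B v 1 (Rot t x) := by
    unfold rotD magD
    rw [e0, map_add, map_smul, map_smul]
    simp only [Avec, Complex.real_smul, Matrix.cons_val_zero, Matrix.cons_val_one, Rot0, Rot1]
    have := congrArg (fun r : ℝ => (r : ℂ)) (rc_rs t)
    push_cast at this ⊢
    linear_combination ((B:ℂ)/2 * (x 1)) * v (Rot t x) * this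
  have h1 : rotD B v 1 x t = (-rs t : ℝ) * magD B v 0 (Rot t x) + rc t * magD B v 1 (Rot t x) := by
    unfold rotD magD
    rw [e1, map_add, map_smul, map_smul]
    simp only [Avec, Complex.real_smul, Matrix.cons_val_zero, Matrix.cons_val_one, Rot0, Rot1]
    have := congrArg (fun r : ℝ => (r : ℂ)) (rc_rs t)
    push_cast at this ⊢
    linear_combination (-(B:ℂ)/2 * (x 0)) * v (Rot t x) * this
  rw [h0, h1, h2]
  simp only [nsq, Complex.add_re, Complex.add_im, Complex.re_ofReal_mul, Complex.im_ofReal_mul]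
  generalize magD B v 0 (Rot t x) = a
  generalize magD B v 1 (Rot t x) = b
  linear_combination (a.re ^ 2 + a.im ^ 2 + b.re ^ 2 + b.im ^ 2) * rc_rs t

lemma parseval {f : Circ → ℂ} (hf : Continuous f) :
    HasSum (fun m : ℤ => ‖fourierCoeff f m‖ ^ 2) (∫ t, ‖f t‖ ^ 2 ∂hm) := by
  have h := hasSum_sq_fourierCoeff (ContinuousMap.toLp (E := ℂ) 2 hm ℂ ⟨f, hf⟩)
  simp only [fourierCoeff_toLp] at h
  have e : ∫ t, ‖f t‖ ^ 2 ∂hm = ∫ t, ‖(ContinuousMap.toLp (E := ℂ) 2 hm ℂ ⟨f, hf⟩) t‖ ^ 2 ∂hm := by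
    refine integral_congr_ae ?_
    filter_upwards [ContinuousMap.coeFn_toLp (E := ℂ) (p := 2) hm (𝕜 := ℂ) ⟨f, hf⟩] with t ht
    rw [ht]; rfl
  rw [e]; exact h

lemma circ_intR {f : Circ → ℝ} (hf : Continuous f) : Integrable f hm :=
  hf.integrable_of_hasCompactSupport (HasCompactSupport.of_compactSpace _)

lemma mode_red (B : ℝ) {v : E3 → ℂ} (hv : ContDiff ℝ 1 v) {w : E3 → ℝ} (hw : Continuous w)
    (hwa : ∀ x y : E3, y 0 ^ 2 + y 1 ^ 2 = x 0 ^ 2 + x 1 ^ 2 → y 2 = x 2 → w y = w x)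
    (h : ∀ m : ℤ, ∫ x in ball3, w x * ‖modeF v m x‖ ^ 2 ≤ ∫ x in ball3, magEnergyDensity B (modeF v m) x) :
    ∫ x in ball3, w x * ‖v x‖ ^ 2 ≤ ∫ x in ball3, magEnergyDensity B v x := by
  obtain ⟨K, hK⟩ := (isCompact_closedBall (0:E3) 1).exists_bound_of_continuousOn hw.continuousOn
  have hrx : ∀ x, Continuous fun t : Circ => Rot t x := fun x => Rot_cont.clm_apply continuous_const
  have hmC := fun m => modeF_contDiff hv m
  have cn := nsq_cont hv
  have ce := magE_cont B hv
  have cnm := fun m => nsq_cont (hmC m)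
  have cem := fun m => magE_cont B (hmC m)
  have ps : ∀ x, HasSum (fun m : ℤ => ‖modeF v m x‖ ^ 2) (∫ t, ‖v (Rot t x)‖ ^ 2 ∂hm) :=
    fun x => parseval (hv.continuous.comp (hrx x))
  have pe : ∀ x, HasSum (fun m : ℤ => magEnergyDensity B (modeF v m) x)
      (∫ t, magEnergyDensity B v (Rot t x) ∂hm) := by
    intro x
    have := hasSum_sum (s := Finset.univ) (f := fun (j : Fin 3) (m : ℤ) => ‖magD B (modeF v m) j x‖ ^ 2)
      (a := fun j => ∫ t, ‖rotD B v j x t‖ ^ 2 ∂hm) (fun j _ => by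
        simp only [magD_mode B hv]; exact parseval (rotD_cont B hv j x))
    have ii : ∀ j, Integrable (fun t => ‖rotD B v j x t‖ ^ 2) hm :=
      fun j => circ_intR ((rotD_cont B hv j x).norm.pow 2)
    rw [← integral_finsetSum _ (fun j _ => ii j)] at this
    simp only [rotD_energy] at this
    exact this
  have cE : Continuous fun x => magEnergyDensity B v x + K * ‖v x‖ ^ 2 := ce.add (continuous_const.mul cn)
  have hpe : ∀ x, HasSum (fun m : ℤ => magEnergyDensity B (modeF v m) x + K * ‖modeF v m x‖ ^ 2)
      (∫ t, (magEnergyDensity B v (Rot t x) + K * ‖v (Rot t x)‖ ^ 2) ∂hm) := by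
    intro x
    have i1 : Integrable (fun t => magEnergyDensity B v (Rot t x)) hm := circ_intR (ce.comp (hrx x))
    have i2 : Integrable (fun t => K * ‖v (Rot t x)‖ ^ 2) hm :=
      circ_intR (continuous_const.mul (cn.comp (hrx x)))
    rw [integral_add i1 i2, integral_const_mul]
    exact (pe x).add ((ps x).mul_left K)
  have hK0 : 0 ≤ K := (norm_nonneg _).trans (hK 0 (by simp))
  have hW0 : ∀ x ∈ ball3, 0 ≤ w x + K := by
    intro x hx
    have := hK x (Metric.ball_subset_closedBall hx)
    rw [Real.norm_eq_abs] at this; linarith [(abs_le.1 this).1]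
  have hK1 : ∀ x ∈ ball3, w x ≤ K := fun x hx =>
    (le_abs_self _).trans (hK x (Metric.ball_subset_closedBall hx))
  have cW : ∀ m, Continuous fun x => (w x + K) * ‖modeF v m x‖ ^ 2 := fun m =>
    (hw.add continuous_const).mul (cnm m)
  have cI : Continuous fun x => ∫ t, (magEnergyDensity B v (Rot t x) + K * ‖v (Rot t x)‖ ^ 2) ∂hm := by
    have := continuous_parametric_integral_of_continuous (μ := hm)
      (f := fun (x : E3) (t : Circ) => magEnergyDensity B v (Rot t x) + K * ‖v (Rot t x)‖ ^ 2)
      (cE.comp rot_joint) isCompact_univ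
    simpa using this
  have fin : ∀ s : Finset ℤ, ∑ m ∈ s, ∫ x in ball3, (w x + K) * ‖modeF v m x‖ ^ 2 ≤
      ∫ x in ball3, (magEnergyDensity B v x + K * ‖v x‖ ^ 2) := by
    intro s
    have c1 : ∀ m, Continuous fun x => magEnergyDensity B (modeF v m) x + K * ‖modeF v m x‖ ^ 2 :=
      fun m => (cem m).add (continuous_const.mul (cnm m))
    calc _ ≤ ∑ m ∈ s, ∫ x in ball3, (magEnergyDensity B (modeF v m) x + K * ‖modeF v m x‖ ^ 2) := by
          refine Finset.sum_le_sum fun m _ => ?_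
          have c2 : Continuous fun x => w x * ‖modeF v m x‖ ^ 2 := hw.mul (cnm m)
          have c3 : Continuous fun x => K * ‖modeF v m x‖ ^ 2 := continuous_const.mul (cnm m)
          simp only [add_mul]
          rw [integral_add (integrableOn_ball c2) (integrableOn_ball c3),
            integral_add (integrableOn_ball (cem m)) (integrableOn_ball c3)]
          linarith [h m]
      _ = ∫ x in ball3, ∑ m ∈ s, (magEnergyDensity B (modeF v m) x + K * ‖modeF v m x‖ ^ 2) := by
          rw [integral_finsetSum _ fun m _ => (integrableOn_ball (c1 m)).integrable]
      _ ≤ ∫ x in ball3, ∫ t, (magEnergyDensity B v (Rot t x) + K * ‖v (Rot t x)‖ ^ 2) ∂hm := by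
          refine setIntegral_mono_on (integrableOn_ball (continuous_finsetSum _ fun m _ => c1 m))
            (integrableOn_ball cI) measurableSet_ball3 fun x _ => ?_
          refine sum_le_hasSum s (fun m _ => ?_) (hpe x)
          have : 0 ≤ magEnergyDensity B (modeF v m) x := Finset.sum_nonneg fun j _ => by positivity
          positivity
      _ = _ := integral_circ_rot cE
  have nn : ∀ m, ∀ x ∈ ball3, 0 ≤ (w x + K) * ‖modeF v m x‖ ^ 2 := fun m x hx =>
    mul_nonneg (hW0 x hx) (by positivity)
  have enorm : ∀ m, ∫ x in ball3, ‖(w x + K) * ‖modeF v m x‖ ^ 2‖ =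
      ∫ x in ball3, (w x + K) * ‖modeF v m x‖ ^ 2 := fun m =>
    setIntegral_congr_fun measurableSet_ball3 fun x hx => Real.norm_of_nonneg (nn m x hx)
  have nn2 : ∀ m, 0 ≤ ∫ x in ball3, (w x + K) * ‖modeF v m x‖ ^ 2 := fun m =>
    setIntegral_nonneg measurableSet_ball3 (nn m)
  have hsum : Summable fun m => ∫ x in ball3, ‖(w x + K) * ‖modeF v m x‖ ^ 2‖ := by
    simp only [enorm]
    exact summable_of_sum_le nn2 fin
  have hs := hasSum_integral_of_summable_integral_norm
    (fun m => (integrableOn_ball (cW m)).integrable) hsum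
  have hle := hasSum_le_of_sum_le hs fin
  have eq1 : ∫ x in ball3, ∑' m, (w x + K) * ‖modeF v m x‖ ^ 2 = ∫ x in ball3, (w x + K) * ‖v x‖ ^ 2 := by
    have c2 : Continuous fun x => (w x + K) * ‖v x‖ ^ 2 := (hw.add continuous_const).mul cn
    rw [← integral_circ_rot c2]
    congr 1; ext1 x
    have : ∀ t, w (Rot t x) = w x := fun t => hwa _ _ (Rot_rho t x) (Rot2 t x)
    simp only [this]
    rw [integral_const_mul, tsum_mul_left, (ps x).tsum_eq]
  rw [eq1] at hle
  have c2 : Continuous fun x => w x * ‖v x‖ ^ 2 := hw.mul cn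
  have c3 : Continuous fun x => K * ‖v x‖ ^ 2 := continuous_const.mul cn
  simp only [add_mul] at hle
  rw [integral_add (integrableOn_ball c2) (integrableOn_ball c3),
    integral_add (integrableOn_ball ce) (integrableOn_ball c3)] at hle
  linarith

def Mi (b τ s : ℝ) : ℝ := s ^ (b - 1) * exp (-2 * τ * s - s ^ 2)
def Mm (b τ : ℝ) : ℝ := ∫ s in Ioi (0:ℝ), Mi b τ s

lemma Mi_le {b τ s K : ℝ} (hs : 0 < s) (hK : |τ| ≤ K) :
    Mi b τ s ≤ exp (2 * K ^ 2) * (s ^ (b - 1) * exp (-(1/2) * s ^ 2)) := by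
  unfold Mi
  have h1 : exp (-2 * τ * s - s ^ 2) ≤ exp (2 * K ^ 2) * exp (-(1/2) * s ^ 2) := by
    rw [← exp_add, exp_le_exp]
    have : τ ^ 2 ≤ K ^ 2 := sq_le_sq' (by linarith [(abs_le.1 hK).1]) (abs_le.1 hK).2
    nlinarith [sq_nonneg (s + 2 * τ)]
  have := mul_le_mul_of_nonneg_left h1 (rpow_nonneg hs.le (b - 1))
  linarith

lemma Mi_cont (b τ : ℝ) : ContinuousOn (Mi b τ) (Ioi 0) := by
  unfold Mi
  refine ContinuousOn.mul ?_ (by fun_prop)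
  exact continuousOn_id.rpow_const fun s hs => Or.inl (ne_of_gt hs)

lemma Mi_dom_int {b : ℝ} (hb : 0 < b) (C : ℝ) :
    IntegrableOn (fun s : ℝ => C * (s ^ (b - 1) * exp (-(1/2) * s ^ 2))) (Ioi 0) :=
  (integrableOn_rpow_mul_exp_neg_mul_sq (b := 1/2) (by norm_num) (s := b - 1) (by linarith)).const_mul C

lemma Mi_int {b : ℝ} (hb : 0 < b) (τ : ℝ) : IntegrableOn (Mi b τ) (Ioi 0) := by
  refine Integrable.mono' (Mi_dom_int hb (exp (2 * |τ| ^ 2)))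
    ((Mi_cont b τ).aestronglyMeasurable measurableSet_Ioi) ?_
  filter_upwards [ae_restrict_mem measurableSet_Ioi] with s hs
  have hs' : 0 < s := hs
  rw [Real.norm_of_nonneg (by unfold Mi; positivity)]
  exact Mi_le hs' le_rfl

lemma Mm_pos {b : ℝ} (hb : 0 < b) (τ : ℝ) : 0 < Mm b τ := by
  unfold Mm
  rw [setIntegral_pos_iff_support_of_nonneg_ae]
  · have : Ioi (0:ℝ) ⊆ Function.support (Mi b τ) ∩ Ioi 0 := by
      intro s hs
      have hs' : 0 < s := hs
      exact ⟨ne_of_gt (by unfold Mi; positivity), hs⟩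
    refine lt_of_lt_of_le ?_ (measure_mono this)
    simp
  · filter_upwards [ae_restrict_mem measurableSet_Ioi] with s hs
    have hs' : 0 < s := hs
    simp only [Pi.zero_apply]; unfold Mi; positivity
  · exact Mi_int hb τ

lemma Mm_hasDeriv {b : ℝ} (hb : 0 < b) (τ : ℝ) : HasDerivAt (Mm b) (-2 * Mm (b + 1) τ) τ := by
  have hder : ∀ s ∈ Ioi (0:ℝ), ∀ t, HasDerivAt (fun t => Mi b t s) (-2 * Mi (b + 1) t s) t := by
    intro s hs t
    have hs' : 0 < s := hs
    have h1 : HasDerivAt (fun t : ℝ => -2 * t * s - s ^ 2) (-2 * s) t := by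
      simpa using ((((hasDerivAt_id t).const_mul (-2)).mul_const s).sub_const (s ^ 2))
    have h2 := (h1.exp).const_mul (s ^ (b - 1))
    have e : s ^ (b + 1 - 1) = s ^ (b - 1) * s := by
      rw [← rpow_add_one hs'.ne']; congr 1; ring
    unfold Mi; rw [e]
    exact h2.congr_deriv (by ring)
  have := hasDerivAt_integral_of_dominated_loc_of_deriv_le (μ := volume.restrict (Ioi (0:ℝ)))
    (F := fun t s => Mi b t s) (F' := fun t s => -2 * Mi (b + 1) t s) (x₀ := τ) (s := Metric.ball τ 1)
    (bound := fun s => 2 * (exp (2 * (|τ| + 1) ^ 2) * (s ^ (b + 1 - 1) * exp (-(1/2) * s ^ 2))))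
    (Metric.ball_mem_nhds τ one_pos)
    (Eventually.of_forall fun t => (Mi_cont b t).aestronglyMeasurable measurableSet_Ioi)
    (Mi_int hb τ)
    (((Mi_cont (b + 1) τ).aestronglyMeasurable measurableSet_Ioi).const_mul _)
    (by
      filter_upwards [ae_restrict_mem measurableSet_Ioi] with s hs t ht
      have hs' : 0 < s := hs
      have h0 : 0 ≤ Mi (b + 1) t s := by unfold Mi; positivity
      rw [norm_mul, Real.norm_of_nonneg h0]
      have hK : |t| ≤ |τ| + 1 := by
        have h1 : |t - τ| < 1 := by simpa [Real.dist_eq] using ht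
        have h2 := abs_sub_abs_le_abs_sub t τ
        linarith
      have := Mi_le (b := b + 1) hs' hK
      norm_num at this ⊢
      linarith)
    ((Mi_dom_int (b := b + 1) (by linarith) _).const_mul 2)
    (by
      filter_upwards [ae_restrict_mem measurableSet_Ioi] with s hs t ht
      exact hder s hs t)
  have h2 := this.2
  rw [integral_const_mul] at h2
  exact h2

lemma Mm_rec {b : ℝ} (hb : 0 < b) (τ : ℝ) : b * Mm b τ = 2 * τ * Mm (b + 1) τ + 2 * Mm (b + 2) τ := by
  set f : ℝ → ℝ := fun s => s ^ b * exp (-2 * τ * s - s ^ 2) with hf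
  have hder : ∀ s ∈ Ioi (0:ℝ), HasDerivAt f (b * Mi b τ s - 2 * τ * Mi (b + 1) τ s - 2 * Mi (b + 2) τ s) s := by
    intro s hs
    have hs' : 0 < s := hs
    have h1 : HasDerivAt (fun s : ℝ => -2 * τ * s - s ^ 2) (-2 * τ - 2 * s) s := by
      simpa using ((hasDerivAt_id s).const_mul (-2 * τ)).fun_sub (hasDerivAt_pow 2 s)
    have h2 := (Real.hasDerivAt_rpow_const (p := b) (Or.inl hs'.ne')).mul h1.exp
    have e1 : s ^ (b + 1 - 1) = s ^ b := by congr 1; ring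
    have e2 : s ^ (b + 2 - 1) = s ^ b * s := by
      rw [← rpow_add_one hs'.ne']; congr 1; ring
    unfold Mi; rw [e1, e2]
    exact h2.congr_deriv (by ring)
  have hi : IntegrableOn (fun s => b * Mi b τ s - 2 * τ * Mi (b + 1) τ s - 2 * Mi (b + 2) τ s) (Ioi 0) :=
    (((Mi_int hb τ).const_mul b).sub ((Mi_int (by linarith : 0 < b + 1) τ).const_mul (2 * τ))).sub
      ((Mi_int (by linarith : 0 < b + 2) τ).const_mul 2)
  have hc : ContinuousWithinAt f (Ici 0) 0 := by
    refine ContinuousAt.continuousWithinAt ?_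
    exact (continuousAt_id.rpow_const (Or.inr hb.le)).mul (by fun_prop)
  have ht : Tendsto f atTop (𝓝 0) := by
    have hT : Tendsto (fun s : ℝ => exp (2 * |τ| ^ 2) * (s ^ b * exp (-(1/2) * s))) atTop (𝓝 0) := by
      have := tendsto_rpow_mul_exp_neg_mul_atTop_nhds_zero b (1/2) (by norm_num)
      have h9 := this.const_mul (exp (2 * |τ| ^ 2))
      rw [mul_zero] at h9; exact h9
    refine squeeze_zero' ?_ ?_ hT
    · filter_upwards [eventually_gt_atTop 0] with s hs
      simp only [hf]; positivity
    · filter_upwards [eventually_ge_atTop 1] with s hs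
      have hs' : 0 < s := by linarith
      have := Mi_le (b := b + 1) hs' (le_refl |τ|)
      unfold Mi at this
      rw [add_sub_cancel_right] at this
      refine this.trans ?_
      have h3 : exp (-(1/2) * s ^ 2) ≤ exp (-(1/2) * s) := by
        rw [exp_le_exp]; nlinarith
      gcongr
  have := integral_Ioi_of_hasDerivAt_of_tendsto hc hder hi ht
  have i1 := (Mi_int hb τ).const_mul b
  have i2 := (Mi_int (by linarith : 0 < b + 1) τ).const_mul (2 * τ)
  have i3 := (Mi_int (by linarith : 0 < b + 2) τ).const_mul 2
  have i4 : Integrable (fun s => b * Mi b τ s - 2 * τ * Mi (b + 1) τ s) (volume.restrict (Ioi 0)) := i1.sub i2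
  rw [integral_sub i4 i3, integral_sub i1 i2, integral_const_mul, integral_const_mul,
    integral_const_mul] at this
  have hf0 : f 0 = 0 := by simp [hf, hb.ne']
  rw [hf0] at this
  unfold Mm; linarith

lemma Mm_cs {b : ℝ} (hb : 0 < b) (τ : ℝ) : Mm (b + 1) τ ^ 2 ≤ Mm b τ * Mm (b + 2) τ := by
  have key : ∀ x : ℝ, 0 ≤ Mm b τ * (x * x) + (-2 * Mm (b + 1) τ) * x + Mm (b + 2) τ := by
    intro x
    have i1 := (Mi_int hb τ).const_mul (x * x)
    have i2 := (Mi_int (by linarith : 0 < b + 1) τ).const_mul (-2 * x)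
    have i3 := (Mi_int (by linarith : 0 < b + 2) τ)
    have : 0 ≤ ∫ s in Ioi (0:ℝ), ((x * x) * Mi b τ s + (-2 * x) * Mi (b + 1) τ s + Mi (b + 2) τ s) := by
      refine setIntegral_nonneg measurableSet_Ioi fun s hs => ?_
      have hs' : 0 < s := hs
      have e1 : s ^ (b + 1 - 1) = s ^ (b - 1) * s := by
        rw [← rpow_add_one hs'.ne']; congr 1; ring
      have e2 : s ^ (b + 2 - 1) = s ^ (b - 1) * s * s := by
        rw [← rpow_add_one hs'.ne', ← rpow_add_one hs'.ne']; congr 1; ring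
      unfold Mi; rw [e1, e2]
      have : 0 ≤ (s ^ (b - 1) * exp (-2 * τ * s - s ^ 2)) * (x - s) ^ 2 := by positivity
      linarith
    have i4 : Integrable (fun s => (x * x) * Mi b τ s + (-2 * x) * Mi (b + 1) τ s) (volume.restrict (Ioi 0)) := i1.add i2
    rw [integral_add i4 i3, integral_add i1 i2, integral_const_mul, integral_const_mul] at this
    unfold Mm; linarith
  have := discrim_le_zero key
  unfold discrim at this
  nlinarith

lemma deGennes_nonneg (ξ : ℝ) : 0 ≤ deGennes ξ := by
  unfold deGennes
  refine Real.sInf_nonneg ?_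
  rintro q ⟨u, -, -, -, h, rfl⟩
  refine div_nonneg (integral_nonneg fun t => by positivity) h.le

lemma Theta0_nonneg : 0 ≤ Theta0 := Real.iInf_nonneg deGennes_nonneg

lemma theta_le {w w' : ℝ → ℝ} (ξ : ℝ) (hw : ∀ t, HasDerivAt w (w' t) t) (hc : Continuous w')
    (i1 : IntegrableOn (fun t => w t ^ 2) (Ioi 0))
    (i2 : IntegrableOn (fun t => w' t ^ 2 + (t + ξ) ^ 2 * w t ^ 2) (Ioi 0))
    (hp : 0 < ∫ t in Ioi (0:ℝ), w t ^ 2) :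
    Theta0 * (∫ t in Ioi (0:ℝ), w t ^ 2) ≤ ∫ t in Ioi (0:ℝ), (w' t ^ 2 + (t + ξ) ^ 2 * w t ^ 2) := by
  have hd : ∀ t, HasDerivAt (fun t => (w t : ℂ)) (w' t : ℂ) t := fun t => (hw t).ofReal_comp
  have e1 : ∀ t, ‖(w t : ℂ)‖ ^ 2 = w t ^ 2 := fun t => by simp
  have e2 : ∀ t, ‖deriv (fun t => (w t : ℂ)) t‖ ^ 2 = w' t ^ 2 := fun t => by
    rw [(hd t).deriv]; simp
  have h1 : Theta0 ≤ deGennes ξ := ciInf_le ⟨0, by rintro _ ⟨y, rfl⟩; exact deGennes_nonneg y⟩ ξ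
  have h2 : deGennes ξ ≤ (∫ t in Ioi (0:ℝ), (w' t ^ 2 + (t + ξ) ^ 2 * w t ^ 2)) / ∫ t in Ioi (0:ℝ), w t ^ 2 := by
    unfold deGennes
    refine csInf_le ⟨0, ?_⟩ ⟨fun t => (w t : ℂ), ?_, ?_, ?_, ?_, ?_⟩
    · rintro q ⟨u, -, -, -, h, rfl⟩
      exact div_nonneg (integral_nonneg fun t => by positivity) h.le
    · rw [contDiff_one_iff_deriv]
      refine ⟨fun t => (hd t).differentiableAt, ?_⟩
      rw [show deriv (fun t => (w t : ℂ)) = fun t => (w' t : ℂ) from funext fun t => (hd t).deriv]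
      exact Complex.continuous_ofReal.comp hc
    · simpa only [e1] using i1
    · simpa only [e1, e2] using i2
    · simpa only [e1] using hp
    · simp only [e1, e2]
  have := h1.trans h2
  rwa [le_div_iff₀ hp] at this

lemma gauss_dom (τ : ℝ) : (1 + |τ|) ^ 2 * exp (-τ ^ 2) ≤ 4 * exp (-(1/2) * τ ^ 2) := by
  have h1 : (1 + |τ|) ^ 2 ≤ 4 * exp (τ ^ 2 / 2) := by
    have := add_one_le_exp (τ ^ 2 / 2)
    nlinarith [sq_abs τ, sq_nonneg (|τ| - 1)]
  calc _ ≤ 4 * exp (τ ^ 2 / 2) * exp (-τ ^ 2) := by gcongr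
    _ = _ := by rw [mul_assoc, ← exp_add]; congr 2; ring

lemma gauss_int (ξ C : ℝ) : IntegrableOn (fun t : ℝ => C * exp (-(1/2) * (t + ξ) ^ 2)) (Ioi 0) :=
  (((integrable_exp_neg_mul_sq (b := 1/2) (by norm_num)).comp_add_right ξ).const_mul C).integrableOn

lemma gauss_tendsto (ξ C : ℝ) : Tendsto (fun t : ℝ => C * exp (-(1/2) * (t + ξ) ^ 2)) atTop (𝓝 0) := by
  have h1 : Tendsto (fun t : ℝ => -(1/2) * (t + ξ) ^ 2) atTop atBot := by
    refine Tendsto.const_mul_atTop_of_neg (by norm_num) ?_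
    exact (tendsto_pow_atTop two_ne_zero).comp (tendsto_atTop_add_const_right _ _ tendsto_id)
  have := (tendsto_exp_atBot.comp h1).const_mul C
  rw [mul_zero] at this; exact this

/-- generic contradiction/virial lemma -/
lemma test_fun {u u' g : ℝ → ℝ} (ξ Θ K f0 : ℝ) (hu : ∀ t, HasDerivAt u (u' t) t) (hc : Continuous u')
    (hg : ∀ t, HasDerivAt g (u' t ^ 2 + (t + ξ) ^ 2 * u t ^ 2 - Θ * u t ^ 2) t)
    (b1 : ∀ t, 0 < t → |u t| ≤ K * exp (-((t + ξ) ^ 2 / 2)))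
    (b2 : ∀ t, 0 < t → |u' t| ≤ K * (1 + |t + ξ|) * exp (-((t + ξ) ^ 2 / 2)))
    (b3 : Tendsto g atTop (𝓝 f0)) :
    IntegrableOn (fun t => u t ^ 2) (Ioi 0) ∧
    IntegrableOn (fun t => u' t ^ 2 + (t + ξ) ^ 2 * u t ^ 2) (Ioi 0) ∧
    (∫ t in Ioi (0:ℝ), (u' t ^ 2 + (t + ξ) ^ 2 * u t ^ 2)) - Θ * (∫ t in Ioi (0:ℝ), u t ^ 2) = f0 - g 0 := by
  have huc : Continuous u := continuous_iff_continuousAt.2 fun t => (hu t).continuousAt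
  have ee : ∀ t : ℝ, exp (-((t + ξ) ^ 2 / 2)) ^ 2 = exp (-(t + ξ) ^ 2) := fun t => by
    rw [← exp_nat_mul]; congr 1; push_cast; ring
  have d1 : ∀ t, 0 < t → u t ^ 2 ≤ K ^ 2 * exp (-(t + ξ) ^ 2) := fun t ht => by
    rw [← ee, ← mul_pow, ← sq_abs]
    exact pow_le_pow_left₀ (abs_nonneg _) (b1 t ht) 2
  have d2 : ∀ t, 0 < t → u' t ^ 2 ≤ K ^ 2 * ((1 + |t + ξ|) ^ 2 * exp (-(t + ξ) ^ 2)) := fun t ht => by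
    rw [← ee, ← mul_assoc, ← mul_pow, ← mul_pow, ← sq_abs]
    exact pow_le_pow_left₀ (abs_nonneg _) (b2 t ht) 2
  have one_le : ∀ t, exp (-(t + ξ) ^ 2) ≤ (1 + |t + ξ|) ^ 2 * exp (-(t + ξ) ^ 2) := fun t => by
    have : (1:ℝ) ≤ (1 + |t + ξ|) ^ 2 := by nlinarith [abs_nonneg (t + ξ)]
    nlinarith [exp_pos (-(t + ξ) ^ 2)]
  have i1 : IntegrableOn (fun t => u t ^ 2) (Ioi 0) := by
    refine Integrable.mono' (gauss_int ξ (K ^ 2 * 4)) (huc.pow 2).aestronglyMeasurable ?_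
    filter_upwards [ae_restrict_mem measurableSet_Ioi] with t ht
    rw [Real.norm_of_nonneg (sq_nonneg _)]
    have := d1 t ht
    have h2 := gauss_dom (t + ξ)
    have h3 := one_le t
    nlinarith [sq_nonneg K]
  have i2 : IntegrableOn (fun t => u' t ^ 2 + (t + ξ) ^ 2 * u t ^ 2) (Ioi 0) := by
    refine Integrable.mono' (gauss_int ξ (K ^ 2 * 8)) (by fun_prop) ?_
    filter_upwards [ae_restrict_mem measurableSet_Ioi] with t ht
    rw [Real.norm_of_nonneg (by positivity)]
    have h1 := d1 t ht
    have h2 := d2 t ht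
    have h3 := gauss_dom (t + ξ)
    have h5 : (t + ξ) ^ 2 ≤ (1 + |t + ξ|) ^ 2 := by nlinarith [abs_nonneg (t + ξ), sq_abs (t + ξ)]
    have h4 : (t + ξ) ^ 2 * u t ^ 2 ≤ (1 + |t + ξ|) ^ 2 * (K ^ 2 * exp (-(t + ξ) ^ 2)) := by gcongr
    nlinarith [sq_nonneg K]
  refine ⟨i1, i2, ?_⟩
  have := integral_Ioi_of_hasDerivAt_of_tendsto (hg 0).continuousAt.continuousWithinAt
    (fun t _ => hg t) (i2.sub (i1.const_mul Θ)) b3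
  rw [integral_sub i2 (i1.const_mul Θ), integral_const_mul] at this
  exact this

lemma sq_int_pos {u : ℝ → ℝ} (hu : ∀ t, u t ≠ 0) (i : IntegrableOn (fun t => u t ^ 2) (Ioi 0)) :
    0 < ∫ t in Ioi (0:ℝ), u t ^ 2 := by
  rw [setIntegral_pos_iff_support_of_nonneg_ae (ae_of_all _ fun t => sq_nonneg _) i]
  have : Function.support (fun t => u t ^ 2) = univ := by
    ext t; simp [hu t]
  rw [this]; simp

lemma Theta0_le : Theta0 ≤ 3 / 4 := by
  have hu : ∀ t : ℝ, HasDerivAt (fun t : ℝ => exp (-(t ^ 2 / 2))) (-t * exp (-(t ^ 2 / 2))) t := fun t => by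
    have h := (((hasDerivAt_pow 2 t).div_const 2).neg).exp
    refine h.congr_deriv ?_
    simp; ring
  have es : ∀ t : ℝ, exp (-(t ^ 2 / 2)) ^ 2 = exp (-t ^ 2) := fun t => by
    rw [← exp_nat_mul]; congr 1; push_cast; ring
  have hg : ∀ t : ℝ, HasDerivAt (fun t : ℝ => (1 / 2 - t) * exp (-t ^ 2))
      ((-t * exp (-(t ^ 2 / 2))) ^ 2 + (t + -(1/2)) ^ 2 * exp (-(t ^ 2 / 2)) ^ 2 - 5 / 4 * exp (-(t ^ 2 / 2)) ^ 2) t := fun t => by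
    have h := (((hasDerivAt_id t).const_sub (1/2)).fun_mul ((hasDerivAt_pow 2 t).neg).exp)
    refine h.congr_deriv ?_
    rw [mul_pow, es]; simp; ring
  have hx : exp (1/8) ≤ 2 := by
    have h := exp_one_lt_d9
    have h2 : exp (1/8) ^ 8 = exp 1 := by rw [← exp_nat_mul]; norm_num
    by_contra hh; push Not at hh
    have : (2:ℝ) ^ 8 < exp (1/8) ^ 8 := pow_lt_pow_left₀ hh (by norm_num) (by norm_num)
    rw [h2] at this; norm_num at this; linarith
  have hb : ∀ t : ℝ, 0 < t → exp (-(t ^ 2 / 2)) ≤ 2 * exp (-((t + -(1/2)) ^ 2 / 2)) := fun t ht => by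
    calc exp (-(t ^ 2 / 2)) ≤ exp (1/8) * exp (-((t + -(1/2)) ^ 2 / 2)) := by
          rw [← exp_add, exp_le_exp]; nlinarith
      _ ≤ _ := by gcongr
  obtain ⟨i1, i2, e⟩ := test_fun (-(1/2)) (5/4) 2 0 hu (by fun_prop) hg
    (fun t ht => by rw [abs_of_pos (exp_pos _)]; exact hb t ht)
    (fun t ht => by
      rw [abs_mul, abs_of_pos (exp_pos _), abs_neg, abs_of_pos ht]
      have h1 : t ≤ 1 + |t + -(1/2)| := by linarith [le_abs_self (t + -(1/2))]
      have h2 := hb t ht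
      calc _ ≤ (1 + |t + -(1/2)|) * (2 * exp (-((t + -(1/2)) ^ 2 / 2))) := by gcongr
        _ = _ := by ring)
    (by
      refine squeeze_zero_norm' ?_ (gauss_tendsto 0 4)
      filter_upwards with t
      rw [norm_mul, Real.norm_of_nonneg (exp_pos _).le, add_zero]
      refine le_trans ?_ (gauss_dom t)
      gcongr
      rw [Real.norm_eq_abs]
      have : |1/2 - t| ≤ |1/2| + |t| := abs_sub _ _
      have h2 : |(1/2:ℝ)| = 1/2 := by norm_num
      nlinarith [abs_nonneg t])
  have hI : ∫ t in Ioi (0:ℝ), exp (-(t ^ 2 / 2)) ^ 2 = sqrt π / 2 := by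
    have := integral_gaussian_Ioi 1
    rw [div_one] at this
    rw [← this]; simp only [es, neg_mul, one_mul]
  have hsp : 0 < sqrt π := sqrt_pos.2 pi_pos
  have hs2 : sqrt π ≤ 2 := by rw [sqrt_le_left (by norm_num)]; linarith [pi_le_four]
  have h1 := theta_le (-(1/2)) hu (by fun_prop) i1 i2 (by rw [hI]; positivity)
  rw [hI] at h1 e
  have e' : _ - _ = (0:ℝ) - (1 / 2 - 0) * exp (-0 ^ 2) := e
  norm_num at e'
  norm_num at h1
  nlinarith

lemma R_core : ∃ R : ℝ → ℝ, (∀ τ, HasDerivAt R (τ ^ 2 - Theta0 - R τ ^ 2) τ) ∧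
    (∀ τ, R τ ^ 2 ≤ τ ^ 2 + 1 - Theta0) ∧ (∀ τ, R τ < -τ) ∧ (∀ τ, R τ ≤ 0) := by
  set a := (1 - Theta0) / 2 with ha
  have ha0 : 0 < a := by have := Theta0_le; linarith
  set F := Mm a with hF
  set G : ℝ → ℝ := fun τ => -2 * Mm (a + 1) τ with hG
  have hFd : ∀ τ, HasDerivAt F (G τ) τ := fun τ => Mm_hasDeriv ha0 τ
  have hGd : ∀ τ, HasDerivAt G (2 * τ * G τ + 2 * a * F τ) τ := fun τ => by
    refine ((Mm_hasDeriv (by linarith : 0 < a + 1) τ).const_mul (-2)).congr_deriv ?_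
    rw [show a + 1 + 1 = a + 2 by ring]
    have := Mm_rec ha0 τ
    simp only [hG, hF]; linarith
  have hFp : ∀ τ, 0 < F τ := fun τ => Mm_pos ha0 τ
  have hGn : ∀ τ, G τ < 0 := fun τ => by
    have := Mm_pos (by linarith : 0 < a + 1) τ
    simp only [hG]; linarith
  have hcs : ∀ τ, G τ ^ 2 ≤ F τ * (2 * τ * G τ + 2 * a * F τ) := fun τ => by
    have h1 := Mm_rec ha0 τ
    have h2 := Mm_cs ha0 τ
    have h3 : 2 * τ * G τ + 2 * a * F τ = 4 * Mm (a + 2) τ := by simp only [hG, hF]; linarith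
    rw [h3]; simp only [hG, hF]; linarith
  set R : ℝ → ℝ := fun τ => -τ + G τ / F τ with hR
  have hRF : ∀ τ, (R τ + τ) * F τ = G τ := fun τ => by
    have := (hFp τ).ne'
    simp only [hR]; field_simp; ring
  have hRd : ∀ τ, HasDerivAt R (τ ^ 2 - Theta0 - R τ ^ 2) τ := fun τ => by
    have h := ((hasDerivAt_id τ).neg).fun_add ((hGd τ).fun_div (hFd τ) (hFp τ).ne')
    refine h.congr_deriv ?_
    rw [show Theta0 = 1 - 2 * a by rw [ha]; ring]
    have := (hFp τ).ne'
    simp only [hR]; field_simp; ring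
  refine ⟨R, hRd, fun τ => ?_, fun τ => ?_, fun ξ => ?_⟩
  · have h1 : τ ^ 2 + 1 - Theta0 - R τ ^ 2 = (F τ * (2 * τ * G τ + 2 * a * F τ) - G τ ^ 2) / F τ ^ 2 := by
      rw [show Theta0 = 1 - 2 * a by rw [ha]; ring]
      have := (hFp τ).ne'
      simp only [hR]; field_simp; ring
    have h2 : 0 ≤ (F τ * (2 * τ * G τ + 2 * a * F τ) - G τ ^ 2) / F τ ^ 2 :=
      div_nonneg (by linarith [hcs τ]) (sq_nonneg _)
    linarith
  · have := div_neg_of_neg_of_pos (hGn τ) (hFp τ)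
    simp only [hR]; linarith
  · by_contra hpos
    push Not at hpos
    have hFa : Antitone F := antitone_of_deriv_nonpos (fun t => (hFd t).differentiableAt)
      fun t => by rw [(hFd t).deriv]; exact (hGn t).le
    have hGm : Monotone G := monotone_of_deriv_nonneg (fun t => (hGd t).differentiableAt)
      fun t => by
        rw [(hGd t).deriv]
        have h1 := hcs t
        have h2 := hFp t
        by_contra h; push Not at h
        nlinarith [sq_nonneg (G t)]
    set u : ℝ → ℝ := fun t => exp (-((t + ξ) ^ 2 / 2)) * F (t + ξ) with hu
    set u' : ℝ → ℝ := fun t => R (t + ξ) * u t with hu'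
    have hE : ∀ t : ℝ, HasDerivAt (fun t : ℝ => exp (-((t + ξ) ^ 2 / 2))) (-(t + ξ) * exp (-((t + ξ) ^ 2 / 2))) t := fun t => by
      have h := (((((hasDerivAt_id t).add_const ξ).pow 2).div_const 2).neg).exp
      refine h.congr_deriv ?_
      simp; ring
    have hud : ∀ t, HasDerivAt u (u' t) t := fun t => by
      refine ((hE t).fun_mul ((hFd (t + ξ)).comp_add_const t ξ)).congr_deriv ?_
      simp only [hu', hu]; rw [← hRF (t + ξ)]; ring
    have hRs : ∀ t, HasDerivAt (fun t => R (t + ξ)) ((t + ξ) ^ 2 - Theta0 - R (t + ξ) ^ 2) t :=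
      fun t => (hRd (t + ξ)).comp_add_const t ξ
    have huc : Continuous u := continuous_iff_continuousAt.2 fun t => (hud t).continuousAt
    have hRc : Continuous (fun t => R (t + ξ)) := continuous_iff_continuousAt.2 fun t => (hRs t).continuousAt
    have hc' : Continuous u' := hRc.mul huc
    set K := F ξ - G ξ with hK
    have hK1 : F ξ ≤ K := by linarith [hGn ξ]
    have b1 : ∀ t, 0 < t → |u t| ≤ K * exp (-((t + ξ) ^ 2 / 2)) := fun t ht => by
      have h1 : F (t + ξ) ≤ K := (hFa (by linarith)).trans hK1
      have h2 := hFp (t + ξ)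
      rw [abs_of_pos (by simp only [hu]; positivity)]
      simp only [hu]; rw [mul_comm]; gcongr
    have b2 : ∀ t, 0 < t → |u' t| ≤ K * (1 + |t + ξ|) * exp (-((t + ξ) ^ 2 / 2)) := fun t ht => by
      have h1 : F (t + ξ) ≤ F ξ := (hFa (by linarith))
      have h2 : G ξ ≤ G (t + ξ) := (hGm (by linarith))
      have h3 : u' t = (G (t + ξ) - (t + ξ) * F (t + ξ)) * exp (-((t + ξ) ^ 2 / 2)) := by
        rw [← hRF (t + ξ)]; simp only [hu', hu]; ring
      rw [h3, abs_mul, abs_of_pos (exp_pos _)]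
      gcongr
      calc _ ≤ |G (t + ξ)| + |(t + ξ) * F (t + ξ)| := abs_sub _ _
        _ ≤ K * 1 + |t + ξ| * K := by
          rw [abs_mul (t + ξ), abs_of_neg (hGn _), abs_of_pos (hFp (t + ξ))]
          gcongr
          · linarith [hFp ξ]
          · linarith
        _ = _ := by ring
    have hKp : 0 ≤ K := by linarith [hFp ξ]
    obtain ⟨i1, i2, e⟩ := test_fun (g := fun t => u t * u' t) ξ Theta0 K 0 hud hc' (fun t => by
        refine ((hud t).fun_mul ((hRs t).fun_mul (hud t))).congr_deriv ?_
        simp only [hu']; ring) b1 b2 (by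
        refine squeeze_zero_norm' ?_ (gauss_tendsto ξ (K ^ 2 * 4))
        filter_upwards [eventually_gt_atTop 0] with t ht
        rw [norm_mul]
        have h1 := b1 t ht
        have h2 := b2 t ht
        have h3 := gauss_dom (t + ξ)
        have h6 : exp (-((t + ξ) ^ 2 / 2)) * exp (-((t + ξ) ^ 2 / 2)) = exp (-(t + ξ) ^ 2) := by
          rw [← exp_add]; congr 1; ring
        calc _ ≤ (K * exp (-((t + ξ) ^ 2 / 2))) * (K * (1 + |t + ξ|) * exp (-((t + ξ) ^ 2 / 2))) := by
              simp only [Real.norm_eq_abs]; gcongr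
          _ = K ^ 2 * ((1 + |t + ξ|) * exp (-(t + ξ) ^ 2)) := by rw [← h6]; ring
          _ ≤ K ^ 2 * ((1 + |t + ξ|) ^ 2 * exp (-(t + ξ) ^ 2)) := by
              have : (1 + |t + ξ|) ≤ (1 + |t + ξ|) ^ 2 := by nlinarith [abs_nonneg (t + ξ)]
              gcongr
          _ ≤ _ := by nlinarith [sq_nonneg K])
    have h1 := theta_le ξ hud hc' i1 i2 (sq_int_pos (fun t => by
      simp only [hu]; exact mul_ne_zero (exp_pos _).ne' (hFp _).ne') i1)
    have h2 : 0 < u 0 * u' 0 := by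
      have h3 : 0 < u 0 := by simp only [hu]; exact mul_pos (exp_pos _) (hFp _)
      have : 0 < u' 0 := by simp only [hu', zero_add]; positivity
      positivity
    have e' : _ - _ = 0 - u 0 * u' 0 := e
    linarith

lemma R_lin {R : ℝ → ℝ} (hd : ∀ τ, HasDerivAt R (τ ^ 2 - Theta0 - R τ ^ 2) τ)
    (h1 : ∀ τ, R τ < -τ) (h0 : ∀ τ, R τ ≤ 0) (τ : ℝ) : |τ| / 2 - 2 ≤ -R τ := by
  rcases le_or_gt 0 τ with hτ | hτ
  · rw [abs_of_nonneg hτ]; linarith [h1 τ]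
  rw [abs_of_neg hτ]
  by_contra hcon
  push Not at hcon
  have h4 : τ < -4 := by linarith [h0 τ]
  have hRt : τ / 2 < R τ := by linarith
  have hT := Theta0_le
  have hc : Continuous R := continuous_iff_continuousAt.2 fun t => (hd t).continuousAt
  have hlow : ∀ t ∈ Icc τ (τ + 1), τ / 2 ≤ R t := by
    intro t ht
    have := image_le_of_deriv_right_lt_deriv_boundary (f := fun t => -R t) (f' := fun t => -(t ^ 2 - Theta0 - R t ^ 2))
      (a := τ) (b := τ + 1) (B := fun _ => -(τ / 2)) (B' := fun _ => 0) hc.neg.continuousOn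
      (fun x _ => ((hd x).neg).hasDerivWithinAt) (by linarith) (fun x => hasDerivAt_const x _)
      (fun x hx he => by
        have h5 : R x = τ / 2 := by linarith
        have h6 : (τ + 1) ^ 2 ≤ x ^ 2 := by nlinarith [hx.1, hx.2]
        rw [h5]; nlinarith) ht
    linarith
  have hm : ∀ t ∈ Ioo τ (τ + 1), 3 / 4 * τ ^ 2 + 2 * τ ≤ deriv R t := by
    intro t ht
    rw [(hd t).deriv]
    have h5 := hlow t ⟨ht.1.le, ht.2.le⟩
    have h6 : (τ + 1) ^ 2 ≤ t ^ 2 := by nlinarith [ht.1, ht.2]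
    have h7 : R t ^ 2 ≤ (τ / 2) ^ 2 := by nlinarith [h0 t]
    nlinarith
  have := (convex_Icc τ (τ + 1)).mul_sub_le_image_sub_of_le_deriv hc.continuousOn
    (fun t _ => (hd t).differentiableAt.differentiableWithinAt) (by rw [interior_Icc]; exact hm)
    τ (left_mem_Icc.2 (by linarith)) (τ + 1) (right_mem_Icc.2 (by linarith)) (by linarith)
  nlinarith [h0 (τ + 1)]

lemma R_full : ∃ (R : ℝ → ℝ) (ξ₀ c₁ : ℝ), 0 < c₁ ∧ (∀ τ, HasDerivAt R (τ ^ 2 - Theta0 - R τ ^ 2) τ) ∧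
    (∀ τ, R τ ^ 2 ≤ τ ^ 2 + 1 - Theta0) ∧ (∀ τ, R τ ≤ 0) ∧ (∀ τ, |τ| / 2 - 2 ≤ -R τ) ∧
    (∀ τ, c₁ * ((τ - ξ₀) ^ 2 / (1 + (τ - ξ₀) ^ 2)) ≤ -R τ) := by
  obtain ⟨R, hd, hu, h1, h0⟩ := R_core
  have hlin := R_lin hd h1 h0
  have hc : Continuous R := continuous_iff_continuousAt.2 fun t => (hd t).continuousAt
  set ξ₀ := -sqrt Theta0 with hξ
  have hξ2 : ξ₀ ^ 2 = Theta0 := by rw [hξ, neg_sq, sq_sqrt Theta0_nonneg]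
  have hz : ∀ τ, R τ = 0 → τ = ξ₀ := by
    intro τ hτ
    have hm : IsLocalMax R τ := Eventually.of_forall fun t => by rw [hτ]; exact h0 t
    have h2 := hm.hasDerivAt_eq_zero (hd τ)
    rw [hτ] at h2
    have h3 := h1 τ
    rw [hτ] at h3
    have h4 : τ ^ 2 = ξ₀ ^ 2 := by rw [hξ2]; linarith
    rcases sq_eq_sq_iff_eq_or_eq_neg.1 h4 with h | h
    · exact h
    · have := sqrt_nonneg Theta0
      rw [hξ] at h ⊢; linarith
  have hloc : ∃ c₀ > 0, ∀ᶠ τ in 𝓝 ξ₀, c₀ * ((τ - ξ₀) ^ 2 / (1 + (τ - ξ₀) ^ 2)) ≤ -R τ := by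
    have hle : ∀ y : ℝ, y ^ 2 / (1 + y ^ 2) ≤ 1 := fun y => by
      rw [div_le_one (by positivity)]; linarith
    have hle2 : ∀ y : ℝ, y ^ 2 / (1 + y ^ 2) ≤ y ^ 2 := fun y => by
      rw [div_le_iff₀ (by positivity)]; nlinarith [sq_nonneg y, sq_nonneg (y ^ 2)]
    rcases (h0 ξ₀).lt_or_eq with h | h
    · refine ⟨-R ξ₀ / 2, by linarith, ?_⟩
      have : ∀ᶠ τ in 𝓝 ξ₀, R τ < R ξ₀ / 2 := hc.continuousAt.eventually_lt_const (by linarith)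
      filter_upwards [this] with τ hτ
      have := hle (τ - ξ₀)
      nlinarith
    · have hneg : ξ₀ < 0 := by have := h1 ξ₀; linarith
      refine ⟨-ξ₀ / 2, by linarith, ?_⟩
      set φ : ℝ → ℝ := fun τ => R τ + (-ξ₀ / 2) * (τ - ξ₀) ^ 2 with hφ
      have hφd : ∀ τ, HasDerivAt φ (τ ^ 2 - Theta0 - R τ ^ 2 + (-ξ₀) * (τ - ξ₀)) τ := fun τ => by
        refine ((hd τ).fun_add ((((hasDerivAt_id τ).sub_const ξ₀).fun_pow 2).const_mul (-ξ₀ / 2))).congr_deriv ?_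
        simp; ring
      have hφ' : deriv φ = fun τ => τ ^ 2 - Theta0 - R τ ^ 2 + (-ξ₀) * (τ - ξ₀) := funext fun τ => (hφd τ).deriv
      have hφ2 : HasDerivAt (deriv φ) ξ₀ ξ₀ := by
        rw [hφ']
        have := (((hasDerivAt_pow 2 ξ₀).sub_const Theta0).fun_sub ((hd ξ₀).fun_pow 2)).fun_add
          (((hasDerivAt_id ξ₀).sub_const ξ₀).const_mul (-ξ₀))
        refine this.congr_deriv ?_
        rw [h]; simp; ring
      have hm := isLocalMax_of_deriv_deriv_neg (f := φ) (x₀ := ξ₀) (by rw [hφ2.deriv]; exact hneg)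
        (by rw [hφ']; simp [h, hξ2]) (hφd ξ₀).continuousAt
      filter_upwards [hm] with τ hτ
      have h5 : φ ξ₀ = 0 := by simp [hφ, h]
      have h6 : φ τ ≤ 0 := by rw [← h5]; exact hτ
      have h7 := hle2 (τ - ξ₀)
      simp only [hφ] at h6
      nlinarith
  obtain ⟨c₀, hc0, hev⟩ := hloc
  obtain ⟨δ, hδ, hball⟩ := Metric.eventually_nhds_iff_ball.1 hev
  have hKc : IsCompact (Icc (-6:ℝ) 6 \ Metric.ball ξ₀ δ) := isCompact_Icc.diff Metric.isOpen_ball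
  have hmin : ∃ m > 0, ∀ τ ∈ Icc (-6:ℝ) 6 \ Metric.ball ξ₀ δ, m ≤ -R τ := by
    rcases (Icc (-6:ℝ) 6 \ Metric.ball ξ₀ δ).eq_empty_or_nonempty with he | hne
    · exact ⟨1, one_pos, fun τ hτ => by rw [he] at hτ; exact hτ.elim⟩
    · obtain ⟨t, ht, hmin⟩ := hKc.exists_isMinOn hne hc.neg.continuousOn
      refine ⟨-R t, ?_, fun τ hτ => hmin hτ⟩
      rcases (h0 t).lt_or_eq with h | h
      · linarith
      · exact absurd (by rw [hz t h]; exact Metric.mem_ball_self hδ) ht.2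
  obtain ⟨m, hm, hmK⟩ := hmin
  refine ⟨R, ξ₀, min 1 (min c₀ m), by positivity, hd, hu, h0, hlin, fun τ => ?_⟩
  have hle : (τ - ξ₀) ^ 2 / (1 + (τ - ξ₀) ^ 2) ≤ 1 := by
    rw [div_le_one (by positivity)]; linarith
  have hge : 0 ≤ (τ - ξ₀) ^ 2 / (1 + (τ - ξ₀) ^ 2) := by positivity
  have k1 := min_le_left 1 (min c₀ m)
  have k2 : min 1 (min c₀ m) ≤ c₀ := (min_le_right _ _).trans (min_le_left _ _)
  have k3 : min 1 (min c₀ m) ≤ m := (min_le_right _ _).trans (min_le_right _ _)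
  have k0 : 0 < min 1 (min c₀ m) := by positivity
  by_cases hb : τ ∈ Metric.ball ξ₀ δ
  · exact (mul_le_mul_of_nonneg_right k2 hge).trans (hball τ hb)
  by_cases hI : τ ∈ Icc (-6:ℝ) 6
  · have := hmK τ ⟨hI, hb⟩
    nlinarith
  · have h6 : 6 < |τ| := by
      by_contra hh; push Not at hh; exact hI (abs_le.1 hh)
    nlinarith [hlin τ]

/-- the bounded sigmoid -/
def hh (y : ℝ) : ℝ := y / sqrt (1 + y ^ 2)
def hd (y : ℝ) : ℝ := 1 / ((1 + y ^ 2) * sqrt (1 + y ^ 2))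

lemma hh_sq (y : ℝ) : hh y ^ 2 = y ^ 2 / (1 + y ^ 2) := by
  unfold hh; rw [div_pow, sq_sqrt (by positivity)]

lemma hh_deriv (y : ℝ) : HasDerivAt hh (hd y) y := by
  have hp : (0:ℝ) < 1 + y ^ 2 := by positivity
  have h1 : HasDerivAt (fun y : ℝ => 1 + y ^ 2) (2 * y) y := by
    simpa using (hasDerivAt_pow 2 y).const_add 1
  have h := (hasDerivAt_id y).fun_div (h1.sqrt hp.ne') (sqrt_pos.2 hp).ne'
  refine h.congr_deriv ?_
  have hs := sq_sqrt hp.le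
  have hs0 := (sqrt_pos.2 hp).ne'
  unfold hd; simp only [id]
  rw [hs]
  field_simp
  rw [hs]; ring

lemma hd_pos (y : ℝ) : 0 < hd y := by unfold hd; positivity

lemma hd_le (y : ℝ) : hd y ≤ 1 := by
  unfold hd
  have h1 : 1 ≤ sqrt (1 + y ^ 2) := by rw [one_le_sqrt]; nlinarith [sq_nonneg y]
  rw [div_le_one (by positivity)]
  nlinarith [sq_nonneg y]

lemma hd_ge {y K : ℝ} (hK : 0 ≤ K) (h : 1 + y ^ 2 ≤ K ^ 2) : 1 / K ^ 3 ≤ hd y := by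
  unfold hd
  have h1 : sqrt (1 + y ^ 2) ≤ K := by rw [sqrt_le_left hK]; exact h
  have : (1 + y ^ 2) * sqrt (1 + y ^ 2) ≤ K ^ 3 := by
    calc _ ≤ K ^ 2 * K := by gcongr
      _ = _ := by ring
  exact one_div_le_one_div_of_le (by positivity) this

lemma hh_abs (y : ℝ) : |hh y| ≤ 1 := by
  have : hh y ^ 2 ≤ 1 := by rw [hh_sq, div_le_one (by positivity)]; linarith
  rwa [sq_le_one_iff_abs_le_one] at this

lemma hh_contDiff : ContDiff ℝ 1 hh := by
  unfold hh
  refine contDiff_id.div ?_ fun y => (sqrt_pos.2 (by positivity)).ne'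
  exact ContDiff.sqrt (by fun_prop) fun y => (by positivity : (0:ℝ) < 1 + y ^ 2).ne'

lemma hh_gain (y z : ℝ) (hz : |z| ≤ 1) : |z| / 3 ≤ hh y ^ 2 + |z| * hd y := by
  have h0 := abs_nonneg z
  rcases le_or_gt (y ^ 2) 1 with h | h
  · have h1 : 1 / (1.44:ℝ) ^ 3 ≤ hd y := hd_ge (by norm_num) (by linarith)
    norm_num at h1
    nlinarith [sq_nonneg (hh y)]
  · have h1 : 1 / 2 ≤ hh y ^ 2 := by
      rw [hh_sq, div_le_div_iff₀ (by norm_num) (by positivity)]; linarith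
    nlinarith [hd_pos y]

lemma hh_mul_ge {b : ℝ} (hb : 0 < b) (z : ℝ) : |z| - 1 / b ≤ hh (b * z) * z := by
  unfold hh
  have h1 : sqrt (1 + (b * z) ^ 2) ≤ 1 + b * |z| := by
    rw [sqrt_le_left (by positivity)]
    nlinarith [sq_abs z, abs_nonneg z, mul_pos hb hb, mul_nonneg hb.le (abs_nonneg z)]
  have h2 : 0 < sqrt (1 + (b * z) ^ 2) := by positivity
  have h3 : |z| - 1 / b ≤ b * z ^ 2 / (1 + b * |z|) := by
    rw [le_div_iff₀ (by positivity)]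
    have : (|z| - 1 / b) * (1 + b * |z|) = b * |z| ^ 2 - 1 / b := by field_simp; ring
    rw [this, sq_abs]
    have : 0 < 1 / b := by positivity
    linarith
  refine h3.trans ?_
  rw [show b * z / sqrt (1 + (b * z) ^ 2) * z = b * z ^ 2 / sqrt (1 + (b * z) ^ 2) by ring]
  exact div_le_div_of_nonneg_left (by positivity) h2 h1

lemma sq_L1 {z q Y τ : ℝ} (hz2 : z ^ 2 ≤ 0.9025) (hY : Y = 1 - z ^ 2) (hq : 0 < q) (hqY : q ≤ Y) :
    Y ^ 2 * τ ^ 2 + 1.1 * (0.8 * z * (2 - z ^ 2)) ^ 2 * τ ^ 2 / q ≤ τ ^ 2 / q := by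
  have h3 : 0 ≤ 1 - Y ^ 2 * Y - 1.1 * (0.8 * z * (2 - z ^ 2)) ^ 2 := by
    rw [hY]
    have : 1 - (1 - z ^ 2) ^ 2 * (1 - z ^ 2) - 1.1 * (0.8 * z * (2 - z ^ 2)) ^ 2
      = z ^ 2 * ((3 - 3 * z ^ 2 + (z ^ 2) ^ 2) - 0.704 * (2 - z ^ 2) ^ 2) := by ring
    rw [this]
    refine mul_nonneg (sq_nonneg z) ?_
    generalize z ^ 2 = w at hz2
    nlinarith [sq_nonneg w]
  have h4 : Y ^ 2 * q ≤ Y ^ 2 * Y := by gcongr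
  have e : τ ^ 2 / q - (Y ^ 2 * τ ^ 2 + 1.1 * (0.8 * z * (2 - z ^ 2)) ^ 2 * τ ^ 2 / q)
      = τ ^ 2 / q * (1 - Y ^ 2 * q - 1.1 * (0.8 * z * (2 - z ^ 2)) ^ 2) := by field_simp; ring
  have : 0 ≤ τ ^ 2 / q * (1 - Y ^ 2 * q - 1.1 * (0.8 * z * (2 - z ^ 2)) ^ 2) :=
    mul_nonneg (by positivity) (by linarith)
  linarith

lemma sq_L3 {t q κ s h μ τ : ℝ} (ht0 : 0 ≤ t) (hq : 0 < q) (hq1 : q ≤ 1) (hs : |s| ≤ 1) :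
    (1 - t) * q * (-κ * s * h - μ * τ / q) ^ 2 ≤ 1.1 * μ ^ 2 * τ ^ 2 / q + 11 * κ ^ 2 * h ^ 2 := by
  have h1 : (-κ * s * h - μ * τ / q) ^ 2 ≤ 1.1 * (μ * τ / q) ^ 2 + 11 * (κ * s * h) ^ 2 := by
    nlinarith [sq_nonneg (μ * τ / q - 10 * (κ * s * h))]
  have h2 : (1 - t) * q * (-κ * s * h - μ * τ / q) ^ 2 ≤ q * (1.1 * (μ * τ / q) ^ 2 + 11 * (κ * s * h) ^ 2) := by
    have : (1 - t) * q ≤ q := by nlinarith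
    calc _ ≤ q * (-κ * s * h - μ * τ / q) ^ 2 := by gcongr
      _ ≤ _ := by gcongr
  refine h2.trans ?_
  have e : q * (1.1 * (μ * τ / q) ^ 2 + 11 * (κ * s * h) ^ 2) = 1.1 * μ ^ 2 * τ ^ 2 / q + 11 * κ ^ 2 * h ^ 2 * (q * s ^ 2) := by
    field_simp
  rw [e]
  have hs2 : s ^ 2 ≤ 1 := by rwa [sq_le_one_iff_abs_le_one]
  have : q * s ^ 2 ≤ 1 := by nlinarith [sq_nonneg s]
  have h0 : 0 ≤ 11 * κ ^ 2 * h ^ 2 := by positivity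
  nlinarith

lemma sq_L5 {q Y γ kp k R c₁ : ℝ} (hq0 : Y / 2 ≤ q) (hY0 : 0.0975 ≤ Y) (hγ0 : 0 ≤ γ) (hγ1 : γ ≤ c₁)
    (hc1 : c₁ ≤ 1 / 10000) (hkp : 0 < kp) (hkR : 0.002 ≤ kp / 2 - R) (hR0 : R ≤ 0) (hk : 1 ≤ k) (hk3 : k ≤ 3) :
    0.0095 * γ * (0.001 - R) ≤ q * Y * (γ * kp) - 2 * Y ^ 2 * R * (γ * k) - Y ^ 2 * (γ * k) ^ 2 := by
  have hY2 : 0.0095 ≤ Y ^ 2 := by nlinarith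
  have h1 : Y ^ 2 * (γ * (kp / 2)) ≤ q * Y * (γ * kp) := by
    have : Y / 2 * (Y * (γ * kp)) ≤ q * (Y * (γ * kp)) := by gcongr
    linarith
  have h2 : 0.001 - R ≤ kp / 2 - 2 * R * k - γ * k ^ 2 := by
    have a0 : 0 ≤ c₁ := hγ0.trans hγ1
    have a1 : γ * k ^ 2 ≤ c₁ * 3 ^ 2 := by gcongr
    have a2 : 0 ≤ (-R) * (k - 1) := mul_nonneg (by linarith) (by linarith)
    linarith
  have h3 : Y ^ 2 * γ * (0.001 - R) ≤ Y ^ 2 * γ * (kp / 2 - 2 * R * k - γ * k ^ 2) := by gcongr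
  have h4 : 0.0095 * (γ * (0.001 - R)) ≤ Y ^ 2 * (γ * (0.001 - R)) := by
    have : 0 ≤ 0.001 - R := by linarith
    gcongr
  linarith

lemma sq_L10 {c₁ ξ₀ β τ ξ σ t R h : ℝ} (hc0 : 0 < c₁) (hβ0 : 0 < β) (hβc : 10 * β ≤ 0.0045 * c₁)
    (hτ : τ = ξ + σ) (hσ0 : 0 ≤ σ) (hσ : β * σ = t / 2) (hR0 : R ≤ 0) (hRl : |τ| / 2 - 2 ≤ -R)
    (hh_ : h = hh (ξ - ξ₀)) :
    5 * β * |τ| ≤ 0.0095 * (c₁ * h ^ 2) * (-R) + (25 + 5 * |ξ₀|) * β + 2.5 * t := by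
  have h2 := hh_sq (ξ - ξ₀)
  rw [← hh_] at h2
  have hx := abs_nonneg ξ₀
  have ht : 0 ≤ t := by nlinarith
  rcases le_or_gt |ξ - ξ₀| 1 with h1 | h1
  · have : |τ| ≤ 1 + |ξ₀| + σ := by
      rw [hτ, show ξ + σ = (ξ - ξ₀) + ξ₀ + σ by ring]
      refine (abs_add_le _ _).trans ?_
      have := abs_add_le (ξ - ξ₀) ξ₀
      rw [abs_of_nonneg hσ0]; linarith
    have h3 : 0 ≤ 0.0095 * (c₁ * h ^ 2) * (-R) := mul_nonneg (by positivity) (by linarith)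
    have h4 : 5 * β * |τ| ≤ 5 * β * (1 + |ξ₀| + σ) := by gcongr
    linarith
  · have h3 : 1 / 2 ≤ h ^ 2 := by
      have : 1 < (ξ - ξ₀) ^ 2 := by rw [← sq_abs]; nlinarith
      rw [h2, div_le_div_iff₀ (by norm_num) (by positivity)]; linarith
    have h4 : 10 * β ≤ 0.0095 * (c₁ * h ^ 2) := by nlinarith
    have h5 : 10 * β * (-R) ≤ 0.0095 * (c₁ * h ^ 2) * (-R) := by
      have : 0 ≤ -R := by linarith
      gcongr
    have h6 : 5 * β * |τ| ≤ 5 * β * (2 * (-R) + 4) := by gcongr; linarith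
    have h7 : 0 ≤ |ξ₀| * β := by positivity
    linarith

lemma sq_L9 {β Y z R γ k τ κ q s sp h b : ℝ} (hb : 0 < b) (hβ : β = 1 / b ^ 2) (hβb : β ≤ 1 / b) (hY0 : 0 ≤ Y) (hY1 : Y = 1 - z ^ 2)
    (hRabs : -R ≤ |τ| + 1) (hR0 : R ≤ 0) (hγ : |γ * k| ≤ 1) (hκ0 : 0 ≤ κ) (hκ1 : κ ≤ 1) (hq0 : 0 ≤ q) (hq1 : q ≤ 1)
    (hs : |s| ≤ 1) (hsp : |sp| ≤ b) (hh1 : |h| ≤ 1) :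
    -(5 * β * |τ|) - 9 / b ≤ β * (3 * Y - 2 * z ^ 2) * (R + γ * k)
      + β * (κ * q * sp * h - 2 * κ * z * s * h + 0.8 * (2 - 3 * z ^ 2) * τ) := by
  have hβ0 : 0 < β := by rw [hβ]; positivity
  have hz2 : z ^ 2 ≤ 1 := by linarith
  have hz20 := sq_nonneg z
  have hz1 : |z| ≤ 1 := by rwa [← sq_le_one_iff_abs_le_one]
  have e1 : |(3 * Y - 2 * z ^ 2) * (R + γ * k)| ≤ 3 * (|τ| + 2) := by
    rw [abs_mul]
    have a1 : |3 * Y - 2 * z ^ 2| ≤ 3 := abs_le.2 ⟨by linarith, by linarith⟩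
    have a2 : |R + γ * k| ≤ |τ| + 2 := by
      refine (abs_add_le _ _).trans ?_
      rw [abs_of_nonpos hR0]; linarith
    gcongr
  have e2 : |0.8 * (2 - 3 * z ^ 2) * τ| ≤ 2 * |τ| := by
    rw [abs_mul]
    have a1 : |0.8 * (2 - 3 * z ^ 2)| ≤ 2 := abs_le.2 ⟨by linarith, by linarith⟩
    gcongr
  have e3 : |2 * κ * z * s * h| ≤ 2 := by
    rw [abs_mul, abs_mul, abs_mul, abs_mul, abs_of_nonneg hκ0, abs_two]
    calc 2 * κ * |z| * |s| * |h| ≤ 2 * 1 * 1 * 1 * 1 := by gcongr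
      _ = 2 := by norm_num
  have e4 : |κ * q * sp * h| ≤ b := by
    rw [abs_mul, abs_mul, abs_mul, abs_of_nonneg hκ0, abs_of_nonneg hq0]
    calc κ * q * |sp| * |h| ≤ 1 * 1 * b * 1 := by gcongr
      _ = b := by ring
  have e5 : β * b = 1 / b := by rw [hβ]; field_simp
  have := neg_le_of_abs_le e1
  have := neg_le_of_abs_le e2
  have := le_of_abs_le e3
  have := neg_le_of_abs_le e4
  have h9 : β * (-(3 * (|τ| + 2)) + (-b - 2 - 2 * |τ|)) ≤ β * ((3 * Y - 2 * z ^ 2) * (R + γ * k)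
      + (κ * q * sp * h - 2 * κ * z * s * h + 0.8 * (2 - 3 * z ^ 2) * τ)) := by
    gcongr; linarith
  rw [show 9 / b = 9 * (1 / b) by ring]
  linarith

lemma sq_L0 {R τ Θ : ℝ} (hΘ : 0 ≤ Θ) (h : R ^ 2 ≤ τ ^ 2 + 1 - Θ) : -R ≤ |τ| + 1 := by
  by_contra hcon; push Not at hcon
  nlinarith [sq_abs τ, abs_nonneg τ]

lemma sq_L00 {R τ kp : ℝ} (hkp : kp = hd τ) (hRl : |τ| / 2 - 2 ≤ -R) (hR0 : R ≤ 0) : 0.002 ≤ kp / 2 - R := by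
  rcases le_or_gt |τ| 6 with h6 | h6
  · have : 1 / (6.1:ℝ) ^ 3 ≤ hd τ := hd_ge (by norm_num) (by have := abs_le.1 h6; nlinarith)
    rw [← hkp] at this; norm_num at this; linarith
  · have := hd_pos τ
    rw [← hkp] at this
    linarith

lemma sq_L2 {Y q t D : ℝ} (ht0 : 0 ≤ t) (hY0 : 0 ≤ Y) (hY1 : Y ≤ 1) (hq : q = Y - t) (hD : -1 ≤ D) :
    -(Y ^ 2 * D) - t ≤ -(q * Y * D) := by
  have h1 : 0 ≤ t * Y * (D + 1) := mul_nonneg (mul_nonneg ht0 (by linarith)) (by linarith)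
  have h2 : t * Y ≤ t * 1 := by gcongr
  have h3 : q * Y * D = Y ^ 2 * D - t * Y * D := by rw [hq]; ring
  linarith

lemma sq_L4 {t Y R g : ℝ} (ht0 : 0 ≤ t) :
    (1 - t) * Y ^ 2 * (R + g) ^ 2 ≤ Y ^ 2 * R ^ 2 + 2 * Y ^ 2 * R * g + Y ^ 2 * g ^ 2 := by
  have h1 : 0 ≤ t * (Y ^ 2 * (R + g) ^ 2) := by positivity
  linarith

lemma sq_L6 {z Y Θ : ℝ} (hΘ : Θ ≤ 3 / 4) (hY : Y = 1 - z ^ 2) (hz2 : z ^ 2 ≤ 1) :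
    Θ + 0.05 * z ^ 2 ≤ Y ^ 2 * Θ + 0.8 * z * (2 - z ^ 2) * z := by
  have e : Y ^ 2 * Θ + 0.8 * z * (2 - z ^ 2) * z = Θ + (0.8 - Θ) * (z ^ 2 * (2 - z ^ 2)) := by rw [hY]; ring
  rw [e]
  have h1 : z ^ 2 * 1 ≤ z ^ 2 * (2 - z ^ 2) := by gcongr; linarith
  have h0 := sq_nonneg z
  have h2 : 0 ≤ (0.75 - Θ) * (z ^ 2 * (2 - z ^ 2)) := mul_nonneg (by linarith) (by linarith)
  linarith

lemma sq_L7 {c₁ Y z k h hp : ℝ} (hc0 : 0 < c₁) (hc1 : c₁ ≤ 1 / 10000) (hY0 : 0 ≤ Y) (hY1 : Y ≤ 1)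
    (hk0 : 0 ≤ k) (hk3 : k ≤ 3) (hh1 : |h| ≤ 1) (hhp0 : 0 < hp) (hhp1 : hp ≤ 1) :
    -(0.05 * z ^ 2) ≤ 2 * c₁ * Y * z ^ 2 * k * h * hp := by
  have e : |2 * c₁ * Y * z ^ 2 * k * h * hp| ≤ 0.05 * z ^ 2 := by
    rw [abs_mul, abs_mul, abs_of_nonneg (by positivity : 0 ≤ 2 * c₁ * Y * z ^ 2 * k), abs_of_pos hhp0]
    calc 2 * c₁ * Y * z ^ 2 * k * |h| * hp ≤ 2 * (1 / 10000) * 1 * z ^ 2 * 3 * 1 * 1 := by gcongr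
      _ ≤ _ := by linarith [sq_nonneg z]
  exact neg_le_of_abs_le e

lemma sq_L8 {c₁ b z q s hp : ℝ} (hb : 0 < b) (hc0 : 0 < c₁) (hc1 : c₁ ≤ 1 / 10000) (hq0 : 0.04 ≤ q) (hq1 : q ≤ 1)
    (hsz : |z| - 1 / b ≤ s * z) (hhp0 : 0 < hp) (hhp1 : hp ≤ 1) :
    c₁ / 1000 * (0.04 * |z| * hp) - 1 / b ≤ c₁ / 1000 * q * s * z * hp := by
  have hib : 0 < 1 / b := by positivity
  have hqp : 0 < q := by linarith
  have h1 : q * hp * (|z| - 1 / b) ≤ q * hp * (s * z) := by gcongr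
  have h2 : 0.04 * (hp * |z|) ≤ q * (hp * |z|) := by gcongr
  have h3 : q * hp ≤ 1 := by nlinarith
  have h4 : q * hp * (1 / b) ≤ 1 * (1 / b) := by gcongr
  have h5 : c₁ / 1000 * (0.04 * (hp * |z|) - 1 / b) ≤ c₁ / 1000 * (q * hp * (s * z)) := by gcongr; linarith
  have h6 : c₁ / 1000 * (1 / b) ≤ 1 * (1 / b) := by gcongr; linarith
  linarith

lemma sq_L11 {c₁ z h hp : ℝ} (hc0 : 0 < c₁) (hc1 : c₁ ≤ 1 / 10000) (hhp0 : 0 < hp)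
    (hg : |z| / 3 ≤ h ^ 2 + |z| * hp) :
    3 / 1000000 * c₁ * |z| ≤ 0.0095 * (c₁ * h ^ 2) * 0.001 - 11 * (c₁ / 1000) ^ 2 * h ^ 2 + c₁ / 1000 * (0.04 * |z| * hp) := by
  have h1 : 11 * (c₁ / 1000) ^ 2 * h ^ 2 ≤ 0.0000001 * (c₁ * h ^ 2) := by
    have : c₁ * (c₁ * h ^ 2) ≤ 1 / 10000 * (c₁ * h ^ 2) := by gcongr
    have h0 : 0 ≤ c₁ * h ^ 2 := by positivity
    linarith
  have h2 : c₁ * (|z| / 3) ≤ c₁ * (h ^ 2 + |z| * hp) := by gcongr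
  have h3 : 0 ≤ c₁ * (|z| * hp) := by positivity
  have h4 : 0 ≤ c₁ * h ^ 2 := by positivity
  linarith

set_option maxHeartbeats 1000000 in
/-- scalar inequality -/
lemma scalar_Q {Θ c₁ ξ₀ : ℝ} (hΘ0 : 0 ≤ Θ) (hΘ : Θ ≤ 3 / 4) (hc0 : 0 < c₁) (hc1 : c₁ ≤ 1 / 10000)
    {β z t q Y τ ξ R k kp s sp h hp : ℝ} {b : ℝ}
    (hb : 0 < b) (hβ : β = 1 / b ^ 2) (hβc : 10 * β ≤ 0.0045 * c₁) (hb1 : 1 ≤ b)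
    (hz : |z| ≤ 0.95) (hY : Y = 1 - z ^ 2) (ht0 : 0 ≤ t) (ht : t ≤ 4 / b) (ht1 : t ≤ 0.04) (hq : q = Y - t)
    (hτ : τ = ξ + b ^ 2 * (t / 2)) (hR0 : R ≤ 0) (hR2 : R ^ 2 ≤ τ ^ 2 + 1 - Θ) (hRl : |τ| / 2 - 2 ≤ -R)
    (hk : 1 ≤ k) (hk3 : k ≤ 3) (hkp : kp = hd τ) (hs : |s| ≤ 1) (hsz : |z| - 1 / b ≤ s * z)
    (hsp : |sp| ≤ b) (hh_ : h = hh (ξ - ξ₀)) (hp_ : hp = hd (ξ - ξ₀)) :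
    Θ + 3 / 1000000 * c₁ * |z| - (50 + 5 * |ξ₀|) / b ≤
    τ ^ 2 / q + (-(q * Y * ((τ ^ 2 - Θ - R ^ 2) + c₁ * h ^ 2 * (-kp))) + β * (3 * Y - 2 * z ^ 2) * (R + c₁ * h ^ 2 * k)
      + 2 * c₁ * Y * z ^ 2 * k * h * hp + 0.8 * z * (2 - z ^ 2) * z + c₁ / 1000 * q * s * z * hp
      + β * (c₁ / 1000 * q * sp * h - 2 * (c₁ / 1000) * z * s * h + 0.8 * (2 - 3 * z ^ 2) * τ))
      - ((1 - t) * Y ^ 2 * (R + c₁ * h ^ 2 * k) ^ 2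
        + (1 - t) * q * (-(c₁ / 1000) * s * h - 0.8 * z * (2 - z ^ 2) * τ / q) ^ 2) := by
  have hz2 : z ^ 2 ≤ 0.9025 := by
    rw [← sq_abs]; exact (pow_le_pow_left₀ (abs_nonneg z) hz 2).trans (by norm_num)
  have hz20 := sq_nonneg z
  have hzabs := abs_nonneg z
  have hY1 : Y ≤ 1 := by linarith
  have hY0 : 0.0975 ≤ Y := by linarith
  have hq0 : Y / 2 ≤ q := by linarith
  have hqp : 0 < q := by linarith
  have hq1 : q ≤ 1 := by linarith
  have hβ0 : 0 < β := by rw [hβ]; positivity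
  have hββ : β ≤ 1 / b := by
    rw [hβ]; exact one_div_le_one_div_of_le hb (le_self_pow₀ hb1 two_ne_zero)
  have hh1 : |h| ≤ 1 := by rw [hh_]; exact hh_abs _
  have hh2 : h ^ 2 ≤ 1 := by rwa [sq_le_one_iff_abs_le_one]
  have hh0 := sq_nonneg h
  have hhp0 : 0 < hp := by rw [hp_]; exact hd_pos _
  have hhp1 : hp ≤ 1 := by rw [hp_]; exact hd_le _
  have hkp0 : 0 < kp := by rw [hkp]; exact hd_pos _
  have hRabs := sq_L0 hΘ0 hR2
  have hγ0 : 0 ≤ c₁ * h ^ 2 := by positivity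
  have hγ1 : c₁ * h ^ 2 ≤ c₁ := mul_le_of_le_one_right hc0.le hh2
  have hkR := sq_L00 hkp hRl hR0
  have A1 := sq_L1 (τ := τ) hz2 hY hqp (by linarith)
  have A3 := sq_L3 (t := t) (κ := c₁ / 1000) (h := h) (μ := 0.8 * z * (2 - z ^ 2)) (τ := τ) ht0 hqp hq1 hs
  have A5 := sq_L5 hq0 hY0 hγ0 hγ1 hc1 hkp0 hkR hR0 hk hk3
  have hγk : |c₁ * h ^ 2 * k| ≤ 1 := by
    rw [abs_of_nonneg (by positivity)]
    calc c₁ * h ^ 2 * k ≤ 1 / 10000 * 1 * 3 := by gcongr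
      _ ≤ 1 := by norm_num
  have A9 := sq_L9 (γ := c₁ * h ^ 2) (k := k) (κ := c₁ / 1000) hb hβ hββ (by linarith) hY hRabs hR0 hγk (by positivity) (by linarith)
    hqp.le hq1 hs hsp hh1
  have A10 := sq_L10 (t := t) hc0 hβ0 hβc hτ (by positivity) (by rw [hβ]; field_simp) hR0 hRl hh_
  have hg := hh_gain (ξ - ξ₀) z (by linarith)
  rw [← hh_, ← hp_] at hg
  have A2 := sq_L2 (D := τ ^ 2 - Θ - R ^ 2) ht0 (by linarith) hY1 hq (by linarith)
  have A4 := sq_L4 (Y := Y) (R := R) (g := c₁ * h ^ 2 * k) ht0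
  have A6 := sq_L6 hΘ hY (by linarith)
  have A7 := sq_L7 (z := z) hc0 hc1 (by linarith) hY1 (by linarith) hk3 hh1 hhp0 hhp1
  have A8 := sq_L8 hb hc0 hc1 (by linarith) hq1 hsz hhp0 hhp1
  have A11 := sq_L11 hc0 hc1 hhp0 hg
  have A12 : (25 + 5 * |ξ₀|) * β ≤ (25 + 5 * |ξ₀|) * (1 / b) := by gcongr
  have A13 : 3.5 * t ≤ 14 * (1 / b) := by rw [show 4 / b = 4 * (1 / b) by ring] at ht; linarith
  have A15 : 0 < 1 / b := by positivity
  rw [show (50 + 5 * |ξ₀|) / b = (50 + 5 * |ξ₀|) * (1 / b) by ring]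
  rw [show 9 / b = 9 * (1 / b) by ring] at A9
  have A14 : q * Y * ((τ ^ 2 - Θ - R ^ 2) + c₁ * h ^ 2 * (-kp)) = q * Y * (τ ^ 2 - Θ - R ^ 2) - q * Y * (c₁ * h ^ 2 * kp) := by ring
  rw [A14]
  clear hΘ hΘ0 hc0 hc1 hb hβ hβc hb1 hz hY ht0 ht ht1 hq hτ hR0 hR2 hRl hk hk3 hkp hs hsz hsp hh_ hp_ hz2 hz20 hzabs hY1 hY0 hq0 hqp hq1 hβ0 hββ hh1 hh2 hh0 hhp0 hhp1 hkp0 hRabs hγ0 hγ1 hkR hγk hg A14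
  linarith

def qq (x : E3) : ℝ := x 0 ^ 2 + x 1 ^ 2

lemma qq_contDiff {n : WithTop ℕ∞} : ContDiff ℝ n qq := by
  unfold qq
  exact ((contDiff_coord 0).pow 2).add ((contDiff_coord 1).pow 2)

lemma pd_sq (i j : Fin 3) (x : E3) : pd j (fun y => y i ^ 2) x = 2 * x i * (if i = j then 1 else 0) := by
  have := pd_comp (f := fun y : E3 => y i) (h := fun t => t ^ 2) (h' := 2 * x i) (x := x) j
    (by simpa using hasDerivAt_pow 2 (x i)) ((hasFDerivAt_coord i x).differentiableAt)
  rw [this, pd_coord]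

lemma pd_qq (j : Fin 3) (x : E3) : pd j qq x = if j = 2 then 0 else 2 * x j := by
  unfold qq
  rw [pd_add j (((contDiff_coord 0).pow 2).differentiable (n := 1) (by norm_num) x)
    (((contDiff_coord 1).pow 2).differentiable (n := 1) (by norm_num) x), pd_sq, pd_sq]
  fin_cases j <;> simp

lemma pd_comp2 {α : ℝ × ℝ → ℝ} {x : E3} (hα : DifferentiableAt ℝ α (qq x, x 2)) (j : Fin 3) :
    pd j (fun y => α (qq y, y 2)) x = fderiv ℝ α (qq x, x 2) (pd j qq x, if (2 : Fin 3) = j then 1 else 0) := by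
  have h1 : HasFDerivAt qq (fderiv ℝ qq x) x := ((qq_contDiff (n := 1)).differentiable (by norm_num) x).hasFDerivAt
  have h2 := h1.prodMk (hasFDerivAt_coord 2 x)
  have h3 := (hα.hasFDerivAt).comp x h2
  have h4 : fderiv ℝ (fun y => α (qq y, y 2)) x = _ := h3.fderiv
  simp only [pd]
  rw [h4]
  simp only [ContinuousLinearMap.comp_apply, ContinuousLinearMap.prod_apply, proj_ee]

lemma fd_q {α : ℝ × ℝ → ℝ} {q z a : ℝ} (hα : DifferentiableAt ℝ α (q, z))
    (h : HasDerivAt (fun t => α (t, z)) a q) (c : ℝ) : fderiv ℝ α (q, z) (c, 0) = c * a := by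
  have h2 : HasDerivAt (fun t : ℝ => ((t, z) : ℝ × ℝ)) (1, 0) q := (hasDerivAt_id q).prodMk (hasDerivAt_const q z)
  have h3 := HasFDerivAt.comp_hasDerivAt (l := α) q hα.hasFDerivAt h2
  have h4 := h3.unique h
  rw [show ((c, 0) : ℝ × ℝ) = c • ((1:ℝ), (0:ℝ)) by simp, map_smul, h4]; rfl

lemma fd_z {α : ℝ × ℝ → ℝ} {q z a : ℝ} (hα : DifferentiableAt ℝ α (q, z))
    (h : HasDerivAt (fun t => α (q, t)) a z) : fderiv ℝ α (q, z) (0, 1) = a := by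
  have h2 : HasDerivAt (fun t : ℝ => ((q, t) : ℝ × ℝ)) (0, 1) z := (hasDerivAt_const z q).prodMk (hasDerivAt_id z)
  have h3 := HasFDerivAt.comp_hasDerivAt (l := α) z hα.hasFDerivAt h2
  exact h3.unique h

lemma alg_vf {x0 x1 p s p0 p1 p2 s0 s1 s2 m B a b q : ℝ} (hq : q = x0 ^ 2 + x1 ^ 2) (hq0 : 0 < q)
    (h1 : x0 * p1 - x1 * p0 = -(m * s)) (h2 : x0 * s1 - x1 * s0 = m * p) :
    ((m + B * q / 2) ^ 2 / q - (a ^ 2 * q + b ^ 2)) * (p ^ 2 + s ^ 2)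
      + 2 * a * (p * (x0 * p0 + x1 * p1) + s * (x0 * s0 + x1 * s1)) + 2 * b * (p * p2 + s * s2)
    ≤ ((s0 + -(B / 2) * x1 * p) ^ 2 + (-p0 + -(B / 2) * x1 * s) ^ 2)
      + ((s1 + B / 2 * x0 * p) ^ 2 + (-p1 + B / 2 * x0 * s) ^ 2) + (s2 ^ 2 + p2 ^ 2) := by
  obtain ⟨H, hH⟩ : ∃ H, H = ((s0 + -(B / 2) * x1 * p) ^ 2 + (-p0 + -(B / 2) * x1 * s) ^ 2)
      + ((s1 + B / 2 * x0 * p) ^ 2 + (-p1 + B / 2 * x0 * s) ^ 2) := ⟨_, rfl⟩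
  obtain ⟨Wp, hWp⟩ : ∃ W, W = x0 * p0 + x1 * p1 := ⟨_, rfl⟩
  obtain ⟨Ws, hWs⟩ : ∃ W, W = x0 * s0 + x1 * s1 := ⟨_, rfl⟩
  rw [← hH, ← hWp, ← hWs]
  have key : q * H = Wp ^ 2 + Ws ^ 2 + (m + B * q / 2) ^ 2 * (p ^ 2 + s ^ 2) := by
    have e1 : q * H = Wp ^ 2 + Ws ^ 2 + (x0 * p1 - x1 * p0) ^ 2 + (x0 * s1 - x1 * s0) ^ 2
        + q * (B * p * (x0 * s1 - x1 * s0) - B * s * (x0 * p1 - x1 * p0)) + B ^ 2 / 4 * q ^ 2 * (p ^ 2 + s ^ 2) := by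
      rw [hq, hH, hWp, hWs]; ring
    rw [e1, h1, h2]; ring
  clear hH hWp hWs h1 h2 hq
  have hH2 : H = Wp ^ 2 / q + Ws ^ 2 / q + (m + B * q / 2) ^ 2 / q * (p ^ 2 + s ^ 2) := by
    have : H = (q * H) / q := by field_simp
    rw [this, key]; ring
  have t1 : 2 * a * (p * Wp) - a ^ 2 * q * p ^ 2 ≤ Wp ^ 2 / q := by
    rw [le_div_iff₀ hq0]; nlinarith only [sq_nonneg (Wp - a * q * p)]
  have t2 : 2 * a * (s * Ws) - a ^ 2 * q * s ^ 2 ≤ Ws ^ 2 / q := by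
    rw [le_div_iff₀ hq0]; nlinarith only [sq_nonneg (Ws - a * q * s)]
  have t3 : 2 * b * (p * p2) - b ^ 2 * p ^ 2 ≤ p2 ^ 2 := by nlinarith only [sq_nonneg (p2 - b * p)]
  have t4 : 2 * b * (s * s2) - b ^ 2 * s ^ 2 ≤ s2 ^ 2 := by nlinarith only [sq_nonneg (s2 - b * s)]
  rw [hH2]
  generalize (m + B * q / 2) ^ 2 / q = V
  linarith

lemma vf {B m : ℝ} {v : E3 → ℂ} (hv : ContDiff ℝ 1 v)
    (hang : ∀ x : E3, (x 0 : ℂ) * fderiv ℝ v x (ee 1) - (x 1 : ℂ) * fderiv ℝ v x (ee 0) = Complex.I * m * v x)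
    (hax : ∀ x : E3, qq x = 0 → v =ᶠ[𝓝 x] fun _ => 0)
    {α β : ℝ × ℝ → ℝ} (hα : ∀ p, 0 < p.1 → ContDiffAt ℝ 1 α p) (hβ : ∀ p, 0 < p.1 → ContDiffAt ℝ 1 β p)
    {αq βz : ℝ → ℝ → ℝ} (hαq : ∀ q z, 0 < q → HasDerivAt (fun t => α (t, z)) (αq q z) q)
    (hβz : ∀ q z, 0 < q → HasDerivAt (fun t => β (q, t)) (βz q z) z)
    (hbd : ∀ q z, 0 < q → q + z ^ 2 = 1 → 0 ≤ q * α (q, z) + z * β (q, z))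
    {w : E3 → ℝ} (hw : Continuous w)
    (hin : ∀ x ∈ ball3, v x ≠ 0 → w x ≤ (m + B * qq x / 2) ^ 2 / qq x
      - (α (qq x, x 2) ^ 2 * qq x + β (qq x, x 2) ^ 2)
      - (2 * α (qq x, x 2) + 2 * qq x * αq (qq x) (x 2) + βz (qq x) (x 2))) :
    ∫ x in ball3, w x * ‖v x‖ ^ 2 ≤ ∫ x in ball3, magEnergyDensity B v x := by
  set N : E3 → ℝ := fun x => rp v x ^ 2 + ip v x ^ 2 with hN
  have hNn : ∀ x, ‖v x‖ ^ 2 = N x := fun x => nsq _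
  have hrc := rp_contDiff hv
  have hic := ip_contDiff hv
  have hNc : ContDiff ℝ 1 N := (hrc.pow 2).add (hic.pow 2)
  have hNp : ∀ j x, pd j N x = 2 * (rp v x * pd j (rp v) x + ip v x * pd j (ip v) x) := by
    intro j x
    have d1 := hrc.differentiable (by norm_num) x
    have d2 := hic.differentiable (by norm_num) x
    rw [hN, pd_add j (d1.fun_pow 2) (d2.fun_pow 2),
      pd_comp (f := rp v) (h := fun t => t ^ 2) (h' := 2 * rp v x) j (by simpa using hasDerivAt_pow 2 (rp v x)) d1,
      pd_comp (f := ip v) (h := fun t => t ^ 2) (h' := 2 * ip v x) j (by simpa using hasDerivAt_pow 2 (ip v x)) d2]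
    ring
  set a : E3 → ℝ := fun x => α (qq x, x 2) with ha
  set b : E3 → ℝ := fun x => β (qq x, x 2) with hb
  have hqz : ∀ x : E3, ContDiffAt ℝ 1 (fun y : E3 => (qq y, y 2)) x :=
    fun x => (qq_contDiff.contDiffAt).prodMk (contDiff_coord 2).contDiffAt
  have qpos : ∀ x : E3, qq x ≠ 0 → 0 < qq x := fun x hx => lt_of_le_of_ne (by unfold qq; positivity) hx.symm
  have hac : ∀ x, qq x ≠ 0 → ContDiffAt ℝ 1 a x := fun x hx => (hα _ (qpos x hx)).comp x (hqz x)
  have hbc : ∀ x, qq x ≠ 0 → ContDiffAt ℝ 1 b x := fun x hx => (hβ _ (qpos x hx)).comp x (hqz x)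
  set F : Fin 3 → E3 → ℝ := ![fun x => x 0 * (a x * N x), fun x => x 1 * (a x * N x), fun x => b x * N x] with hF
  have hF0 : ∀ j x, qq x = 0 → F j =ᶠ[𝓝 x] fun _ => 0 := by
    intro j x hx
    filter_upwards [hax x hx] with y hy
    have : N y = 0 := by rw [← hNn, hy]; simp
    fin_cases j <;> simp [hF, this]
  have hFc : ∀ j, ContDiff ℝ 1 (F j) := by
    intro j
    rw [contDiff_iff_contDiffAt]
    intro x
    by_cases hx : qq x = 0
    · exact contDiffAt_const.congr_of_eventuallyEq (hF0 j x hx)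
    · have c1 := hac x hx
      have c2 := hbc x hx
      have c3 := hNc.contDiffAt (x := x)
      fin_cases j
      · exact (contDiff_coord 0).contDiffAt.mul (c1.mul c3)
      · exact (contDiff_coord 1).contDiffAt.mul (c1.mul c3)
      · exact c2.mul c3
  have hdiv := diverg_ball F hFc (by
    intro x hx
    have e : ∑ j, x j * F j x = (qq x * a x + x 2 * b x) * N x := by
      rw [Fin.sum_univ_three]; simp [hF, qq]; ring
    rw [e]
    by_cases h0 : qq x = 0
    · have : N x = 0 := by rw [← hNn, (hax x h0).eq_of_nhds]; simp
      rw [this, mul_zero]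
    · refine mul_nonneg (hbd _ _ (qpos x h0) ?_) (by simp only [hN]; positivity)
      have := norm_sq3 x
      rw [hx] at this
      unfold qq; linarith)
  have hcF : Continuous fun x => ∑ j, fderiv ℝ (F j) x (ee j) :=
    continuous_finsetSum _ fun j _ => pd_cont (hFc j) j
  have hwN : Continuous fun x => w x * ‖v x‖ ^ 2 := hw.mul (nsq_cont hv)
  have hsum : ∫ x in ball3, (w x * ‖v x‖ ^ 2 + ∑ j, fderiv ℝ (F j) x (ee j)) ≤ ∫ x in ball3, magEnergyDensity B v x := by
    refine setIntegral_mono_on (integrableOn_ball (hwN.add hcF)) (integrableOn_ball (magE_cont B hv)) measurableSet_ball3 ?_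
    intro x hx
    have hEn : 0 ≤ magEnergyDensity B v x := Finset.sum_nonneg fun j _ => sq_nonneg _
    by_cases h0 : qq x = 0
    · have e1 : ∀ j, fderiv ℝ (F j) x = 0 := fun j => by
        rw [(hF0 j x h0).fderiv_eq]; simp
      have e2 : v x = 0 := (hax x h0).eq_of_nhds
      simp only [e1, e2]; simpa using hEn
    have hq := qpos x h0
    have dv := hv.differentiable (by norm_num) x
    have dN := hNc.differentiable (by norm_num) x
    have da := (hac x h0).differentiableAt (by norm_num)
    have db := (hbc x h0).differentiableAt (by norm_num)
    have dα := (hα (qq x, x 2) hq).differentiableAt (by norm_num)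
    have dβ := (hβ (qq x, x 2) hq).differentiableAt (by norm_num)
    have pa0 : pd 0 a x = 2 * x 0 * αq (qq x) (x 2) := by
      rw [ha, pd_comp2 dα, pd_qq]; simp [fd_q dα (hαq _ _ hq)]
    have pa1 : pd 1 a x = 2 * x 1 * αq (qq x) (x 2) := by
      rw [ha, pd_comp2 dα, pd_qq]; simp [fd_q dα (hαq _ _ hq)]
    have pb2 : pd 2 b x = βz (qq x) (x 2) := by
      rw [hb, pd_comp2 dβ, pd_qq]; simp [fd_z dβ (hβz _ _ hq)]
    have hdF : ∑ j, fderiv ℝ (F j) x (ee j) = (2 * a x + 2 * qq x * αq (qq x) (x 2) + βz (qq x) (x 2)) * N x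
        + a x * (x 0 * pd 0 N x + x 1 * pd 1 N x) + b x * pd 2 N x := by
      rw [Fin.sum_univ_three]
      have f0 : fderiv ℝ (F 0) x (ee 0) = a x * N x + x 0 * (pd 0 a x * N x + a x * pd 0 N x) := by
        have := pd_mul 0 ((hasFDerivAt_coord 0 x).differentiableAt) (da.fun_mul dN)
        rw [pd_coord, pd_mul 0 da dN] at this
        simp only [if_true, one_mul] at this
        exact this
      have f1 : fderiv ℝ (F 1) x (ee 1) = a x * N x + x 1 * (pd 1 a x * N x + a x * pd 1 N x) := by
        have := pd_mul 1 ((hasFDerivAt_coord 1 x).differentiableAt) (da.fun_mul dN)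
        rw [pd_coord, pd_mul 1 da dN] at this
        simp only [if_true, one_mul] at this
        exact this
      have f2 : fderiv ℝ (F 2) x (ee 2) = pd 2 b x * N x + b x * pd 2 N x := pd_mul 2 db dN
      rw [f0, f1, f2, pa0, pa1, pb2]; unfold qq; ring
    have hang1 : x 0 * pd 1 (rp v) x - x 1 * pd 0 (rp v) x = -(m * ip v x) := by
      have := congrArg Complex.re (hang x)
      rw [pd_rp dv, pd_rp dv]; simpa using this
    have hang2 : x 0 * pd 1 (ip v) x - x 1 * pd 0 (ip v) x = m * rp v x := by
      have := congrArg Complex.im (hang x)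
      rw [pd_ip dv, pd_ip dv]; simpa using this
    have halg := alg_vf (B := B) (a := a x) (b := b x) (p2 := pd 2 (rp v) x) (s2 := pd 2 (ip v) x) (q := qq x) rfl hq hang1 hang2
    have hE : magEnergyDensity B v x = _ := magE_real B dv
    rw [hNn, hdF, hE, Fin.sum_univ_three, hNp, hNp, hNp]
    have hA0 : Avec B x 0 = -(B / 2) * x 1 := rfl
    have hA1 : Avec B x 1 = B / 2 * x 0 := rfl
    have hA2 : Avec B x 2 = 0 := rfl
    rw [hA0, hA1, hA2]
    have hwb : w x * N x ≤ ((m + B * qq x / 2) ^ 2 / qq x - (a x ^ 2 * qq x + b x ^ 2)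
        - (2 * a x + 2 * qq x * αq (qq x) (x 2) + βz (qq x) (x 2))) * N x := by
      by_cases hv0 : v x = 0
      · have : N x = 0 := by rw [← hNn, hv0]; simp
        rw [this, mul_zero, mul_zero]
      · exact mul_le_mul_of_nonneg_right (hin x hx hv0) (by simp only [hN]; positivity)
    have hNx : N x = rp v x ^ 2 + ip v x ^ 2 := rfl
    rw [← hNx] at halg
    linarith
  rw [integral_add (integrableOn_ball hwN) (integrableOn_ball hcF)] at hsum
  linarith

lemma alg_X {b q z t Y τ R k kp s sp h hp Θ c₁ m f1 f2 : ℝ} (hb : b ≠ 0) (hq0 : q ≠ 0) (hY : Y = 1 - z ^ 2)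
    (hq : q = Y - t) (hτ : τ = b ^ 2 * (-q / 2 - m / b ^ 4))
    (h1 : f1 = b ^ 2 * (Y * (R + c₁ * h ^ 2 * k)))
    (h2 : f2 = b ^ 2 * (-(c₁ / 1000) * s * h - 0.8 * z * (2 - z ^ 2) * τ / q)) :
    (m + b ^ 4 * q / 2) ^ 2 / q - ((-f1 - z * f2) ^ 2 * q + (-z * f1 + q * f2) ^ 2)
      - (2 * (-f1 - z * f2) + 2 * q * (b ^ 4 / 2 * Y * ((τ ^ 2 - Θ - R ^ 2) + c₁ * h ^ 2 * (-kp))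
          - z * b ^ 2 * (0.8 * z * (2 - z ^ 2) * b ^ 2 / (2 * q) + 0.8 * z * (2 - z ^ 2) * τ / q ^ 2))
        + (-f1 - z * (b ^ 2 * (-2 * z * (R + c₁ * h ^ 2 * k) + Y * k * (2 * c₁ * h * hp * b ^ 2 * z)))
          + q * b ^ 2 * (-(c₁ / 1000) * sp * h - c₁ / 1000 * s * hp * b ^ 2 * z - 0.8 * (2 - 3 * z ^ 2) * τ / q)))
    = b ^ 4 * (τ ^ 2 / q + (-(q * Y * ((τ ^ 2 - Θ - R ^ 2) + c₁ * h ^ 2 * (-kp))) + 1 / b ^ 2 * (3 * Y - 2 * z ^ 2) * (R + c₁ * h ^ 2 * k)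
      + 2 * c₁ * Y * z ^ 2 * k * h * hp + 0.8 * z * (2 - z ^ 2) * z + c₁ / 1000 * q * s * z * hp
      + 1 / b ^ 2 * (c₁ / 1000 * q * sp * h - 2 * (c₁ / 1000) * z * s * h + 0.8 * (2 - 3 * z ^ 2) * τ))
      - ((1 - t) * Y ^ 2 * (R + c₁ * h ^ 2 * k) ^ 2
        + (1 - t) * q * (-(c₁ / 1000) * s * h - 0.8 * z * (2 - z ^ 2) * τ / q) ^ 2)) := by
  have e1 : (m + b ^ 4 * q / 2) ^ 2 = b ^ 4 * τ ^ 2 := by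
    rw [hτ]; field_simp; ring
  have e2 : (-f1 - z * f2) ^ 2 * q + (-z * f1 + q * f2) ^ 2 = (q + z ^ 2) * f1 ^ 2 + (q + z ^ 2) * q * f2 ^ 2 := by ring
  have e3 : q + z ^ 2 = 1 - t := by rw [hq, hY]; ring
  rw [e1, e2, e3]
  clear e1 e2 e3 hτ hq hY
  obtain ⟨M, hM⟩ : ∃ M, M = R + c₁ * h ^ 2 * k := ⟨_, rfl⟩
  obtain ⟨D, hD⟩ : ∃ M, M = (τ ^ 2 - Θ - R ^ 2) + c₁ * h ^ 2 * (-kp) := ⟨_, rfl⟩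
  obtain ⟨κ, hκ⟩ : ∃ M, M = c₁ / 1000 := ⟨_, rfl⟩
  rw [← hM, ← hD, ← hκ]
  rw [← hM] at h1; rw [← hκ] at h2
  clear hM hD hκ
  rw [h1, h2]
  field_simp
  ring

lemma main_mode {R : ℝ → ℝ} {ξ₀ cf c₁ : ℝ} (hcf : 3 * c₁ ≤ cf) (hc0 : 0 < c₁) (hc1 : c₁ ≤ 1 / 10000)
    (hR : ∀ τ, HasDerivAt R (τ ^ 2 - Theta0 - R τ ^ 2) τ)
    (hR2 : ∀ τ, R τ ^ 2 ≤ τ ^ 2 + 1 - Theta0) (hR0 : ∀ τ, R τ ≤ 0) (hRl : ∀ τ, |τ| / 2 - 2 ≤ -R τ)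
    (hRq : ∀ τ, cf * ((τ - ξ₀) ^ 2 / (1 + (τ - ξ₀) ^ 2)) ≤ -R τ)
    {b m : ℝ} (hb : 100 ≤ b) (hβc : 10 * (1 / b ^ 2) ≤ 0.0045 * c₁) {v : E3 → ℂ} (hv : ContDiff ℝ 1 v)
    (hang : ∀ x : E3, (x 0 : ℂ) * fderiv ℝ v x (ee 1) - (x 1 : ℂ) * fderiv ℝ v x (ee 0) = Complex.I * m * v x)
    (hs : ∀ x, v x ≠ 0 → |x 2| ≤ 0.95 ∧ TT x ≤ 2 / b) :
    ∫ x in ball3, (b ^ 4 * (Theta0 + 3 / 1000000 * c₁ * |x 2| - (50 + 5 * |ξ₀|) / b)) * ‖v x‖ ^ 2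
      ≤ ∫ x in ball3, magEnergyDensity (b ^ 4) v x := by
  have hb0 : 0 < b := by linarith
  have h2b : 2 / b ≤ 0.02 := by rw [div_le_iff₀ hb0]; linarith
  have h4b : 4 / b = 2 * (2 / b) := by ring
  have hRc : Continuous R := continuous_iff_continuousAt.2 fun t => (hR t).continuousAt
  have hRC : ContDiff ℝ 1 R := by
    rw [contDiff_one_iff_deriv]
    refine ⟨fun t => (hR t).differentiableAt, ?_⟩
    have : deriv R = fun τ => τ ^ 2 - Theta0 - R τ ^ 2 := funext fun t => (hR t).deriv
    rw [this]; fun_prop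
  have hhC := hh_contDiff
  refine vf (α := fun p => -(b ^ 2 * ((1 - p.2 ^ 2) * (R (b ^ 2 * (-p.1 / 2 - m / b ^ 4))
        + c₁ * hh (b ^ 2 * ((p.2 ^ 2 - 1) / 2 - m / b ^ 4) - ξ₀) ^ 2 * (2 - hh (b ^ 2 * (-p.1 / 2 - m / b ^ 4))))))
      - p.2 * (b ^ 2 * (-(c₁ / 1000) * hh (b * p.2) * hh (b ^ 2 * ((p.2 ^ 2 - 1) / 2 - m / b ^ 4) - ξ₀)
        - 0.8 * p.2 * (2 - p.2 ^ 2) * (b ^ 2 * (-p.1 / 2 - m / b ^ 4)) / p.1)))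
    (β := fun p => -p.2 * (b ^ 2 * ((1 - p.2 ^ 2) * (R (b ^ 2 * (-p.1 / 2 - m / b ^ 4))
        + c₁ * hh (b ^ 2 * ((p.2 ^ 2 - 1) / 2 - m / b ^ 4) - ξ₀) ^ 2 * (2 - hh (b ^ 2 * (-p.1 / 2 - m / b ^ 4))))))
      + p.1 * (b ^ 2 * (-(c₁ / 1000) * hh (b * p.2) * hh (b ^ 2 * ((p.2 ^ 2 - 1) / 2 - m / b ^ 4) - ξ₀)
        - 0.8 * p.2 * (2 - p.2 ^ 2) * (b ^ 2 * (-p.1 / 2 - m / b ^ 4)) / p.1)))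
    (αq := fun q z => b ^ 4 / 2 * (1 - z ^ 2) * (((b ^ 2 * (-q / 2 - m / b ^ 4)) ^ 2 - Theta0 - R (b ^ 2 * (-q / 2 - m / b ^ 4)) ^ 2)
          + c₁ * hh (b ^ 2 * ((z ^ 2 - 1) / 2 - m / b ^ 4) - ξ₀) ^ 2 * (-hd (b ^ 2 * (-q / 2 - m / b ^ 4))))
          - z * b ^ 2 * (0.8 * z * (2 - z ^ 2) * b ^ 2 / (2 * q) + 0.8 * z * (2 - z ^ 2) * (b ^ 2 * (-q / 2 - m / b ^ 4)) / q ^ 2))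
    (βz := fun q z => -(b ^ 2 * ((1 - z ^ 2) * (R (b ^ 2 * (-q / 2 - m / b ^ 4))
        + c₁ * hh (b ^ 2 * ((z ^ 2 - 1) / 2 - m / b ^ 4) - ξ₀) ^ 2 * (2 - hh (b ^ 2 * (-q / 2 - m / b ^ 4))))))
        - z * (b ^ 2 * (-2 * z * (R (b ^ 2 * (-q / 2 - m / b ^ 4))
          + c₁ * hh (b ^ 2 * ((z ^ 2 - 1) / 2 - m / b ^ 4) - ξ₀) ^ 2 * (2 - hh (b ^ 2 * (-q / 2 - m / b ^ 4))))
          + (1 - z ^ 2) * (2 - hh (b ^ 2 * (-q / 2 - m / b ^ 4))) * (2 * c₁ * hh (b ^ 2 * ((z ^ 2 - 1) / 2 - m / b ^ 4) - ξ₀)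
            * hd (b ^ 2 * ((z ^ 2 - 1) / 2 - m / b ^ 4) - ξ₀) * b ^ 2 * z)))
          + q * b ^ 2 * (-(c₁ / 1000) * (b * hd (b * z)) * hh (b ^ 2 * ((z ^ 2 - 1) / 2 - m / b ^ 4) - ξ₀)
            - c₁ / 1000 * hh (b * z) * hd (b ^ 2 * ((z ^ 2 - 1) / 2 - m / b ^ 4) - ξ₀) * b ^ 2 * z
            - 0.8 * (2 - 3 * z ^ 2) * (b ^ 2 * (-q / 2 - m / b ^ 4)) / q))
    hv hang ?_ ?_ ?_ ?_ ?_ ?_ ?_ ?_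
  · intro x hx
    by_cases hz : |x 2| ≤ 0.95
    · have h1 : 2 / b < TT x := by
        have : x 2 ^ 2 ≤ 0.9025 := by
          rw [← sq_abs]; exact (pow_le_pow_left₀ (abs_nonneg _) hz 2).trans (by norm_num)
        unfold qq at hx; unfold TT; linarith
      have h2 : ∀ᶠ y in 𝓝 x, 2 / b < TT y := (contDiff_TT (n := 1)).continuous.continuousAt.eventually (lt_mem_nhds h1)
      filter_upwards [h2] with y hy
      by_contra h
      exact absurd (hs y h).2 (not_le.2 hy)
    · push Not at hz
      have h2 : ∀ᶠ y : E3 in 𝓝 x, 0.95 < |y 2| := (continuous_coord 2).abs.continuousAt.eventually (lt_mem_nhds hz)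
      filter_upwards [h2] with y hy
      by_contra h
      exact absurd (hs y h).1 (not_le.2 hy)
  · intro p hp
    have := hp.ne'
    fun_prop (disch := assumption)
  · intro p hp
    have := hp.ne'
    fun_prop (disch := assumption)
  · intro q z hq
    dsimp only
    obtain ⟨h, hh_⟩ : ∃ h, h = hh (b ^ 2 * ((z ^ 2 - 1) / 2 - m / b ^ 4) - ξ₀) := ⟨_, rfl⟩
    rw [← hh_]
    have d0 : HasDerivAt (fun t : ℝ => b ^ 2 * (-t / 2 - m / b ^ 4)) (b ^ 2 * (-1 / 2)) q :=
      ((((hasDerivAt_id q).fun_neg.div_const 2).sub_const _).const_mul _)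
    have d1 := HasDerivAt.comp q (hR _) d0
    have d2 := HasDerivAt.comp q (hh_deriv _) d0
    have d3 := (((d1.fun_add ((d2.const_sub 2).const_mul (c₁ * h ^ 2))).const_mul (1 - z ^ 2)).const_mul (b ^ 2)).fun_neg
    have d4 := ((((d0.const_mul (0.8 * z * (2 - z ^ 2))).fun_div (hasDerivAt_id q) hq.ne').const_sub (-(c₁ / 1000) * hh (b * z) * h)).const_mul (b ^ 2)).const_mul z
    refine (d3.fun_sub d4).congr_deriv ?_
    simp only [id]
    have := hq.ne'
    field_simp
    ring
  · intro q z hq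
    dsimp only
    obtain ⟨τ, hτ⟩ : ∃ h, h = b ^ 2 * (-q / 2 - m / b ^ 4) := ⟨_, rfl⟩
    rw [← hτ]
    have d0 : HasDerivAt (fun t : ℝ => b ^ 2 * ((t ^ 2 - 1) / 2 - m / b ^ 4) - ξ₀) (b ^ 2 * (2 * z / 2)) z := by
      have := (((((hasDerivAt_pow 2 z).sub_const 1).div_const 2).sub_const (m / b ^ 4)).const_mul (b ^ 2)).sub_const ξ₀
      simpa using this
    have d1 := HasDerivAt.comp z (hh_deriv _) d0
    have d1' : HasDerivAt (fun t : ℝ => b * t) (b * 1) z := (hasDerivAt_id z).const_mul b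
    have d2 := HasDerivAt.comp z (hh_deriv _) d1'
    have dz := hasDerivAt_id z
    have dY : HasDerivAt (fun t : ℝ => 1 - t ^ 2) (-(2 * z)) z := by
      simpa using (hasDerivAt_pow 2 z).const_sub 1
    have dY2 : HasDerivAt (fun t : ℝ => 2 - t ^ 2) (-(2 * z)) z := by
      simpa using (hasDerivAt_pow 2 z).const_sub 2
    have d3 := dz.fun_neg.fun_mul ((dY.fun_mul ((((d1.fun_pow 2).const_mul c₁).mul_const (2 - hh τ)).const_add (R τ))).const_mul (b ^ 2))
    have d4 := ((((d2.const_mul (-(c₁ / 1000))).fun_mul d1).fun_sub ((((dz.const_mul 0.8).fun_mul dY2).mul_const τ).div_const q)).const_mul (b ^ 2)).const_mul q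
    refine (d3.fun_add d4).congr_deriv ?_
    simp only [id, Function.comp]
    push_cast
    generalize hh (b ^ 2 * ((z ^ 2 - 1) / 2 - m / b ^ 4) - ξ₀) = h
    generalize hd (b ^ 2 * ((z ^ 2 - 1) / 2 - m / b ^ 4) - ξ₀) = hp
    have := hq.ne'
    ring
  · intro q z hq hqz
    dsimp only
    have e : b ^ 2 * ((z ^ 2 - 1) / 2 - m / b ^ 4) = b ^ 2 * (-q / 2 - m / b ^ 4) := by
      rw [show z ^ 2 = 1 - q by linarith]; ring
    rw [e]
    obtain ⟨τ, hτ⟩ : ∃ h, h = b ^ 2 * (-q / 2 - m / b ^ 4) := ⟨_, rfl⟩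
    rw [← hτ]
    obtain ⟨g, hg⟩ : ∃ g, g = b ^ 2 * (-(c₁ / 1000) * hh (b * z) * hh (τ - ξ₀) - 0.8 * z * (2 - z ^ 2) * τ / q) := ⟨_, rfl⟩
    rw [← hg]
    have hle : R τ + c₁ * hh (τ - ξ₀) ^ 2 * (2 - hh τ) ≤ 0 := by
      have h1 := hRq τ
      rw [← hh_sq] at h1
      have h2 := (abs_le.1 (hh_abs τ)).1
      have h3 := sq_nonneg (hh (τ - ξ₀))
      have h4 : c₁ * hh (τ - ξ₀) ^ 2 * (2 - hh τ) ≤ c₁ * hh (τ - ξ₀) ^ 2 * 3 :=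
        mul_le_mul_of_nonneg_left (by linarith) (by positivity)
      have h5 := mul_le_mul_of_nonneg_right hcf h3
      linarith
    generalize R τ + c₁ * hh (τ - ξ₀) ^ 2 * (2 - hh τ) = M at *
    have : q * (-(b ^ 2 * ((1 - z ^ 2) * M)) - z * g) + z * (-z * (b ^ 2 * ((1 - z ^ 2) * M)) + q * g)
        = b ^ 2 * (1 - z ^ 2) * (-M) := by
      have : z ^ 2 = 1 - q := by linarith
      have e2 : q * (-(b ^ 2 * ((1 - z ^ 2) * M)) - z * g) + z * (-z * (b ^ 2 * ((1 - z ^ 2) * M)) + q * g)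
        = (q + z ^ 2) * (b ^ 2 * (1 - z ^ 2) * (-M)) := by ring
      rw [e2, hqz, one_mul]
    rw [this]
    exact mul_nonneg (mul_nonneg (by positivity) (by linarith)) (by linarith)
  · have := (continuous_coord 2).abs
    fun_prop
  · intro x hx hvx
    obtain ⟨hz, hT⟩ := hs x hvx
    have hTp := TT_pos hx
    have hqT : qq x = (1 - x 2 ^ 2) - 2 * TT x := by unfold qq TT; ring
    have hz2 : x 2 ^ 2 ≤ 0.9025 := by
      rw [← sq_abs]; exact (pow_le_pow_left₀ (abs_nonneg _) hz 2).trans (by norm_num)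
    have hqp : 0 < qq x := by rw [hqT]; linarith
    have hk := abs_le.1 (hh_abs (b ^ 2 * (-qq x / 2 - m / b ^ 4)))
    have hQ := scalar_Q (Θ := Theta0) (c₁ := c₁) (ξ₀ := ξ₀) Theta0_nonneg Theta0_le hc0 hc1 (β := 1 / b ^ 2) (z := x 2)
      (t := 2 * TT x) (q := qq x) (Y := 1 - x 2 ^ 2) (τ := b ^ 2 * (-qq x / 2 - m / b ^ 4))
      (ξ := b ^ 2 * ((x 2 ^ 2 - 1) / 2 - m / b ^ 4)) (R := R (b ^ 2 * (-qq x / 2 - m / b ^ 4)))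
      (k := 2 - hh (b ^ 2 * (-qq x / 2 - m / b ^ 4))) (kp := hd (b ^ 2 * (-qq x / 2 - m / b ^ 4)))
      (s := hh (b * x 2)) (sp := b * hd (b * x 2)) (b := b) hb0 rfl hβc (by linarith) hz rfl (by linarith) (by linarith)
      (by linarith) hqT (by rw [hqT]; ring) (hR0 _) (hR2 _) (hRl _) (by linarith [hk.2]) (by linarith [hk.1]) rfl (hh_abs _)
      (hh_mul_ge hb0 _) (by
        rw [abs_of_pos (mul_pos hb0 (hd_pos _))]
        have := mul_le_mul_of_nonneg_left (hd_le (b * x 2)) hb0.le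
        linarith) rfl rfl
    have hA := alg_X (b := b) (q := qq x) (z := x 2) (t := 2 * TT x) (Y := 1 - x 2 ^ 2) (τ := b ^ 2 * (-qq x / 2 - m / b ^ 4))
      (R := R (b ^ 2 * (-qq x / 2 - m / b ^ 4))) (k := 2 - hh (b ^ 2 * (-qq x / 2 - m / b ^ 4))) (kp := hd (b ^ 2 * (-qq x / 2 - m / b ^ 4)))
      (s := hh (b * x 2)) (sp := b * hd (b * x 2)) (h := hh (b ^ 2 * ((x 2 ^ 2 - 1) / 2 - m / b ^ 4) - ξ₀))
      (hp := hd (b ^ 2 * ((x 2 ^ 2 - 1) / 2 - m / b ^ 4) - ξ₀)) (Θ := Theta0) (c₁ := c₁) (m := m)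
      hb0.ne' hqp.ne' rfl hqT rfl rfl rfl
    exact (mul_le_mul_of_nonneg_left hQ (by positivity)).trans hA.ge

lemma main_est : ∃ c₄ C₅ b₀ : ℝ, 0 < c₄ ∧ c₄ ≤ 1/1000 ∧ 0 < C₅ ∧ 100 ≤ b₀ ∧ ∀ b, b₀ ≤ b → ∀ v : E3 → ℂ, ContDiff ℝ 1 v →
    (∀ x, v x ≠ 0 → |x 2| ≤ 0.95 ∧ TT x ≤ 2 / b) →
    ∫ x in ball3, (b ^ 4 * (Theta0 + c₄ * |x 2| - C₅ / b)) * ‖v x‖ ^ 2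
      ≤ ∫ x in ball3, magEnergyDensity (b ^ 4) v x := by
  obtain ⟨R, ξ₀, cf, hcf, hR, hR2, hR0, hRl, hRq⟩ := R_full
  obtain ⟨c₁, hc⟩ : ∃ c₁, c₁ = min (cf / 3) (1 / 10000) := ⟨_, rfl⟩
  have hc0 : 0 < c₁ := by rw [hc]; exact lt_min (by positivity) (by norm_num)
  have hc1 : c₁ ≤ 1 / 10000 := by rw [hc]; exact min_le_right _ _
  have hc3 : 3 * c₁ ≤ cf := by have : c₁ ≤ cf / 3 := by rw [hc]; exact min_le_left _ _
                               linarith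
  refine ⟨3 / 1000000 * c₁, 50 + 5 * |ξ₀|, max 100 (10000 / c₁), by positivity, by linarith, by positivity, le_max_left _ _, ?_⟩
  intro b hb v hv hs
  have hb1 : 100 ≤ b := (le_max_left _ _).trans hb
  have hb2 : 10000 / c₁ ≤ b := (le_max_right _ _).trans hb
  have hb0 : 0 < b := by linarith
  have hβ : 10 * (1 / b ^ 2) ≤ 0.0045 * c₁ := by
    rw [div_le_iff₀ hc0] at hb2
    have : 10000 ≤ b ^ 2 * c₁ := by nlinarith
    rw [mul_one_div, div_le_iff₀ (by positivity)]; linarith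
  refine mode_red (b ^ 4) hv (by have := (continuous_coord 2).abs; fun_prop) (fun x y _ h => by rw [h]) fun m => ?_
  refine main_mode (m := m) hc3 hc0 hc1 hR hR2 hR0 hRl hRq hb1 hβ (modeF_contDiff hv m) (fun x => by simpa using modeF_ang hv m x) ?_
  intro x hx
  by_contra hcon
  apply hx
  apply modeF_zero
  intro y hy1 hy2
  by_contra hvy
  apply hcon
  have := hs y hvy
  have e : TT y = TT x := by unfold TT; rw [hy1, hy2]
  rwa [hy2, e] at this

def cw (α : E3 → ℝ) (u : E3 → ℂ) : E3 → ℂ := fun y => ((cos (α y) : ℝ) : ℂ) * u y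
def sw (α : E3 → ℝ) (u : E3 → ℂ) : E3 → ℂ := fun y => ((sin (α y) : ℝ) : ℂ) * u y

lemma cw_contDiff {n : WithTop ℕ∞} {α : E3 → ℝ} {u : E3 → ℂ} (hα : ContDiff ℝ n α) (hu : ContDiff ℝ n u) :
    ContDiff ℝ n (cw α u) := rmul_contDiff hα.cos hu
lemma sw_contDiff {n : WithTop ℕ∞} {α : E3 → ℝ} {u : E3 → ℂ} (hα : ContDiff ℝ n α) (hu : ContDiff ℝ n u) :
    ContDiff ℝ n (sw α u) := rmul_contDiff hα.sin hu

lemma cw_norm (α : E3 → ℝ) (u : E3 → ℂ) (x : E3) : ‖cw α u x‖ ^ 2 = cos (α x) ^ 2 * ‖u x‖ ^ 2 := by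
  simp only [cw]; rw [norm_mul, mul_pow, Complex.norm_real, norm_eq_abs, sq_abs]
lemma sw_norm (α : E3 → ℝ) (u : E3 → ℂ) (x : E3) : ‖sw α u x‖ ^ 2 = sin (α x) ^ 2 * ‖u x‖ ^ 2 := by
  simp only [sw]; rw [norm_mul, mul_pow, Complex.norm_real, norm_eq_abs, sq_abs]

lemma ims_int (B K : ℝ) {u : E3 → ℂ} (hu : ContDiff ℝ 1 u) {α : E3 → ℝ} (hα : ContDiff ℝ 1 α)
    (hK : ∀ x ∈ ball3, ∑ j, pd j α x ^ 2 ≤ K) :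
    (∫ x in ball3, magEnergyDensity B (cw α u) x) + (∫ x in ball3, magEnergyDensity B (sw α u) x)
      ≤ (∫ x in ball3, magEnergyDensity B u x) + ∫ x in ball3, K * ‖u x‖ ^ 2 := by
  have i1 := integrableOn_ball (magE_cont B (cw_contDiff hα hu))
  have i2 := integrableOn_ball (magE_cont B (sw_contDiff hα hu))
  have i3 := integrableOn_ball (magE_cont B hu)
  have i4 : IntegrableOn (fun x => K * ‖u x‖ ^ 2) ball3 := integrableOn_ball (continuous_const.mul (nsq_cont hu))
  rw [← integral_add i1 i2, ← integral_add i3 i4]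
  refine setIntegral_mono_on (i1.add i2) (i3.add i4) measurableSet_ball3 fun x hx => ?_
  have h : magEnergyDensity B u x = magEnergyDensity B (cw α u) x + magEnergyDensity B (sw α u) x
      - (∑ j, pd j α x ^ 2) * ‖u x‖ ^ 2 := ims B (hu.differentiable (by norm_num) x) (hα.differentiable (by norm_num) x)
  have h2 := mul_le_mul_of_nonneg_right (hK x hx) (sq_nonneg ‖u x‖)
  linarith

lemma lb_step {B K : ℝ} {u : E3 → ℂ} (hu : ContDiff ℝ 1 u) {α : E3 → ℝ} (hα : ContDiff ℝ 1 α)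
    (hK : ∀ x ∈ ball3, ∑ j, pd j α x ^ 2 ≤ K) {W : E3 → ℝ} (hW : Continuous W)
    (h1 : ∫ x in ball3, W x * ‖cw α u x‖ ^ 2 ≤ ∫ x in ball3, magEnergyDensity B (cw α u) x)
    (h2 : ∫ x in ball3, W x * ‖sw α u x‖ ^ 2 ≤ ∫ x in ball3, magEnergyDensity B (sw α u) x) :
    ∫ x in ball3, (W x - K) * ‖u x‖ ^ 2 ≤ ∫ x in ball3, magEnergyDensity B u x := by
  have h := ims_int B K hu hα hK
  have i4 : IntegrableOn (fun x => K * ‖u x‖ ^ 2) ball3 := integrableOn_ball (continuous_const.mul (nsq_cont hu))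
  have i0 : IntegrableOn (fun x => W x * ‖u x‖ ^ 2) ball3 := integrableOn_ball (hW.mul (nsq_cont hu))
  have i1 : IntegrableOn (fun x => W x * ‖cw α u x‖ ^ 2) ball3 := integrableOn_ball (hW.mul (nsq_cont (cw_contDiff hα hu)))
  have i2 : IntegrableOn (fun x => W x * ‖sw α u x‖ ^ 2) ball3 := integrableOn_ball (hW.mul (nsq_cont (sw_contDiff hα hu)))
  have e : ∫ x in ball3, (W x - K) * ‖u x‖ ^ 2 = (∫ x in ball3, W x * ‖u x‖ ^ 2) - ∫ x in ball3, K * ‖u x‖ ^ 2 := by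
    rw [← integral_sub i0 i4]; congr 1; ext x; ring
  have e2 : ∫ x in ball3, W x * ‖u x‖ ^ 2 = (∫ x in ball3, W x * ‖cw α u x‖ ^ 2) + ∫ x in ball3, W x * ‖sw α u x‖ ^ 2 := by
    rw [← integral_add i1 i2]; congr 1; ext x
    rw [cw_norm, sw_norm]
    have := sin_sq_add_cos_sq (α x)
    rw [show W x * (cos (α x) ^ 2 * ‖u x‖ ^ 2) + W x * (sin (α x) ^ 2 * ‖u x‖ ^ 2) = W x * ‖u x‖ ^ 2 * (sin (α x) ^ 2 + cos (α x) ^ 2) by ring, this, mul_one]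
  linarith

lemma lb_mono {B : ℝ} {u : E3 → ℂ} (hu : ContDiff ℝ 1 u) {W W' : E3 → ℝ} (hW : Continuous W) (hW' : Continuous W')
    (h : ∫ x in ball3, W x * ‖u x‖ ^ 2 ≤ ∫ x in ball3, magEnergyDensity B u x)
    (hl : ∀ x ∈ ball3, u x ≠ 0 → W' x ≤ W x) :
    ∫ x in ball3, W' x * ‖u x‖ ^ 2 ≤ ∫ x in ball3, magEnergyDensity B u x := by
  refine le_trans ?_ h
  refine setIntegral_mono_on (integrableOn_ball (hW'.mul (nsq_cont hu))) (integrableOn_ball (hW.mul (nsq_cont hu)))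
    measurableSet_ball3 fun x hx => ?_
  by_cases h0 : u x = 0
  · simp [h0]
  · exact mul_le_mul_of_nonneg_right (hl x hx h0) (sq_nonneg _)

def Phi (g : E3 → ℝ) : E3 → ℝ := fun y => π / 2 * smoothTransition (g y)

lemma Phi_contDiff {n : ℕ∞} {g : E3 → ℝ} (hg : ContDiff ℝ n g) : ContDiff ℝ n (Phi g) :=
  contDiff_const.mul (smoothTransition.contDiff.comp hg)

lemma Phi_pd {M : ℝ} (hM : ∀ s, |deriv smoothTransition s| ≤ M) {g : E3 → ℝ} (hg : ContDiff ℝ 1 g) (x : E3) {K : ℝ}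
    (hK : ∑ j, pd j g x ^ 2 ≤ K) : ∑ j, pd j (Phi g) x ^ 2 ≤ (2 * M) ^ 2 * K := by
  have e : ∀ j, pd j (Phi g) x = (π / 2 * deriv smoothTransition (g x)) * pd j g x := fun j =>
    pd_comp (h := fun s => π / 2 * smoothTransition s) j ((st_hasDerivAt (g x)).const_mul (π / 2)) (hg.differentiable (by norm_num) x)
  simp only [e, mul_pow]
  rw [← Finset.mul_sum]
  have h1 : (0:ℝ) ≤ ∑ j, pd j g x ^ 2 := Finset.sum_nonneg fun j _ => sq_nonneg _
  have h2 : (π / 2) ^ 2 * deriv smoothTransition (g x) ^ 2 ≤ 2 ^ 2 * M ^ 2 := by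
    refine mul_le_mul (pow_le_pow_left₀ (by positivity) (by linarith [pi_lt_four]) 2) ?_ (sq_nonneg _) (by positivity)
    rw [← sq_abs]; exact pow_le_pow_left₀ (abs_nonneg _) (hM _) 2
  exact mul_le_mul h2 hK h1 (by positivity)

lemma Phi_cw {g : E3 → ℝ} {u : E3 → ℂ} {x : E3} (h : cw (Phi g) u x ≠ 0) : g x < 1 ∧ u x ≠ 0 := by
  simp only [cw, ne_eq, mul_eq_zero, not_or] at h
  refine ⟨?_, h.2⟩
  by_contra hg
  apply h.1
  simp [Phi, smoothTransition.one_of_one_le (not_lt.1 hg)]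

lemma Phi_sw {g : E3 → ℝ} {u : E3 → ℂ} {x : E3} (h : sw (Phi g) u x ≠ 0) : 0 < g x ∧ u x ≠ 0 := by
  simp only [sw, ne_eq, mul_eq_zero, not_or] at h
  refine ⟨?_, h.2⟩
  by_contra hg
  apply h.1
  simp [Phi, smoothTransition.zero_of_nonpos (not_lt.1 hg)]

lemma aff_pd (f : E3 → ℝ) (hf : ContDiff ℝ 1 f) (a c : ℝ) (j : Fin 3) (x : E3) :
    pd j (fun y => a * f y + c) x = a * pd j f x := by
  have h : HasDerivAt (fun t : ℝ => a * t + c) a (f x) := by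
    simpa using ((hasDerivAt_id (f x)).const_mul a).add_const c
  exact pd_comp (h := fun t => a * t + c) j h (hf.differentiable (by norm_num) x)

lemma aff_T (a c : ℝ) {x : E3} (hx : x ∈ ball3) : ∑ j, pd j (fun y => a * TT y + c) x ^ 2 ≤ a ^ 2 := by
  simp only [aff_pd TT contDiff_TT]
  have e : ∑ j, (a * pd j TT x) ^ 2 = a ^ 2 * ‖x‖ ^ 2 := by
    rw [Fin.sum_univ_three, norm_sq3]; simp only [pd, fderiv_TT]; ring
  rw [e]
  rw [mem_ball3] at hx
  have : ‖x‖ ^ 2 ≤ 1 := pow_le_one₀ (norm_nonneg _) hx.le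
  nlinarith [sq_nonneg a]

lemma aff_z (a c : ℝ) (x : E3) : ∑ j, pd j (fun y => a * y 2 + c) x ^ 2 ≤ a ^ 2 := by
  simp only [aff_pd (fun y => y 2) (contDiff_coord 2)]
  rw [Fin.sum_univ_three]; simp only [pd_coord]; simp

lemma zball {x : E3} (hx : x ∈ ball3) : |x 2| ≤ 1 := by
  rw [mem_ball3] at hx
  have h1 : ‖x‖ ^ 2 ≤ 1 := pow_le_one₀ (norm_nonneg _) hx.le
  rw [norm_sq3] at h1
  rw [← sq_le_one_iff_abs_le_one]; nlinarith [sq_nonneg (x 0), sq_nonneg (x 1)]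

lemma full_lb : ∃ c₄ C₆ b₀ : ℝ, 0 < c₄ ∧ 0 < C₆ ∧ 100 ≤ b₀ ∧ ∀ b, b₀ ≤ b → ∀ u : E3 → ℂ, ContDiff ℝ 2 u →
    ∫ x in ball3, (b ^ 4 * (Theta0 + c₄ * |x 2| - C₆ / b)) * ‖u x‖ ^ 2
      ≤ ∫ x in ball3, magEnergyDensity (b ^ 4) u x := by
  obtain ⟨c₄, C₅, b₀, hc0, hc1, hC5, hb0, H⟩ := main_est
  obtain ⟨M, hM0, hM⟩ := st_deriv_bound
  refine ⟨c₄, C₅ + (2 * M) ^ 2 * 801, b₀, hc0, by positivity, hb0, ?_⟩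
  intro b hb u hu
  have hbp : 0 < b := by linarith
  have hb1 : 1 ≤ b := by linarith
  have hΘ := Theta0_le
  have gT : ContDiff ℝ ((2:ℕ∞) : WithTop ℕ∞) (fun y => b * TT y + (-1)) := (contDiff_const.mul contDiff_TT).add contDiff_const
  have gp : ContDiff ℝ ((2:ℕ∞) : WithTop ℕ∞) (fun y : E3 => 20 * y 2 + (-18)) := (contDiff_const.mul (contDiff_coord 2)).add contDiff_const
  have gm : ContDiff ℝ ((2:ℕ∞) : WithTop ℕ∞) (fun y : E3 => -20 * y 2 + (-18)) := (contDiff_const.mul (contDiff_coord 2)).add contDiff_const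
  have aT := Phi_contDiff gT
  have ap := Phi_contDiff gp
  have am := Phi_contDiff gm
  have o12 : (1 : WithTop ℕ∞) ≤ ((2:ℕ∞) : WithTop ℕ∞) := by norm_num
  have u1 : ContDiff ℝ 2 (cw (Phi fun y => b * TT y + (-1)) u) := cw_contDiff aT hu
  have u2 : ContDiff ℝ 2 (sw (Phi fun y => b * TT y + (-1)) u) := sw_contDiff aT hu
  have u3 : ContDiff ℝ 2 (cw (Phi fun y => 20 * y 2 + (-18)) (cw (Phi fun y => b * TT y + (-1)) u)) := cw_contDiff ap u1
  have u4 : ContDiff ℝ 2 (sw (Phi fun y => 20 * y 2 + (-18)) (cw (Phi fun y => b * TT y + (-1)) u)) := sw_contDiff ap u1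
  have u5 : ContDiff ℝ 2 (cw (Phi fun y => -20 * y 2 + (-18)) (cw (Phi fun y => 20 * y 2 + (-18)) (cw (Phi fun y => b * TT y + (-1)) u))) := cw_contDiff am u3
  have u6 : ContDiff ℝ 2 (sw (Phi fun y => -20 * y 2 + (-18)) (cw (Phi fun y => 20 * y 2 + (-18)) (cw (Phi fun y => b * TT y + (-1)) u))) := sw_contDiff am u3
  have o : (1 : WithTop ℕ∞) ≤ 2 := by norm_num
  have zc := (continuous_coord 2).abs
  have zc' := (continuous_coord 2)
  have hWle : ∀ x ∈ ball3, b ^ 4 * (Theta0 + c₄ * |x 2| - C₅ / b) ≤ b ^ 4 * 0.9 := by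
    intro x hx
    have h1 := zball hx
    have h2 : 0 ≤ C₅ / b := by positivity
    refine mul_le_mul_of_nonneg_left ?_ (by positivity)
    nlinarith [abs_nonneg (x 2)]
  have hK1 : 0 ≤ (2 * M) ^ 2 * 400 := by positivity
  have hW : Continuous fun x : E3 => b ^ 4 * (Theta0 + c₄ * |x 2| - C₅ / b) := by fun_prop
  have s1 := H b hb _ (u5.of_le o) (by
    intro x hx
    obtain ⟨h1, hx⟩ := Phi_cw hx
    obtain ⟨h2, hx⟩ := Phi_cw hx
    obtain ⟨h3, _⟩ := Phi_cw hx
    refine ⟨abs_le.2 ⟨by linarith, by linarith⟩, ?_⟩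
    rw [le_div_iff₀ hbp]; linarith)
  have s2 := comm_x (b ^ 4) (-1) (Or.inr rfl) u6
  have s2' := lb_mono (u6.of_le o) (by fun_prop) hW s2 (by
    intro x hx h
    have h1 := (Phi_sw h).1
    have h2 := hWle x hx
    have : b ^ 4 * 0.9 ≤ b ^ 4 * (-x 2) := mul_le_mul_of_nonneg_left (by linarith) (by positivity)
    linarith)
  have t1 := lb_step (u3.of_le o) (am.of_le o12) (fun x hx => Phi_pd hM (gm.of_le o12) x (aff_z _ _ x)) hW s1 s2'
  have s3 := comm_x (b ^ 4) 1 (Or.inl rfl) u4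
  have s3' := lb_mono (u4.of_le o) (by fun_prop) (hW.sub continuous_const) s3 (W' := fun x => b ^ 4 * (Theta0 + c₄ * |x 2| - C₅ / b) - (2 * M) ^ 2 * (-20) ^ 2) (by
    intro x hx h
    have h1 := (Phi_sw h).1
    have h2 := hWle x hx
    have : b ^ 4 * 0.9 ≤ b ^ 4 * (x 2) := mul_le_mul_of_nonneg_left (by linarith) (by positivity)
    linarith)
  have t2 := lb_step (u1.of_le o) (ap.of_le o12) (fun x hx => Phi_pd hM (gp.of_le o12) x (aff_z _ _ x)) (hW.sub continuous_const) t1 s3'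
  have s4 := comm_ez (b ^ 4) u2 (by
    intro x hx
    by_contra h
    have h1 := (Phi_sw h).1
    have : TT x = 0 := by rw [TT_eq, hx]; norm_num
    rw [this] at h1; linarith)
  rw [← integral_const_mul] at s4
  have s4' := lb_mono (u2.of_le o) (W := fun _ => b ^ 4) (by fun_prop) ((hW.sub continuous_const).sub continuous_const) s4 (W' := fun x => b ^ 4 * (Theta0 + c₄ * |x 2| - C₅ / b) - (2 * M) ^ 2 * (-20) ^ 2 - (2 * M) ^ 2 * 20 ^ 2) (by
    intro x hx _
    have h2 := hWle x hx
    have : 0 ≤ b ^ 4 := by positivity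
    linarith)
  have t3 := lb_step (hu.of_le o) (aT.of_le o12) (fun x hx => Phi_pd hM (gT.of_le o12) x (aff_T _ _ hx)) ((hW.sub continuous_const).sub continuous_const) t2 s4'
  refine lb_mono (hu.of_le o) (((hW.sub continuous_const).sub continuous_const).sub continuous_const) (by fun_prop) t3 ?_
  intro x _ _
  have e : b ^ 4 * (Theta0 + c₄ * |x 2| - (C₅ + (2 * M) ^ 2 * 801) / b) = b ^ 4 * (Theta0 + c₄ * |x 2| - C₅ / b) - (2 * M) ^ 2 * 801 * b ^ 3 := by
    field_simp; ring
  rw [e]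
  have h3 : 1 ≤ b ^ 3 := one_le_pow₀ hb1
  have h4 : b ^ 2 ≤ b ^ 3 := pow_le_pow_right₀ hb1 (by norm_num)
  have h5 : 0 ≤ (2 * M) ^ 2 := by positivity
  have h6 := mul_le_mul_of_nonneg_left h3 h5
  have h7 := mul_le_mul_of_nonneg_left h4 h5
  clear s1 s2 s2' t1 s3 s3' t2 s4 s4' t3 H hWle
  simp only [Pi.sub_apply]
  generalize b ^ 4 * (Theta0 + c₄ * |x 2| - C₅ / b) = W₀
  linarith

lemma tang_agmon (ω : ℝ) (hω : 0 < ω) : ∃ K b₀ : ℝ, 0 < K ∧ 100 ≤ b₀ ∧ ∀ b, b₀ ≤ b → ∀ (lam : ℝ) (Ψ : E3 → ℂ),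
    IsNeumannEigenfunction (b ^ 4) lam Ψ → lam ≤ Theta0 * b ^ 4 + ω * b ^ 3 →
    ∫ x in ball3, cosh (b * x 2) ^ 2 * ‖Ψ x‖ ^ 2 ≤ K * ∫ x in ball3, ‖Ψ x‖ ^ 2 := by
  obtain ⟨c₄, C₆, b₀, hc, hC, hb0, H⟩ := full_lb
  obtain ⟨C₇, hC7⟩ : ∃ C₇, C₇ = C₆ + ω + 1 := ⟨_, rfl⟩
  obtain ⟨D, hD⟩ : ∃ D, D = cosh ((C₇ + 1) / c₄) ^ 2 := ⟨_, rfl⟩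
  have hD0 : 0 < D := by rw [hD]; have := cosh_pos ((C₇ + 1) / c₄); positivity
  have hC70 : 0 < C₇ := by linarith
  refine ⟨(C₇ + 1) * D, b₀, by positivity, hb0, ?_⟩
  intro b hb lam Ψ hΨ hlam
  have hbp : 0 < b := by linarith
  have hb1 : 1 ≤ b := by linarith
  have hΨ2 := hΨ.1
  have hΨ1 : ContDiff ℝ 1 Ψ := hΨ2.of_le (by norm_num)
  have hG : ∀ n : WithTop ℕ∞, ContDiff ℝ n (fun x : E3 => cosh (b * x 2)) := fun n =>
    Real.contDiff_cosh.comp (contDiff_const.mul (contDiff_coord 2))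
  have hid := agmon_id hΨ (hG 1)
  have hlb := H b hb _ (rmul_contDiff (hG 2) hΨ2)
  rw [hid] at hlb
  have hpd : ∀ x : E3, ∑ j, pd j (fun x : E3 => cosh (b * x 2)) x ^ 2 ≤ b ^ 2 * cosh (b * x 2) ^ 2 := by
    intro x
    have e : ∀ j, pd j (fun x : E3 => cosh (b * x 2)) x = sinh (b * x 2) * b * (if (2 : Fin 3) = j then 1 else 0) := by
      intro j
      have h : HasDerivAt (fun t : ℝ => cosh (b * t)) (sinh (b * x 2) * b) (x 2) := by
        simpa using ((hasDerivAt_id (x 2)).const_mul b).cosh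
      rw [pd_comp (f := fun y : E3 => y 2) (h := fun t => cosh (b * t)) j h ((hasFDerivAt_coord 2 x).differentiableAt), pd_coord]
    simp only [e, Fin.sum_univ_three]
    simp
    rw [cosh_sq]
    nlinarith [sq_nonneg b, sq_nonneg (sinh (b * x 2))]
  have cN := nsq_cont hΨ1
  have cG : Continuous fun x : E3 => cosh (b * x 2) := (hG 1).continuous
  have zc := (continuous_coord 2).abs
  have cP : Continuous fun x => ∑ j, pd j (fun x : E3 => cosh (b * x 2)) x ^ 2 :=
    continuous_finsetSum _ fun j _ => (pd_cont (hG 1) j).pow 2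
  have hn : ∀ x, ‖((cosh (b * x 2) : ℝ) : ℂ) * Ψ x‖ ^ 2 = cosh (b * x 2) ^ 2 * ‖Ψ x‖ ^ 2 := by
    intro x; rw [norm_mul, mul_pow, Complex.norm_real, norm_eq_abs, sq_abs]
  simp only [hn] at hlb
  rw [← integral_const_mul] at hlb
  have i1 : IntegrableOn (fun x : E3 => lam * (cosh (b * x 2) ^ 2 * ‖Ψ x‖ ^ 2)) ball3 := integrableOn_ball (by fun_prop)
  have i2 : IntegrableOn (fun x : E3 => (∑ j, pd j (fun x : E3 => cosh (b * x 2)) x ^ 2) * ‖Ψ x‖ ^ 2) ball3 := integrableOn_ball (cP.mul cN)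
  have i3 : IntegrableOn (fun x : E3 => b ^ 4 * (Theta0 + c₄ * |x 2| - C₆ / b) * (cosh (b * x 2) ^ 2 * ‖Ψ x‖ ^ 2)) ball3 := integrableOn_ball (by fun_prop)
  have i4 : IntegrableOn (fun x : E3 => cosh (b * x 2) ^ 2 * ‖Ψ x‖ ^ 2) ball3 := integrableOn_ball (by fun_prop)
  have i5 : IntegrableOn (fun x : E3 => (C₇ + 1) * D * ‖Ψ x‖ ^ 2) ball3 := integrableOn_ball (by fun_prop)
  have i12 : IntegrableOn (fun x : E3 => lam * (cosh (b * x 2) ^ 2 * ‖Ψ x‖ ^ 2) + (∑ j, pd j (fun x : E3 => cosh (b * x 2)) x ^ 2) * ‖Ψ x‖ ^ 2) ball3 := i1.add i2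
  have key : ∫ x in ball3, b ^ 3 * (cosh (b * x 2) ^ 2 * ‖Ψ x‖ ^ 2 - (C₇ + 1) * D * ‖Ψ x‖ ^ 2) ≤
      ∫ x in ball3, (b ^ 4 * (Theta0 + c₄ * |x 2| - C₆ / b) * (cosh (b * x 2) ^ 2 * ‖Ψ x‖ ^ 2)
        - (lam * (cosh (b * x 2) ^ 2 * ‖Ψ x‖ ^ 2) + (∑ j, pd j (fun x : E3 => cosh (b * x 2)) x ^ 2) * ‖Ψ x‖ ^ 2)) := by
    refine setIntegral_mono_on ((i4.sub i5).const_mul _) (i3.sub (i1.add i2)) measurableSet_ball3 fun x _ => ?_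
    have hg : 1 ≤ cosh (b * x 2) ^ 2 := one_le_pow₀ (one_le_cosh _)
    have hgD : c₄ * |x 2| * b < C₇ + 1 → cosh (b * x 2) ^ 2 ≤ D := by
      intro h
      rw [hD]
      refine pow_le_pow_left₀ (cosh_pos _).le ?_ 2
      rw [cosh_le_cosh, abs_mul, abs_of_pos hbp, abs_of_pos (show 0 < (C₇ + 1) / c₄ by positivity), le_div_iff₀ hc]
      linarith
    have hN := sq_nonneg ‖Ψ x‖
    have hp := mul_le_mul_of_nonneg_right (hpd x) hN
    generalize cosh (b * x 2) ^ 2 = g at *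
    generalize (∑ j, pd j (fun x : E3 => cosh (b * x 2)) x ^ 2) = P at *
    generalize ‖Ψ x‖ ^ 2 = n at *
    have hb3 : b ^ 2 ≤ b ^ 3 := pow_le_pow_right₀ hb1 (by norm_num)
    have e : b ^ 4 * (Theta0 + c₄ * |x 2| - C₆ / b) = Theta0 * b ^ 4 + b ^ 3 * (c₄ * |x 2| * b - C₆) := by
      field_simp; ring
    have hsc : g - (C₇ + 1) * D ≤ (c₄ * |x 2| * b - C₇) * g := by
      rcases lt_or_ge (c₄ * |x 2| * b) (C₇ + 1) with h | h
      · have h1 := hgD h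
        have h2 : 0 ≤ c₄ * |x 2| * b := by positivity
        nlinarith
      · nlinarith [mul_pos (by linarith : 0 < C₇ + 1) hD0]
    have h1 : b ^ 3 * (g - (C₇ + 1) * D) ≤ (b ^ 4 * (Theta0 + c₄ * |x 2| - C₆ / b) - lam - b ^ 2) * g := by
      have h2 := mul_le_mul_of_nonneg_left hsc (by positivity : 0 ≤ b ^ 3)
      have h3 : b ^ 3 * (c₄ * |x 2| * b - C₇) ≤ b ^ 4 * (Theta0 + c₄ * |x 2| - C₆ / b) - lam - b ^ 2 := by
        rw [e, hC7]; linarith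
      have h4 := mul_le_mul_of_nonneg_right h3 (by linarith : 0 ≤ g)
      linarith
    have h5 := mul_le_mul_of_nonneg_right h1 hN
    linarith
  rw [integral_const_mul, integral_sub i4 i5, integral_sub i3 i12, integral_add i1 i2, integral_const_mul] at key
  have : 0 < b ^ 3 := by positivity
  by_contra hcon
  push Not at hcon
  have := mul_pos this (sub_pos.2 hcon)
  linarith

lemma norm_agmon (ω : ℝ) (hω : 0 < ω) : ∃ K b₀ : ℝ, 0 < K ∧ 100 ≤ b₀ ∧ ∀ b, b₀ ≤ b → ∀ (lam : ℝ) (Ψ : E3 → ℂ),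
    IsNeumannEigenfunction (b ^ 4) lam Ψ → lam ≤ Theta0 * b ^ 4 + ω * b ^ 3 →
    ∫ x in ball3, exp (1 / 4 * b ^ 2 * TT x) ^ 2 * ‖Ψ x‖ ^ 2 ≤ K * ∫ x in ball3, ‖Ψ x‖ ^ 2 := by
  obtain ⟨M, hM0, hM⟩ := st_deriv_bound
  refine ⟨16 * exp (8 * M) , max 100 (16 * ω), by positivity, le_max_left _ _, ?_⟩
  intro b hb lam Ψ hΨ hlam
  have hb1 : 100 ≤ b := (le_max_left _ _).trans hb
  have hb2 : 16 * ω ≤ b := (le_max_right _ _).trans hb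
  have hbp : 0 < b := by linarith
  have hΘ := Theta0_le
  have hΨ2 := hΨ.1
  have hΨ1 : ContDiff ℝ 1 Ψ := hΨ2.of_le (by norm_num)
  have hG : ∀ n : WithTop ℕ∞, ContDiff ℝ n (fun x : E3 => exp (1 / 4 * b ^ 2 * TT x)) := fun n =>
    (contDiff_const.mul contDiff_TT).exp
  have hid := agmon_id hΨ (hG 1)
  have hpd : ∀ x ∈ ball3, ∑ j, pd j (fun x : E3 => exp (1 / 4 * b ^ 2 * TT x)) x ^ 2 ≤ b ^ 4 / 16 * exp (1 / 4 * b ^ 2 * TT x) ^ 2 := by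
    intro x hx
    have e : ∀ j, pd j (fun x : E3 => exp (1 / 4 * b ^ 2 * TT x)) x = exp (1 / 4 * b ^ 2 * TT x) * pd j (fun y => 1 / 4 * b ^ 2 * TT y + 0) x := by
      intro j
      have := pd_comp (f := fun y => 1 / 4 * b ^ 2 * TT y + 0) (h := exp) j (hasDerivAt_exp (1 / 4 * b ^ 2 * TT x + 0))
        (((contDiff_const.mul contDiff_TT).add contDiff_const).differentiable (n := 1) (by norm_num) x)
      simpa using this
    simp only [e, mul_pow]
    rw [← Finset.mul_sum]
    have h := mul_le_mul_of_nonneg_left (aff_T (1 / 4 * b ^ 2) 0 hx) (sq_nonneg (exp (1 / 4 * b ^ 2 * TT x)))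
    linarith
  obtain ⟨a, ha⟩ : ∃ a, a = b ^ 2 / (8 * M) := ⟨_, rfl⟩
  have hap : 0 < a := by rw [ha]; positivity
  have gT : ContDiff ℝ ((2:ℕ∞) : WithTop ℕ∞) (fun y => a * TT y + (-1)) := (contDiff_const.mul contDiff_TT).add contDiff_const
  have aT := Phi_contDiff gT
  have o12 : (1 : WithTop ℕ∞) ≤ ((2:ℕ∞) : WithTop ℕ∞) := by norm_num
  have hu2 := rmul_contDiff (hG 2) hΨ2
  have hu1 := rmul_contDiff (hG 1) hΨ1
  have us : ContDiff ℝ 2 (sw (Phi fun y => a * TT y + (-1)) _) := sw_contDiff aT hu2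
  have him := ims_int (b ^ 4) ((2 * M) ^ 2 * a ^ 2) hu1 (aT.of_le o12) (fun x hx => Phi_pd hM (gT.of_le o12) x (aff_T _ _ hx))
  have hcz := comm_ez (b ^ 4) us (by
    intro x hx
    by_contra h
    have h1 := (Phi_sw h).1
    have : TT x = 0 := by rw [TT_eq, hx]; norm_num
    rw [this] at h1; linarith)
  have hc0 : 0 ≤ ∫ x in ball3, magEnergyDensity (b ^ 4) (cw (Phi fun y => a * TT y + (-1)) fun y => ((exp (1 / 4 * b ^ 2 * TT y) : ℝ) : ℂ) * Ψ y) x :=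
    integral_nonneg fun x => Finset.sum_nonneg fun j _ => sq_nonneg _
  rw [hid] at him
  have hn : ∀ x, ‖((exp (1 / 4 * b ^ 2 * TT x) : ℝ) : ℂ) * Ψ x‖ ^ 2 = exp (1 / 4 * b ^ 2 * TT x) ^ 2 * ‖Ψ x‖ ^ 2 := by
    intro x; rw [norm_mul, mul_pow, Complex.norm_real, norm_eq_abs, sq_abs]
  have ean : (2 * M) ^ 2 * a ^ 2 = b ^ 4 / 16 := by rw [ha]; field_simp; norm_num
  rw [ean] at him
  simp only [sw_norm, hn] at hcz him
  rw [← integral_const_mul] at hcz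
  rw [integral_const_mul, ← integral_const_mul] at him
  have cN := nsq_cont hΨ1
  have cG : Continuous fun x : E3 => exp (1 / 4 * b ^ 2 * TT x) := (hG 1).continuous
  have cS : Continuous fun x : E3 => sin (Phi (fun y => a * TT y + (-1)) x) ^ 2 := (Real.continuous_sin.comp aT.continuous).pow 2
  have cP : Continuous fun x => ∑ j, pd j (fun x : E3 => exp (1 / 4 * b ^ 2 * TT x)) x ^ 2 :=
    continuous_finsetSum _ fun j _ => (pd_cont (hG 1) j).pow 2
  have i1 : IntegrableOn (fun x : E3 => lam * (exp (1 / 4 * b ^ 2 * TT x) ^ 2 * ‖Ψ x‖ ^ 2)) ball3 := integrableOn_ball (by fun_prop)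
  have i2 : IntegrableOn (fun x : E3 => (∑ j, pd j (fun x : E3 => exp (1 / 4 * b ^ 2 * TT x)) x ^ 2) * ‖Ψ x‖ ^ 2) ball3 := integrableOn_ball (cP.mul cN)
  have i3 : IntegrableOn (fun x : E3 => b ^ 4 * (sin (Phi (fun y => a * TT y + (-1)) x) ^ 2 * (exp (1 / 4 * b ^ 2 * TT x) ^ 2 * ‖Ψ x‖ ^ 2))) ball3 := integrableOn_ball (by fun_prop)
  have i4 : IntegrableOn (fun x : E3 => exp (1 / 4 * b ^ 2 * TT x) ^ 2 * ‖Ψ x‖ ^ 2) ball3 := integrableOn_ball (by fun_prop)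
  have i5 : IntegrableOn (fun x : E3 => 16 * exp (8 * M) * ‖Ψ x‖ ^ 2) ball3 := integrableOn_ball (by fun_prop)
  have i6 : IntegrableOn (fun x : E3 => b ^ 4 / 16 * (exp (1 / 4 * b ^ 2 * TT x) ^ 2 * ‖Ψ x‖ ^ 2)) ball3 := i4.const_mul _
  have i12 : IntegrableOn (fun x : E3 => lam * (exp (1 / 4 * b ^ 2 * TT x) ^ 2 * ‖Ψ x‖ ^ 2) + (∑ j, pd j (fun x : E3 => exp (1 / 4 * b ^ 2 * TT x)) x ^ 2) * ‖Ψ x‖ ^ 2) ball3 := i1.add i2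
  have i126 : IntegrableOn (fun x : E3 => (lam * (exp (1 / 4 * b ^ 2 * TT x) ^ 2 * ‖Ψ x‖ ^ 2) + (∑ j, pd j (fun x : E3 => exp (1 / 4 * b ^ 2 * TT x)) x ^ 2) * ‖Ψ x‖ ^ 2)
    + b ^ 4 / 16 * (exp (1 / 4 * b ^ 2 * TT x) ^ 2 * ‖Ψ x‖ ^ 2)) ball3 := i12.add i6
  have key : ∫ x in ball3, b ^ 4 / 16 * (exp (1 / 4 * b ^ 2 * TT x) ^ 2 * ‖Ψ x‖ ^ 2 - 16 * exp (8 * M) * ‖Ψ x‖ ^ 2) ≤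
      ∫ x in ball3, (b ^ 4 * (sin (Phi (fun y => a * TT y + (-1)) x) ^ 2 * (exp (1 / 4 * b ^ 2 * TT x) ^ 2 * ‖Ψ x‖ ^ 2))
        - ((lam * (exp (1 / 4 * b ^ 2 * TT x) ^ 2 * ‖Ψ x‖ ^ 2) + (∑ j, pd j (fun x : E3 => exp (1 / 4 * b ^ 2 * TT x)) x ^ 2) * ‖Ψ x‖ ^ 2)
          + b ^ 4 / 16 * (exp (1 / 4 * b ^ 2 * TT x) ^ 2 * ‖Ψ x‖ ^ 2))) := by
    refine setIntegral_mono_on ((i4.sub i5).const_mul _) (i3.sub ((i1.add i2).add i6)) measurableSet_ball3 fun x hx => ?_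
    have hgD : (1 - sin (Phi (fun y => a * TT y + (-1)) x) ^ 2) * exp (1 / 4 * b ^ 2 * TT x) ^ 2 ≤ exp (8 * M) := by
      rcases lt_or_ge (a * TT x + (-1)) 1 with h | h
      · have h1 : exp (1 / 4 * b ^ 2 * TT x) ^ 2 ≤ exp (8 * M) := by
          rw [← exp_nat_mul]
          apply exp_le_exp.2
          rw [ha, div_mul_eq_mul_div] at h
          have h3 : b ^ 2 * TT x / (8 * M) < 2 := by linarith
          rw [div_lt_iff₀ (by positivity)] at h3
          push_cast; linarith
        have h2 := sq_nonneg (sin (Phi (fun y => a * TT y + (-1)) x))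
        nlinarith [sq_nonneg (exp (1 / 4 * b ^ 2 * TT x))]
      · have : sin (Phi (fun y => a * TT y + (-1)) x) = 1 := by
          simp [Phi, smoothTransition.one_of_one_le h]
        rw [this]; norm_num; positivity
    have hN := sq_nonneg ‖Ψ x‖
    have hp := mul_le_mul_of_nonneg_right (hpd x hx) hN
    have hg := sq_nonneg (exp (1 / 4 * b ^ 2 * TT x))
    generalize exp (1 / 4 * b ^ 2 * TT x) ^ 2 = g at *
    generalize (∑ j, pd j (fun x : E3 => exp (1 / 4 * b ^ 2 * TT x)) x ^ 2) = P at *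
    generalize ‖Ψ x‖ ^ 2 = n at *
    generalize sin (Phi (fun y => a * TT y + (-1)) x) ^ 2 = s at *
    generalize exp (8 * M) = D at *
    have hl : lam ≤ (3 / 4 + 1 / 16) * b ^ 4 := by
      have h1 : ω * b ^ 3 ≤ b / 16 * b ^ 3 := mul_le_mul_of_nonneg_right (by linarith) (by positivity)
      have h2 : Theta0 * b ^ 4 ≤ 3 / 4 * b ^ 4 := mul_le_mul_of_nonneg_right hΘ (by positivity)
      linarith
    have h1 := mul_le_mul_of_nonneg_right hl hg
    have h2 := mul_le_mul_of_nonneg_left hgD (by positivity : 0 ≤ b ^ 4)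
    have h3 : b ^ 4 / 16 * (g - 16 * D) ≤ b ^ 4 * (s * g) - lam * g - b ^ 4 / 16 * g - b ^ 4 / 16 * g := by linarith
    have h4 := mul_le_mul_of_nonneg_right h3 hN
    linarith
  rw [integral_const_mul, integral_sub i4 i5, integral_sub i3 i126, integral_add i12 i6, integral_add i1 i2, integral_const_mul] at key
  have : 0 < b ^ 4 / 16 := by positivity
  by_contra hcon
  push Not at hcon
  have := mul_pos this (sub_pos.2 hcon)
  have e6 : ∫ x in ball3, b ^ 4 / 16 * (exp (1 / 4 * b ^ 2 * TT x) ^ 2 * ‖Ψ x‖ ^ 2) = b ^ 4 / 16 * ∫ x in ball3, exp (1 / 4 * b ^ 2 * TT x) ^ 2 * ‖Ψ x‖ ^ 2 := integral_const_mul _ _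
  rw [e6] at key
  linarith

lemma exp_small (ε N : ℝ) (hε : 0 < ε) : ∃ B₀, ∀ B, B₀ ≤ B → 1 ≤ B → B * exp (-(B ^ ε / 8)) ≤ B ^ (-N) := by
  have h := (tendsto_rpow_mul_exp_neg_mul_atTop_nhds_zero ((N + 1) / ε) (1 / 8) (by norm_num)).comp (tendsto_rpow_atTop hε)
  have h1 := h.eventually (gt_mem_nhds (zero_lt_one' ℝ))
  obtain ⟨B₀, hB⟩ := eventually_atTop.1 h1
  refine ⟨B₀, fun B h2 h3 => ?_⟩
  have h4 := hB B h2
  have hp : 0 < B := by linarith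
  simp only [Function.comp] at h4
  rw [← rpow_mul hp.le, mul_div_cancel₀ _ hε.ne', rpow_add hp, rpow_one] at h4
  have e : -(1 / 8) * B ^ ε = -(B ^ ε / 8) := by ring
  rw [e] at h4
  rw [rpow_neg hp.le, le_inv_comm₀ (by positivity) (by positivity)]
  rw [le_inv_comm₀ (by positivity) (by positivity), ← one_div, le_div_iff₀ (by positivity)]
  linarith

lemma four_cosh (y : ℝ) : exp (2 * |y|) ≤ 4 * cosh y ^ 2 := by
  rw [← cosh_abs]
  have h : exp (|y|) ≤ 2 * cosh (|y|) := by
    rw [cosh_eq]; have := exp_pos (-|y|); linarith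
  have h2 := pow_le_pow_left₀ (exp_pos _).le h 2
  rw [← exp_nat_mul] at h2
  push_cast at h2
  linarith

lemma bad_pt {ε B b : ℝ} (hε : 0 < ε) (hε' : ε < 1/12) (hB : 1 ≤ B) (hb : 0 < b) (hbB : b = B ^ ((1:ℝ)/4))
    {x : E3} (hx : x ∈ ball3) (hbad : ¬ (distBd x ≤ B ^ (-(1:ℝ)/2 + ε) ∧ distEq x ≤ B ^ (-(1:ℝ)/4 + ε))) :
    exp (B ^ ε / 8) ≤ exp (1 / 4 * b ^ 2 * TT x) ^ 2 + 4 * cosh (b * x 2) ^ 2 := by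
  have hp : 0 < B := by linarith
  have hb2 : b ^ 2 = B ^ ((1:ℝ)/2) := by
    rw [hbB, ← rpow_natCast, ← rpow_mul hp.le]; norm_num
  have e1 : b ^ 2 * B ^ (-(1:ℝ)/2 + ε) = B ^ ε := by
    rw [hb2, ← rpow_add hp]; congr 1; ring
  have e2 : b * B ^ (-(1:ℝ)/4 + ε) = B ^ ε := by
    rw [hbB, ← rpow_add hp]; congr 1; ring
  have hS : B ^ ε ≤ b ^ 2 := by
    rw [hb2]; exact rpow_le_rpow_of_exponent_le hB (by linarith)
  have hd2 : B ^ (-(1:ℝ)/4 + ε) ≤ 1 := rpow_le_one_of_one_le_of_nonpos hB (by linarith)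
  have hd20 : 0 < B ^ (-(1:ℝ)/4 + ε) := by positivity
  have hS0 : 0 < B ^ ε := by positivity
  rw [mem_ball3] at hx
  have hn := norm_nonneg x
  have hb20 : 0 < b ^ 2 := by positivity
  have A : B ^ ε / 4 ≤ b ^ 2 * TT x → exp (B ^ ε / 8) ≤ exp (1 / 4 * b ^ 2 * TT x) ^ 2 + 4 * cosh (b * x 2) ^ 2 := by
    intro h
    have : exp (B ^ ε / 8) ≤ exp (1 / 4 * b ^ 2 * TT x) ^ 2 := by
      rw [← exp_nat_mul]; apply exp_le_exp.2; push_cast; linarith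
    have := sq_nonneg (cosh (b * x 2))
    linarith
  rcases lt_or_ge ‖x‖ (1 / 2) with h | h
  · apply A
    have : (3:ℝ) / 8 ≤ TT x := by rw [TT_eq]; nlinarith
    have := mul_le_mul_of_nonneg_left this hb20.le
    linarith
  rw [not_and_or, not_le, not_le] at hbad
  rcases hbad with h1 | h1
  · apply A
    have : B ^ (-(1:ℝ)/2 + ε) / 2 ≤ TT x := by
      rw [TT_eq]; unfold distBd at h1; nlinarith
    have := mul_le_mul_of_nonneg_left this hb20.le
    linarith
  · unfold distEq at h1
    have hpi := pi_gt_three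
    have hpi4 := pi_le_four
    rw [lt_arcsin_iff_sin_lt' ⟨by linarith, by linarith⟩, lt_div_iff₀ (by linarith)] at h1
    have h2 := mul_le_sin hd20.le (by linarith)
    have h3 : B ^ (-(1:ℝ)/4 + ε) / 2 ≤ 2 / π * B ^ (-(1:ℝ)/4 + ε) := by
      have : (1:ℝ) / 2 ≤ 2 / π := by rw [div_le_div_iff₀ (by norm_num) (by linarith)]; linarith
      have := mul_le_mul_of_nonneg_right this hd20.le
      linarith
    have h4 : B ^ (-(1:ℝ)/4 + ε) / 4 ≤ |x 2| := by nlinarith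
    have h5 := mul_le_mul_of_nonneg_left h4 hb.le
    have h6 := four_cosh (b * x 2)
    have h7 : exp (B ^ ε / 8) ≤ exp (2 * |b * x 2|) := by
      apply exp_le_exp.2
      rw [abs_mul, abs_of_pos hb]; linarith
    have := sq_nonneg (exp (1 / 4 * b ^ 2 * TT x))
    linarith

/-- Lemma 2.4: replacing an eigenfunction by its cut-off version changes
the magnetic energy only by `O(B^{-N})`. -/
theorem statement3 (ε ω C : ℝ) (hε : 0 < ε) (hε' : ε < 1/12) (hω : 0 < ω) (hC : 0 < C)
    (χ : ℝ → E3 → ℝ)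
    (hχ : ∀ B : ℝ, 0 < B →
      ContDiff ℝ (⊤ : ℕ∞) (χ B) ∧
      (∀ x ∈ ball3, χ B x ∈ Icc (0:ℝ) 1) ∧
      (∀ x ∈ ball3,
        (distBd x ≤ B ^ (-(1:ℝ)/2 + ε) ∧ distEq x ≤ B ^ (-(1:ℝ)/4 + ε)) → χ B x = 1) ∧
      (∀ x ∈ ball3,
        (2 * B ^ (-(1:ℝ)/2 + ε) ≤ distBd x ∨ 2 * B ^ (-(1:ℝ)/4 + ε) ≤ distEq x) →
          χ B x = 0) ∧
      (∀ x ∈ ball3, ‖fderiv ℝ (χ B) x‖ ≤ C * B ^ ((1:ℝ)/2 - ε))) :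
    ∀ N : ℝ, 0 < N → ∃ CN BN : ℝ, 0 < CN ∧ 0 < BN ∧
      ∀ B : ℝ, BN ≤ B → ∀ (lam : ℝ) (Ψ : E3 → ℂ),
        IsNeumannEigenfunction B lam Ψ →
        lam ≤ Theta0 * B + ω * B ^ ((2:ℝ)/3) →
        |(∫ x in ball3, magEnergyDensity B Ψ x) -
            ∫ x in ball3, magEnergyDensity B (fun y => (χ B y : ℂ) * Ψ y) x|
          ≤ CN * B ^ (-N) * ∫ x in ball3, ‖Ψ x‖ ^ 2 := by
  intro N hN
  obtain ⟨K1, b1, hK1, hb1, H1⟩ := tang_agmon ω hω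
  obtain ⟨K2, b2, hK2, hb2, H2⟩ := norm_agmon ω hω
  obtain ⟨B₀, hB₀⟩ := exp_small ε N hε
  refine ⟨(3 / 4 + ω + 3 * C ^ 2) * (K2 + 4 * K1), max B₀ (max (b1 ^ 4) (b2 ^ 4)), by positivity,
    lt_max_of_lt_right (lt_max_of_lt_left (by positivity)), ?_⟩
  intro B hBN lam Ψ hΨ hlam
  have hB0 : B₀ ≤ B := le_trans (le_max_left _ _) hBN
  have hB1 : b1 ^ 4 ≤ B := le_trans ((le_max_left _ _).trans (le_max_right _ _)) hBN
  have hB2 : b2 ^ 4 ≤ B := le_trans ((le_max_right _ _).trans (le_max_right _ _)) hBN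
  have hB : 1 ≤ B := le_trans (one_le_pow₀ (by linarith)) hB1
  have hp : 0 < B := by linarith
  obtain ⟨hs, h01, hone, -, hgr⟩ := hχ B hp
  obtain ⟨b, hb⟩ : ∃ b : ℝ, b = B ^ ((1:ℝ)/4) := ⟨_, rfl⟩
  have hbp : 0 < b := by rw [hb]; positivity
  have hb4 : b ^ 4 = B := by rw [hb, ← rpow_natCast, ← rpow_mul hp.le]; norm_num
  have hb3 : B ^ ((2:ℝ)/3) ≤ b ^ 3 := by
    rw [hb, ← rpow_natCast, ← rpow_mul hp.le]
    exact rpow_le_rpow_of_exponent_le hB (by norm_num)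
  have hl1 : b1 ≤ b := le_of_pow_le_pow_left₀ (n := 4) (by norm_num) hbp.le (by rw [hb4]; exact hB1)
  have hl2 : b2 ≤ b := le_of_pow_le_pow_left₀ (n := 4) (by norm_num) hbp.le (by rw [hb4]; exact hB2)
  have hlam' : lam ≤ Theta0 * b ^ 4 + ω * b ^ 3 := by
    rw [hb4]; exact hlam.trans (by gcongr)
  have T1 := H1 b hl1 lam Ψ (by rw [hb4]; exact hΨ) hlam'
  have T2 := H2 b hl2 lam Ψ (by rw [hb4]; exact hΨ) hlam'
  clear H1 H2
  have hΨ1 : ContDiff ℝ 1 Ψ := hΨ.1.of_le (by norm_num)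
  have hs1 : ContDiff ℝ 1 (χ B) := hs.of_le (by exact_mod_cast le_top)
  have cN := nsq_cont hΨ1
  have cχ : Continuous (χ B) := hs1.continuous
  have cP : Continuous fun x => ∑ j, pd j (χ B) x ^ 2 :=
    continuous_finsetSum _ fun j _ => (pd_cont hs1 j).pow 2
  have cT : Continuous TT := (contDiff_TT (n := 1)).continuous
  have cz : Continuous fun x : E3 => x 2 := continuous_coord 2
  have I0 := hΨ.2.1
  -- energy identities
  have A1 := agmon_id hΨ (G := fun _ => (1:ℝ)) contDiff_const
  have hpd1 : ∀ j x, pd j (fun _ : E3 => (1:ℝ)) x = 0 := by intro j x; simp [pd]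
  simp only [hpd1] at A1
  simp at A1
  have A2 := agmon_id hΨ hs1
  have hlam0 : 0 ≤ lam := by
    have h : 0 ≤ ∫ x in ball3, magEnergyDensity B Ψ x :=
      integral_nonneg fun x => by unfold magEnergyDensity; positivity
    rw [A1] at h
    exact nonneg_of_mul_nonneg_left h I0
  have hlamB : lam ≤ (3 / 4 + ω) * B := by
    have h1 : Theta0 * B ≤ 3 / 4 * B := mul_le_mul_of_nonneg_right Theta0_le hp.le
    have h2 : B ^ ((2:ℝ)/3) ≤ B := by
      conv_rhs => rw [← rpow_one B]
      exact rpow_le_rpow_of_exponent_le hB (by norm_num)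
    have h3 := mul_le_mul_of_nonneg_left h2 hω.le
    linarith
  have i1 : IntegrableOn (fun x : E3 => lam * ‖Ψ x‖ ^ 2) ball3 := integrableOn_ball (by fun_prop)
  have i2 : IntegrableOn (fun x : E3 => lam * (χ B x ^ 2 * ‖Ψ x‖ ^ 2)) ball3 := integrableOn_ball (by fun_prop)
  have i3 : IntegrableOn (fun x : E3 => (∑ j, pd j (χ B) x ^ 2) * ‖Ψ x‖ ^ 2) ball3 := integrableOn_ball (cP.mul cN)
  have i23 : IntegrableOn (fun x : E3 => lam * (χ B x ^ 2 * ‖Ψ x‖ ^ 2) + (∑ j, pd j (χ B) x ^ 2) * ‖Ψ x‖ ^ 2) ball3 := i2.add i3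
  have D : (∫ x in ball3, magEnergyDensity B Ψ x) - ∫ x in ball3, magEnergyDensity B (fun y => (χ B y : ℂ) * Ψ y) x
      = ∫ x in ball3, (lam * ‖Ψ x‖ ^ 2 - (lam * (χ B x ^ 2 * ‖Ψ x‖ ^ 2) + (∑ j, pd j (χ B) x ^ 2) * ‖Ψ x‖ ^ 2)) := by
    rw [A1, A2, integral_sub i1 i23, integral_add i2 i3, integral_const_mul, integral_const_mul]
  rw [D]
  have i4 : IntegrableOn (fun x : E3 => exp (1 / 4 * b ^ 2 * TT x) ^ 2 * ‖Ψ x‖ ^ 2) ball3 := integrableOn_ball (by fun_prop)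
  have cc : Continuous fun x : E3 => cosh (b * x 2) := continuous_cosh.comp (by fun_prop)
  have i5 : IntegrableOn (fun x : E3 => 4 * (cosh (b * x 2) ^ 2 * ‖Ψ x‖ ^ 2)) ball3 := integrableOn_ball (by fun_prop)
  have i45 : IntegrableOn (fun x : E3 => exp (1 / 4 * b ^ 2 * TT x) ^ 2 * ‖Ψ x‖ ^ 2 + 4 * (cosh (b * x 2) ^ 2 * ‖Ψ x‖ ^ 2)) ball3 := i4.add i5
  have key : ∫ x in ball3, |lam * ‖Ψ x‖ ^ 2 - (lam * (χ B x ^ 2 * ‖Ψ x‖ ^ 2) + (∑ j, pd j (χ B) x ^ 2) * ‖Ψ x‖ ^ 2)| ≤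
      ∫ x in ball3, (3 / 4 + ω + 3 * C ^ 2) * (B * exp (-(B ^ ε / 8))) *
        (exp (1 / 4 * b ^ 2 * TT x) ^ 2 * ‖Ψ x‖ ^ 2 + 4 * (cosh (b * x 2) ^ 2 * ‖Ψ x‖ ^ 2)) := by
    refine setIntegral_mono_on (i1.sub i23).abs (i45.const_mul _) measurableSet_ball3 fun x hx => ?_
    by_cases hg : distBd x ≤ B ^ (-(1:ℝ)/2 + ε) ∧ distEq x ≤ B ^ (-(1:ℝ)/4 + ε)
    · have h1 := hone x hx hg
      have hmax : IsLocalMax (χ B) x := by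
        filter_upwards [(Metric.isOpen_ball : IsOpen (Metric.ball (0:E3) 1)).mem_nhds hx] with y hy
        rw [h1]; exact (h01 y hy).2
      have hf := hmax.fderiv_eq_zero
      have hz : ∀ j, pd j (χ B) x = 0 := by intro j; simp [pd, hf]
      simp only [h1, hz]
      simp
      positivity
    · have hbd := bad_pt hε hε' hB hbp hb hx hg
      have hpb : ∀ j, pd j (χ B) x ^ 2 ≤ C ^ 2 * B := by
        intro j
        have h1 : |pd j (χ B) x| ≤ C * B ^ ((1:ℝ)/2) := by
          have := (fderiv ℝ (χ B) x).le_opNorm (ee j)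
          have he : ‖ee j‖ = 1 := by simp [ee]
          rw [he, mul_one] at this
          refine le_trans this ((hgr x hx).trans ?_)
          exact mul_le_mul_of_nonneg_left (rpow_le_rpow_of_exponent_le hB (by linarith)) hC.le
        have h2 := pow_le_pow_left₀ (abs_nonneg _) h1 2
        rw [sq_abs, mul_pow, ← rpow_natCast (B ^ ((1:ℝ)/2)), ← rpow_mul hp.le] at h2
        norm_num at h2
        exact h2
      have hP : ∑ j, pd j (χ B) x ^ 2 ≤ 3 * C ^ 2 * B := by
        rw [Fin.sum_univ_three]; linarith [hpb 0, hpb 1, hpb 2]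
      have hP0 : 0 ≤ ∑ j, pd j (χ B) x ^ 2 := by positivity
      obtain ⟨c0, c1⟩ := h01 x hx
      have hc2 : χ B x ^ 2 ≤ 1 := pow_le_one₀ c0 c1
      have hc20 : 0 ≤ χ B x ^ 2 := sq_nonneg _
      have hn : 0 ≤ ‖Ψ x‖ ^ 2 := sq_nonneg _
      have e : lam * ‖Ψ x‖ ^ 2 - (lam * (χ B x ^ 2 * ‖Ψ x‖ ^ 2) + (∑ j, pd j (χ B) x ^ 2) * ‖Ψ x‖ ^ 2)
        = (lam * (1 - χ B x ^ 2) - ∑ j, pd j (χ B) x ^ 2) * ‖Ψ x‖ ^ 2 := by ring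
      rw [e, abs_mul, abs_of_nonneg hn]
      have hE : 1 ≤ exp (-(B ^ ε / 8)) * (exp (1 / 4 * b ^ 2 * TT x) ^ 2 + 4 * cosh (b * x 2) ^ 2) := by
        have := mul_le_mul_of_nonneg_left hbd (exp_pos (-(B ^ ε / 8))).le
        rw [← exp_add] at this
        simpa using this
      have hM : |lam * (1 - χ B x ^ 2) - ∑ j, pd j (χ B) x ^ 2| ≤ (3 / 4 + ω + 3 * C ^ 2) * B := by
        have h1 : lam * (1 - χ B x ^ 2) ≤ lam := by nlinarith
        have h2 : 0 ≤ lam * (1 - χ B x ^ 2) := mul_nonneg hlam0 (by linarith)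
        have h3 : 0 ≤ C ^ 2 * B := by positivity
        have h4 : 0 ≤ (3 / 4 + ω) * B := by positivity
        rw [abs_le]; constructor <;> linarith
      have hMB : 0 ≤ (3 / 4 + ω + 3 * C ^ 2) * B := by positivity
      calc _ ≤ (3 / 4 + ω + 3 * C ^ 2) * B * ‖Ψ x‖ ^ 2 := mul_le_mul_of_nonneg_right hM hn
        _ ≤ (3 / 4 + ω + 3 * C ^ 2) * B * ‖Ψ x‖ ^ 2 * (exp (-(B ^ ε / 8)) * (exp (1 / 4 * b ^ 2 * TT x) ^ 2 + 4 * cosh (b * x 2) ^ 2)) :=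
            le_mul_of_one_le_right (mul_nonneg hMB hn) hE
        _ = _ := by ring
  rw [integral_const_mul, integral_add i4 i5, integral_const_mul] at key
  refine (abs_integral_le_integral_abs.trans key).trans ?_
  have hsm := hB₀ B hB0 hB
  calc _ ≤ (3 / 4 + ω + 3 * C ^ 2) * (B ^ (-N)) * (K2 * (∫ x in ball3, ‖Ψ x‖ ^ 2) + 4 * (K1 * ∫ x in ball3, ‖Ψ x‖ ^ 2)) := by
        have hi : 0 ≤ (∫ x in ball3, exp (1 / 4 * b ^ 2 * TT x) ^ 2 * ‖Ψ x‖ ^ 2) + 4 * ∫ x in ball3, cosh (b * x 2) ^ 2 * ‖Ψ x‖ ^ 2 := by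
          have h1 : 0 ≤ ∫ x in ball3, exp (1 / 4 * b ^ 2 * TT x) ^ 2 * ‖Ψ x‖ ^ 2 := integral_nonneg fun x => by positivity
          have h2 : 0 ≤ ∫ x in ball3, cosh (b * x 2) ^ 2 * ‖Ψ x‖ ^ 2 := integral_nonneg fun x => by positivity
          linarith
        have hc : (0:ℝ) ≤ 3 / 4 + ω + 3 * C ^ 2 := by positivity
        have hq : (0:ℝ) ≤ B ^ (-N) := by positivity
        refine mul_le_mul (mul_le_mul_of_nonneg_left hsm hc) (by linarith) hi (mul_nonneg hc hq)
    _ = _ := by ring
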